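/- arXiv:hep-th/0304246 — 2 statements merged into one kernel-verified Lean document; each statement's English description precedes it below -/
import Mathlib

section
/- Multigraded Witt formula for free Lie algebras: let L be the free Lie algebra over ℚ on generators β_1,…,β_m. There exist unique derivations D_1,…,D_m of L with D_j(β_k) = δ_{jk} β_k. For every nonzero tuple (n_1,…,n_m) of natural numbers, with N = n_1 + … + n_m and g = gcd(n_1,…,n_m), the simultaneous eigenspace ⋂_{j=1}^m {x ∈ L : D_j(x) = n_j · x} is finite dimensional and its dimension mult(n_1,…,n_m) satisfies N · mult(n_1,…,n_m) = ∑_{d ∣ g} μ(d) · (N/d)! / ((n_1/d)! ⋯ (n_m/d)!), where μ is the Möbius function. -/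
noncomputable section

set_option linter.unusedSectionVars false

namespace FLWitt

section Combinatorics

variable {α : Type*} [LinearOrder α]

/-- `Sh u v w`: the word `w` is a shuffle of `u` and `v`. -/
inductive Sh {α : Type*} : List α → List α → List α → Prop
  | nil : Sh [] [] []
  | left (a : α) {u v w : List α} : Sh u v w → Sh (a :: u) v (a :: w)
  | right (a : α) {u v w : List α} : Sh u v w → Sh u (a :: v) (a :: w)

theorem Sh.of_right {β : Type*} (v : List β) : Sh [] v v := by
  induction v with
  | nil => exact .nil
  | cons a v ih => exact .right a ih

theorem Sh.append {β : Type*} (u v : List β) : Sh u v (u ++ v) := by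
  induction u with
  | nil => exact Sh.of_right v
  | cons a v ih => exact .left a ih

theorem Sh.append' {β : Type*} (u v : List β) : Sh u v (v ++ u) := by
  induction v with
  | nil => simpa using Sh.append u []
  | cons a v ih => exact .right a ih

theorem Sh.nil_left {β : Type*} {v w : List β} (h : Sh [] v w) : w = v := by
  generalize hu : ([] : List β) = u at h
  induction h with
  | nil => rfl
  | left => simp at hu
  | right a h ih => rw [ih hu]

theorem Sh.nil_right {β : Type*} {v w : List β} (h : Sh v [] w) : w = v := by
  generalize hu : ([] : List β) = u at h
  induction h with
  | nil => rfl
  | right => simp at hu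
  | left a h ih => rw [ih hu]

theorem cons_lt_of_lt {a b : α} (h : a < b) (l l' : List α) : a :: l < b :: l' :=
  List.Lex.rel h

theorem cons_lt_cons_iff' {a : α} {l l' : List α} : a :: l < a :: l' ↔ l < l' :=
  List.lex_cons_iff

theorem cons_le_cons_iff' {a : α} {l l' : List α} : a :: l ≤ a :: l' ↔ l ≤ l' := by
  rw [← not_lt, ← not_lt, cons_lt_cons_iff']

theorem nil_le' (l : List α) : [] ≤ l := by
  cases l with
  | nil => exact le_rfl
  | cons a l => exact le_of_lt List.Lex.nil

theorem nil_lt_cons' (a : α) (l : List α) : [] < a :: l := List.Lex.nil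

theorem head_le_of_le {a b : α} {l l' : List α} (h : a :: l ≤ b :: l') : a ≤ b := by
  by_contra! hc
  exact absurd h (not_le.2 (cons_lt_of_lt hc _ _))

theorem append_lt_append_iff (u : List α) {l l' : List α} : u ++ l < u ++ l' ↔ l < l' := by
  induction u with
  | nil => simp
  | cons a u ih => rw [List.cons_append, List.cons_append, cons_lt_cons_iff', ih]

theorem append_le_append_iff (u : List α) {l l' : List α} : u ++ l ≤ u ++ l' ↔ l ≤ l' := by
  rw [← not_lt, ← not_lt, append_lt_append_iff]

theorem le_append (u v : List α) : u ≤ u ++ v := by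
  have := (append_le_append_iff u (l := []) (l' := v)).2 (nil_le' v)
  simpa using this

/-- either `u` is a prefix of `v`, or the strict inequality is stable under extension. -/
theorem lt_cases {u v : List α} (h : u < v) :
    (∃ z, z ≠ [] ∧ v = u ++ z) ∨ ∀ s t, u ++ s < v ++ t := by
  induction u generalizing v with
  | nil => left; exact ⟨v, by rintro rfl; exact lt_irrefl _ h, rfl⟩
  | cons a u ih =>
    cases v with
    | nil => exact absurd (nil_le' (a :: u)) (not_le.2 h)
    | cons b v =>
      rcases (head_le_of_le h.le).lt_or_eq with hab | rfl
      · right; intro s t; exact cons_lt_of_lt hab _ _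
      · rcases ih (cons_lt_cons_iff'.1 h) with ⟨z, hz, rfl⟩ | h'
        · left; exact ⟨z, hz, rfl⟩
        · right; intro s t; exact cons_lt_cons_iff'.2 (h' s t)

theorem append_lt_of_length {u v : List α} (h : u < v) (hl : u.length = v.length) (s t : List α) :
    u ++ s < v ++ t := by
  rcases lt_cases h with ⟨z, hz, rfl⟩ | h'
  · simp at hl; exact absurd hl hz
  · exact h' s t

/-- Exchange lemma for shuffles. -/
theorem Sh.exchange (y : List α) : ∀ (p x s : List α), y ≤ x → Sh (p ++ x) y s →
    ∃ t, Sh x (p ++ y) t ∧ s ≤ t := by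
  induction y with
  | nil =>
    intro p x s _ h
    rw [h.nil_right]
    exact ⟨p ++ x, by simpa using Sh.append' x p, le_rfl⟩
  | cons d y ihy =>
    intro p
    induction p with
    | nil => intro x s _ h; exact ⟨s, h, le_rfl⟩
    | cons a p ihp =>
      intro x s hx h
      cases h with
      | left _ h =>
        obtain ⟨t, ht, hst⟩ := ihp x _ hx h
        exact ⟨a :: t, .right a ht, cons_le_cons_iff'.2 hst⟩
      | right _ h =>
        cases x with
        | nil => exact absurd hx (not_le.2 (nil_lt_cons' _ _))
        | cons c x =>
          rcases (head_le_of_le hx).lt_or_eq with hdc | rfl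
          · exact ⟨c :: (x ++ ((a :: p) ++ d :: y)), .left c (Sh.append _ _),
              (cons_lt_of_lt hdc _ _).le⟩
          · obtain ⟨t, ht, hst⟩ := ihy ((a :: p) ++ [d]) x _ (cons_le_cons_iff'.1 hx)
              (by simpa using h)
            exact ⟨d :: t, .left d (by simpa using ht), cons_le_cons_iff'.2 hst⟩

theorem Sh.le_append {u v : List α} (hu : ∀ x y, u = x ++ y → y ≠ [] → v ≤ y) :
    ∀ s, Sh u v s → s ≤ u ++ v := by
  induction u with
  | nil => intro s h; rw [h.nil_left]; exact le_rfl
  | cons a u ih =>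
    have ih' := ih (fun x y h hy => hu (a :: x) y (by rw [h]; rfl) hy)
    intro s h
    have h0 := hu [] (a :: u) rfl (by simp)
    cases h with
    | left _ h => exact cons_le_cons_iff'.2 (ih' _ h)
    | right b h =>
      rename_i v w
      rcases (head_le_of_le h0).lt_or_eq with hba | rfl
      · exact (cons_lt_of_lt hba _ _).le
      · obtain ⟨t, ht, hst⟩ := Sh.exchange v [b] u _ (cons_le_cons_iff'.1 h0) h
        exact cons_le_cons_iff'.2 (hst.trans (ih' _ ht))

/-- Lyndon words (suffix definition). -/
def Lyn (w : List α) : Prop := w ≠ [] ∧ ∀ u v, w = u ++ v → u ≠ [] → v ≠ [] → w < v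

/-- minimal nonempty proper suffix -/
theorem exists_min_suffix (w : List α) (hw : 2 ≤ w.length) :
    ∃ u v, w = u ++ v ∧ u ≠ [] ∧ v ≠ [] ∧
      ∀ x y, w = x ++ y → x ≠ [] → y ≠ [] → v ≤ y := by
  have hne : (Finset.Ico 1 w.length).Nonempty := ⟨1, by simp; omega⟩
  obtain ⟨i, hi, hmin⟩ := Finset.exists_min_image (Finset.Ico 1 w.length) (fun i => w.drop i) hne
  rw [Finset.mem_Ico] at hi
  refine ⟨w.take i, w.drop i, (List.take_append_drop i w).symm, ?_, ?_, ?_⟩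
  · intro h; have := congrArg List.length h; rw [List.length_take, List.length_nil] at this; omega
  · intro h; have := congrArg List.length h; rw [List.length_drop, List.length_nil] at this; omega
  · intro x y hxy hx hy
    have hx' := List.length_pos_of_ne_nil hx
    have hy' := List.length_pos_of_ne_nil hy
    have := hmin x.length (by rw [hxy]; simp; omega)
    simpa [hxy] using this

theorem exists_split_of_not_lyn {w : List α} (hw : w ≠ []) (h : ¬ Lyn w) :
    ∃ u v, w = u ++ v ∧ u ≠ [] ∧ v ≠ [] ∧ ∀ s, Sh u v s → s ≤ w := by
  simp only [Lyn, not_and, not_forall, not_lt] at h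
  obtain ⟨u0, v0, hw0, hu0, hv0, hle⟩ := h hw
  have hl : 2 ≤ w.length := by
    have hx' := List.length_pos_of_ne_nil hu0
    have hy' := List.length_pos_of_ne_nil hv0
    rw [hw0, List.length_append]; omega
  obtain ⟨u, v, huv, hu, hv, hmin⟩ := exists_min_suffix w hl
  have hvw : v ≤ w := (hmin _ _ hw0 hu0 hv0).trans hle
  refine ⟨u, v, huv, hu, hv, ?_⟩
  have hmin' : ∀ x y, w = x ++ y → y ≠ [] → v ≤ y := by
    intro x y hxy hy
    cases x with
    | nil => simp at hxy; rwa [← hxy]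
    | cons a x => exact hmin _ _ hxy (by simp) hy
  rw [huv]
  apply Sh.le_append
  intro x y hxy hy
  by_contra! hlt
  have h1 : v ≤ y ++ v := hmin' x (y ++ v) (by rw [huv, hxy, List.append_assoc]) (by simp [hy])
  rcases lt_cases hlt with ⟨z, hz, rfl⟩ | h'
  · have h2 : z ≤ y ++ z := (append_le_append_iff y).1 h1
    have h3 : y ++ z ≤ z := hmin' (u ++ y) z (by rw [huv, List.append_assoc]) hz
    have := congrArg List.length (le_antisymm h2 h3)
    simp at this
    exact hy this
  · have := h' v []
    rw [List.append_nil] at this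
    exact absurd h1 (not_le.2 this)

theorem Lyn.exists_split {w : List α} (h : Lyn w) (hw : 2 ≤ w.length) :
    ∃ u v, w = u ++ v ∧ Lyn u ∧ Lyn v ∧ u ++ v < v ++ u := by
  obtain ⟨u, v, huv, hu, hv, hmin⟩ := exists_min_suffix w hw
  refine ⟨u, v, huv, ⟨hu, ?_⟩, ⟨hv, ?_⟩, ?_⟩
  · intro x y hxy hx hy
    by_contra! hle
    have hne : y ≠ u := by
      rintro rfl
      have := congrArg List.length hxy
      simp at this
      exact hx this
    have hlt := lt_of_le_of_ne hle hne
    have h1 : w < y ++ v := h.2 x (y ++ v) (by rw [huv, hxy, List.append_assoc]) hx (by simp [hy])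
    rcases lt_cases hlt with ⟨z, hz, rfl⟩ | h'
    · rw [huv, List.append_assoc, append_lt_append_iff] at h1
      exact absurd (hmin y (z ++ v) (by rw [huv, List.append_assoc]) hy (by simp [hz]))
        (not_le.2 h1)
    · have := h' v v
      rw [← huv] at this
      exact lt_asymm this h1
  · intro x y hxy hx hy
    refine lt_of_le_of_ne (hmin (u ++ x) y (by rw [huv, hxy, List.append_assoc]) (by simp [hu]) hy) ?_
    rintro rfl
    have := congrArg List.length hxy
    simp at this
    exact hx this
  · rw [← huv]
    exact (h.2 u v huv hu hv).trans_le (FLWitt.le_append v u)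

/-- Lyndon words via rotations. -/
theorem lyn_iff {w : List α} : Lyn w ↔ w ≠ [] ∧ ∀ u v, w = u ++ v → u ≠ [] → v ≠ [] →
    u ++ v < v ++ u := by
  constructor
  · rintro ⟨h1, h2⟩
    refine ⟨h1, fun u v huv hu hv => ?_⟩
    rw [← huv]
    exact (h2 u v huv hu hv).trans_le (FLWitt.le_append v u)
  · rintro ⟨h1, h2⟩
    refine ⟨h1, fun u v huv hu hv => ?_⟩
    by_contra! hle
    have hne : v ≠ w := by
      rintro rfl
      have := congrArg List.length huv
      simp at this
      exact hu this
    have h3 := h2 u v huv hu hv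
    rcases lt_cases (lt_of_le_of_ne hle hne) with ⟨z, hz, hwz⟩ | h'
    · rw [← huv, hwz, append_lt_append_iff] at h3
      have h4 := h2 v z hwz hv hz
      have hl : z.length = u.length := by
        have := congrArg List.length hwz
        have := congrArg List.length huv
        simp at *; omega
      have := append_lt_of_length h3 hl v v
      rw [← huv, hwz] at this
      exact lt_asymm this h4
    · have := h' u []
      rw [List.append_nil, huv] at this
      exact lt_asymm this h3

end Combinatorics
end FLWitt

namespace FLWitt

section Counting

variable {α : Type*} [LinearOrder α] [Fintype α]

/-- words of content `n` -/
def Wd (n : α → ℕ) : Finset (List α) :=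
  ((Finset.univ : Finset (Fin (∑ i, n i) → α)).image List.ofFn).filter
    (fun l => ∀ j, l.count j = n j)

theorem length_eq_sum_count (l : List α) : l.length = ∑ j, l.count j := by
  induction l with
  | nil => simp
  | cons a l ih => simp [List.count_cons, Finset.sum_add_distrib, ih]

theorem mem_Wd {n : α → ℕ} {l : List α} : l ∈ Wd n ↔ ∀ j, l.count j = n j := by
  simp only [Wd, Finset.mem_filter, Finset.mem_image, Finset.mem_univ, true_and,
    and_iff_right_iff_imp]
  intro h
  have hl : l.length = ∑ i, n i := by
    rw [length_eq_sum_count]; exact Finset.sum_congr rfl fun j _ => h j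
  rw [← hl]
  exact ⟨l.get, List.ofFn_get l⟩

theorem length_of_mem_Wd {n : α → ℕ} {l : List α} (h : l ∈ Wd n) : l.length = ∑ i, n i := by
  rw [length_eq_sum_count]; exact Finset.sum_congr rfl fun j _ => mem_Wd.1 h j

theorem card_W_cons (n : α → ℕ) (hn : n ≠ 0) :
    (Wd n).card = ∑ i, if n i = 0 then 0 else (Wd (fun j => n j - if j = i then 1 else 0)).card := by
  have : Wd n = Finset.univ.biUnion (fun i => if n i = 0 then ∅ else
      (Wd (fun j => n j - if j = i then 1 else 0)).image (fun l => i :: l)) := by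
    ext l
    simp only [Finset.mem_biUnion, Finset.mem_univ, true_and]
    constructor
    · intro h
      cases l with
      | nil =>
        exact absurd (funext fun j => (by simpa using (mem_Wd.1 h j).symm)) hn
      | cons a l =>
        have h' := mem_Wd.1 h
        refine ⟨a, ?_⟩
        have ha := h' a
        rw [List.count_cons_self] at ha
        rw [if_neg (by omega)]
        refine Finset.mem_image.2 ⟨l, mem_Wd.2 fun j => ?_, rfl⟩
        have := h' j
        rw [List.count_cons] at this
        by_cases hj : j = a
        · subst hj; simp at this ⊢; omega
        · have hj' : ¬ a = j := fun h => hj h.symm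
          simp [hj, hj'] at this ⊢; omega
    · rintro ⟨a, ha⟩
      split_ifs at ha with h0
      · simp at ha
      · obtain ⟨l', hl', rfl⟩ := Finset.mem_image.1 ha
        refine mem_Wd.2 fun j => ?_
        have := mem_Wd.1 hl' j
        rw [List.count_cons]
        by_cases hj : j = a
        · subst hj; simp at this ⊢; omega
        · have hj' : ¬ a = j := fun h => hj h.symm
          simp [hj, hj'] at this ⊢; omega
  rw [this, Finset.card_biUnion]
  · refine Finset.sum_congr rfl fun i _ => ?_
    split_ifs
    · simp
    · rw [Finset.card_image_of_injective _ (fun a b h => by simpa using h)]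
  · intro i _ j _ hij
    rw [Function.onFun, Finset.disjoint_left]
    intro l h1 h2
    split_ifs at h1 h2
    all_goals first
      | simp at h1; done
      | simp at h2; done
      | skip
    obtain ⟨l1, _, rfl⟩ := Finset.mem_image.1 h1
    obtain ⟨l2, _, h⟩ := Finset.mem_image.1 h2
    simp at h
    exact hij h.1.symm

theorem prod_mul_card_W (N : ℕ) : ∀ n : α → ℕ, ∑ i, n i = N →
    (∏ i, (n i).factorial) * (Wd n).card = N.factorial := by
  induction N with
  | zero =>
    intro n hn
    have h0 : n = 0 := by
      funext i
      exact (Finset.sum_eq_zero_iff.1 hn) i (Finset.mem_univ i)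
    subst h0
    have : Wd (0 : α → ℕ) = {[]} := by
      ext l
      rw [mem_Wd, Finset.mem_singleton]
      constructor
      · intro h
        have := length_eq_sum_count l
        simp [h] at this
        exact this
      · rintro rfl; simp
    simp [this]
  | succ N ih =>
    intro n hn
    have hn0 : n ≠ 0 := by rintro rfl; simp at hn
    rw [card_W_cons n hn0, Finset.mul_sum]
    have key : ∀ i, (∏ i, (n i).factorial) *
        (if n i = 0 then 0 else (Wd (fun j => n j - if j = i then 1 else 0)).card)
        = n i * N.factorial := by
      intro i
      split_ifs with h0
      · simp [h0]
      · rw [← ih (fun j => n j - if j = i then 1 else 0), ← mul_assoc]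
        · congr 1
          rw [← Finset.mul_prod_erase _ _ (Finset.mem_univ i),
            ← Finset.mul_prod_erase Finset.univ
              (fun j => (n j - if j = i then 1 else 0).factorial) (Finset.mem_univ i), ← mul_assoc]
          congr 1
          · simp [Nat.mul_factorial_pred h0]
          · refine Finset.prod_congr rfl fun j hj => ?_
            simp [Finset.ne_of_mem_erase hj]
        · rw [← Finset.add_sum_erase _ _ (Finset.mem_univ i)] at hn
          rw [← Finset.add_sum_erase _ _ (Finset.mem_univ i)]
          have : ∑ j ∈ Finset.univ.erase i, (n j - if j = i then 1 else 0)
              = ∑ j ∈ Finset.univ.erase i, n j := by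
            refine Finset.sum_congr rfl fun j hj => ?_
            simp [Finset.ne_of_mem_erase hj]
          rw [this]
          simp; omega
    rw [Finset.sum_congr rfl fun i _ => key i, ← Finset.sum_mul, hn, Nat.factorial_succ]

theorem card_W (n : α → ℕ) : (Wd n).card = Nat.multinomial Finset.univ n := by
  have h1 := prod_mul_card_W _ n rfl
  have h2 := Nat.multinomial_spec Finset.univ n
  have h3 : 0 < ∏ i, (n i).factorial := Finset.prod_pos fun i _ => Nat.factorial_pos _
  exact Nat.eq_of_mul_eq_mul_left h3 (h1.trans h2.symm)

theorem eq_flatten_replicate {β : Type*} (t : List β) (d : ℕ) :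
    ∀ r : List β, r.length = d * t.length → r ++ t = t ++ r → r = (List.replicate d t).flatten := by
  induction d with
  | zero => intro r hr _; simpa using hr
  | succ d ih =>
    intro r hr h
    have hp : t <+: r := List.prefix_of_prefix_length_le (l₃ := r ++ t) (h ▸ List.prefix_append t r)
      (List.prefix_append r t) (by rw [hr]; nlinarith)
    obtain ⟨r', rfl⟩ := hp
    rw [List.append_assoc, List.append_cancel_left_eq] at h
    rw [List.replicate_succ, List.flatten_cons, ← ih r' (by
      rw [List.length_append] at hr; nlinarith) h]

theorem count_flatten_replicate (t : List α) (d : ℕ) (j : α) :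
    (List.replicate d t).flatten.count j = d * t.count j := by
  induction d with
  | zero => simp
  | succ d ih => rw [List.replicate_succ, List.flatten_cons, List.count_append, ih]; ring

theorem flatten_replicate_comm (t : List α) (d : ℕ) :
    (List.replicate d t).flatten ++ t = t ++ (List.replicate d t).flatten := by
  induction d with
  | zero => simp
  | succ d ih => rw [List.replicate_succ, List.flatten_cons, List.append_assoc, ih]

theorem card_rot (n : α → ℕ) (d : ℕ) (hd : 0 < d) (hdN : d ∣ ∑ i, n i) (hN : 0 < ∑ i, n i) :
    ((Wd n).filter (fun w => w.rotate ((∑ i, n i) / d) = w)).card =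
      if ∀ i, d ∣ n i then (Wd (fun i => n i / d)).card else 0 := by
  obtain ⟨k, hk⟩ := hdN
  have hkd : (∑ i, n i) / d = k := by rw [hk]; exact Nat.mul_div_cancel_left k hd
  rw [hkd]
  have hk0 : 0 < k := Nat.pos_of_ne_zero (by rintro rfl; rw [Nat.mul_zero] at hk; omega)
  obtain ⟨e, rfl⟩ : ∃ e, d = e + 1 := ⟨d - 1, by omega⟩
  have key : ∀ w ∈ (Wd n).filter (fun w => w.rotate k = w),
      w = (List.replicate (e + 1) (w.take k)).flatten := by
    intro w hw
    rw [Finset.mem_filter] at hw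
    have hl := length_of_mem_Wd hw.1
    have hkl : k ≤ w.length := by rw [hl, hk]; nlinarith
    have h2 := hw.2
    rw [List.rotate_eq_drop_append_take hkl] at h2
    have h3 : w.drop k ++ w.take k = w.take k ++ w.drop k := by
      rw [h2, List.take_append_drop]
    have := eq_flatten_replicate (w.take k) e (w.drop k) (by
      rw [List.length_drop, List.length_take, min_eq_left hkl, hl, hk, Nat.add_mul]; omega) h3
    rw [List.replicate_succ, List.flatten_cons, ← this, List.take_append_drop]
  split_ifs with h
  · refine Finset.card_bij' (fun w _ => w.take k) (fun t _ => (List.replicate (e + 1) t).flatten)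
      ?_ ?_ ?_ ?_
    · intro w hw
      have h1 := key w hw
      rw [mem_Wd]
      intro j
      have h2 := mem_Wd.1 (Finset.mem_filter.1 hw).1 j
      rw [h1, count_flatten_replicate] at h2
      rw [← h2, Nat.mul_div_cancel_left _ hd]
    · intro t ht
      have htl := length_of_mem_Wd ht
      have htk : t.length = k := by
        rw [htl]
        apply Nat.eq_of_mul_eq_mul_left hd
        rw [← hk, Finset.mul_sum]
        exact Finset.sum_congr rfl fun i _ => Nat.mul_div_cancel' (h i)
      rw [Finset.mem_filter, mem_Wd]
      constructor
      · intro j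
        rw [count_flatten_replicate, mem_Wd.1 ht j, Nat.mul_div_cancel' (h j)]
      · rw [List.replicate_succ, List.flatten_cons, ← htk, List.rotate_append_length_eq,
          flatten_replicate_comm]
    · intro w hw
      exact (key w hw).symm
    · intro t ht
      have htl := length_of_mem_Wd ht
      have htk : t.length = k := by
        rw [htl]
        apply Nat.eq_of_mul_eq_mul_left hd
        rw [← hk, Finset.mul_sum]
        exact Finset.sum_congr rfl fun i _ => Nat.mul_div_cancel' (h i)
      simp only [List.replicate_succ, List.flatten_cons]
      rw [← htk, List.take_left]
  · rw [Finset.card_eq_zero, Finset.eq_empty_iff_forall_notMem]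
    intro w hw
    apply h
    intro i
    rw [← mem_Wd.1 (Finset.mem_filter.1 hw).1 i, key w hw, count_flatten_replicate]
    exact dvd_mul_right _ _

theorem iterate_rotate {β : Type*} (w : List β) (i : ℕ) :
    (fun l : List β => l.rotate 1)^[i] w = w.rotate i := by
  induction i with
  | zero => simp
  | succ i ih => rw [Function.iterate_succ_apply', ih, List.rotate_rotate]

/-- Minimal rotation period. -/
def per {β : Type*} (w : List β) : ℕ := Function.minimalPeriod (fun l : List β => l.rotate 1) w

theorem rotate_eq_iff {β : Type*} (w : List β) (i : ℕ) : w.rotate i = w ↔ per w ∣ i := by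
  rw [per, ← Function.isPeriodicPt_iff_minimalPeriod_dvd, Function.IsPeriodicPt,
    Function.IsFixedPt, iterate_rotate]

theorem per_dvd {β : Type*} (w : List β) : per w ∣ w.length := by
  rw [← rotate_eq_iff]; exact List.rotate_length w

theorem rotate_mod_inj {β : Type*} (w : List β) (i j : ℕ) (hij : i ≤ j) :
    w.rotate i = w.rotate j ↔ per w ∣ j - i := by
  rw [← rotate_eq_iff]
  obtain ⟨k, rfl⟩ := Nat.exists_eq_add_of_le hij
  rw [Nat.add_sub_cancel_left, Nat.add_comm, ← List.rotate_rotate]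
  rw [← List.rotate_eq_rotate (n := i) (l := w.rotate k)]
  exact eq_comm

theorem sum_moebius_per {β : Type*} [DecidableEq β] (w : List β) (hw : w ≠ []) :
    ∑ d ∈ w.length.divisors.filter (fun d => w.rotate (w.length / d) = w),
      ArithmeticFunction.moebius d = if per w = w.length then 1 else 0 := by
  have hN : 0 < w.length := List.length_pos_of_ne_nil hw
  obtain ⟨e, he⟩ := per_dvd w
  have he0 : e ≠ 0 := by rintro rfl; simp at he; exact hw he
  have hp0 : per w ≠ 0 := by intro h; rw [h] at he; simp at he; exact hw he
  have h1 : w.length.divisors.filter (fun d => w.rotate (w.length / d) = w) = e.divisors := by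
    ext d
    rw [Finset.mem_filter, Nat.mem_divisors, Nat.mem_divisors, rotate_eq_iff]
    constructor
    · rintro ⟨⟨hd, _⟩, h⟩
      refine ⟨?_, he0⟩
      obtain ⟨k, hk⟩ := hd
      have hd0 : 0 < d := Nat.pos_of_ne_zero (by rintro rfl; simp at hk; exact hw hk)
      rw [hk, Nat.mul_div_cancel_left _ hd0] at h
      obtain ⟨c, rfl⟩ := h
      refine ⟨c, ?_⟩
      apply Nat.eq_of_mul_eq_mul_left (Nat.pos_of_ne_zero hp0)
      rw [← he, hk]; ring
    · rintro ⟨⟨c, rfl⟩, _⟩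
      have hd0 : 0 < d := Nat.pos_of_ne_zero (by rintro rfl; simp at he0)
      refine ⟨⟨⟨per w * c, by rw [he]; ring⟩, hN.ne'⟩, ?_⟩
      have : w.length = d * (per w * c) := by rw [he]; ring
      rw [this, Nat.mul_div_cancel_left _ hd0]
      exact dvd_mul_right _ _
  rw [h1, ← ArithmeticFunction.coe_mul_zeta_apply, ArithmeticFunction.moebius_mul_coe_zeta,
    ArithmeticFunction.one_apply]
  congr 1
  rw [eq_iff_iff]
  constructor
  · rintro rfl; omega
  · intro h
    rw [← h] at he
    exact Nat.eq_of_mul_eq_mul_left (Nat.pos_of_ne_zero hp0) (by omega)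

theorem lyn_iff_rotate {w : List α} : Lyn w ↔ w ≠ [] ∧ ∀ i, 0 < i → i < w.length →
    w < w.rotate i := by
  rw [lyn_iff]
  refine and_congr_right fun hw => ⟨fun h i hi hil => ?_, fun h u v huv hu hv => ?_⟩
  · rw [List.rotate_eq_drop_append_take hil.le]
    have := h (w.take i) (w.drop i) (List.take_append_drop i w).symm
      (by intro h; have := congrArg List.length h; rw [List.length_take, List.length_nil] at this; omega)
      (by intro h; have := congrArg List.length h; rw [List.length_drop, List.length_nil] at this; omega)
    rwa [List.take_append_drop] at this
  · have hu' := List.length_pos_of_ne_nil hu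
    have hv' := List.length_pos_of_ne_nil hv
    have := h u.length hu' (by rw [huv, List.length_append]; omega)
    rwa [huv, List.rotate_append_length_eq] at this

theorem rotate_mem_Wd {n : α → ℕ} {w : List α} (i : ℕ) : w.rotate i ∈ Wd n ↔ w ∈ Wd n := by
  simp only [mem_Wd, (List.rotate_perm w i).count_eq]

open Classical in
theorem card_lyn_rotate (w : List α) (hw : w ≠ []) :
    ((Finset.range w.length).filter (fun i => Lyn (w.rotate i))).card =
      if per w = w.length then 1 else 0 := by
  have hN : 0 < w.length := List.length_pos_of_ne_nil hw
  split_ifs with h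
  · rw [Finset.card_eq_one]
    obtain ⟨i, hi, hmin⟩ := Finset.exists_min_image (Finset.range w.length)
      (fun i => w.rotate i) ⟨0, by simpa using hN⟩
    rw [Finset.mem_range] at hi
    refine ⟨i, ?_⟩
    ext j
    rw [Finset.mem_filter, Finset.mem_range, Finset.mem_singleton]
    constructor
    · rintro ⟨hj, hl⟩
      by_contra hne
      rw [lyn_iff_rotate] at hl
      have h1 := hmin j (Finset.mem_range.2 hj)
      rcases lt_or_gt_of_ne hne with hlt | hlt
      · have := hl.2 (i - j) (by omega) (by rw [List.length_rotate]; omega)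
        rw [List.rotate_rotate, Nat.add_sub_cancel' hlt.le] at this
        exact absurd h1 (not_le.2 this)
      · have := hl.2 (w.length + i - j) (by omega) (by rw [List.length_rotate]; omega)
        rw [List.rotate_rotate, Nat.add_sub_cancel' (by omega), ← List.rotate_rotate,
          List.rotate_length] at this
        exact absurd h1 (not_le.2 this)
    · rintro rfl
      refine ⟨hi, lyn_iff_rotate.2 ⟨by simpa using hw, fun k hk hkl => ?_⟩⟩
      rw [List.length_rotate] at hkl
      have h1 := hmin ((j + k) % w.length) (Finset.mem_range.2 (Nat.mod_lt _ hN))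
      simp only [List.rotate_mod] at h1
      rw [List.rotate_rotate]
      refine lt_of_le_of_ne h1 ?_
      rw [Ne, rotate_mod_inj _ _ _ (by omega), h, Nat.add_sub_cancel_left]
      exact Nat.not_dvd_of_pos_of_lt hk hkl
  · rw [Finset.card_eq_zero, Finset.eq_empty_iff_forall_notMem]
    intro i hi
    rw [Finset.mem_filter, lyn_iff_rotate] at hi
    apply h
    by_contra hne
    have hp := per_dvd w
    have hlt : per w < w.length := lt_of_le_of_ne (Nat.le_of_dvd hN hp) hne
    have := hi.2.2 (per w) (Nat.pos_of_dvd_of_pos hp hN) (by simpa using hlt)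
    rw [List.rotate_rotate] at this
    have h2 := (rotate_mod_inj w i (i + per w) (by omega)).2 (by simp)
    rw [← h2] at this
    exact lt_irrefl _ this

open Classical in
theorem card_lyn (n : α → ℕ) (hn : n ≠ 0) :
    ((∑ i, n i : ℕ) : ℤ) * (((Wd n).filter Lyn).card : ℤ) =
      ∑ d ∈ (Finset.univ.gcd n).divisors,
          ArithmeticFunction.moebius d *
            (Nat.multinomial Finset.univ (fun i => n i / d) : ℤ) := by
  have hN : 0 < ∑ i, n i := by
    apply Nat.pos_of_ne_zero
    intro h
    apply hn
    funext i
    exact (Finset.sum_eq_zero_iff.1 h) i (Finset.mem_univ i)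
  set N := ∑ i, n i with hNdef
  have hne : ∀ w ∈ Wd n, w ≠ [] := by
    rintro w hw rfl
    have := length_of_mem_Wd hw
    simp at this; omega
  have hlen : ∀ w ∈ Wd n, w.length = N := fun w hw => length_of_mem_Wd hw
  -- step 1
  have h1 : N * ((Wd n).filter Lyn).card =
      ∑ w ∈ Wd n, if per w = w.length then 1 else 0 := by
    have : ∀ w ∈ Wd n, (if per w = w.length then 1 else 0) =
        ∑ i ∈ Finset.range N, if Lyn (w.rotate i) then 1 else 0 := by
      intro w hw
      rw [← card_lyn_rotate w (hne w hw), Finset.card_filter, hlen w hw]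
    rw [Finset.sum_congr rfl this, Finset.sum_comm]
    have h2 : ∀ i ∈ Finset.range N, (∑ w ∈ Wd n, if Lyn (w.rotate i) then 1 else 0) =
        ((Wd n).filter Lyn).card := by
      intro i hi
      rw [← Finset.card_filter]
      refine Finset.card_bij (fun w _ => w.rotate i) ?_ ?_ ?_
      · intro w hw
        rw [Finset.mem_filter] at hw ⊢
        exact ⟨(rotate_mem_Wd i).2 hw.1, hw.2⟩
      · intro a _ b _ h
        exact List.rotate_injective i h
      · intro b hb
        have hb' := Finset.mem_filter.1 hb
        have hi' := Finset.mem_range.1 hi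
        have hr : (b.rotate (N - i)).rotate i = b := by
          rw [List.rotate_rotate, Nat.sub_add_cancel hi'.le, ← hlen b hb'.1, List.rotate_length]
        refine ⟨b.rotate (N - i), ?_, hr⟩
        rw [Finset.mem_filter, hr]
        exact ⟨(rotate_mem_Wd _).2 hb'.1, hb'.2⟩
    rw [Finset.sum_congr rfl h2]
    simp
  have h1' : ((N : ℤ)) * (((Wd n).filter Lyn).card : ℤ) =
      ∑ w ∈ Wd n, if per w = w.length then (1 : ℤ) else 0 := by
    exact_mod_cast h1
  rw [h1']
  have h3 : ∀ w ∈ Wd n, (if per w = w.length then (1 : ℤ) else 0) =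
      ∑ d ∈ N.divisors, if w.rotate (N / d) = w then ArithmeticFunction.moebius d else 0 := by
    intro w hw
    rw [← sum_moebius_per w (hne w hw), Finset.sum_filter, hlen w hw]
  rw [Finset.sum_congr rfl h3, Finset.sum_comm]
  have hgN : Finset.univ.gcd n ∣ N := Finset.dvd_sum fun i _ => Finset.gcd_dvd (Finset.mem_univ i)
  have h4 : ∀ d ∈ N.divisors, (∑ w ∈ Wd n, if w.rotate (N / d) = w then
      ArithmeticFunction.moebius d else 0) = if d ∣ Finset.univ.gcd n then
        ArithmeticFunction.moebius d *
            (Nat.multinomial Finset.univ (fun i => n i / d) : ℤ) else 0 := by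
    intro d hd
    rw [Nat.mem_divisors] at hd
    rw [← Finset.sum_filter, Finset.sum_const, card_rot n d (Nat.pos_of_dvd_of_pos hd.1 hN) hd.1 hN]
    have hiff : d ∣ Finset.univ.gcd n ↔ ∀ i, d ∣ n i := by
      rw [Finset.dvd_gcd_iff]; simp
    by_cases hdn : ∀ i, d ∣ n i
    · rw [if_pos hdn, if_pos (hiff.2 hdn), card_W, nsmul_eq_mul, mul_comm]
    · rw [if_neg hdn, if_neg (fun h => hdn (hiff.1 h)), zero_smul]
  rw [Finset.sum_congr rfl h4, ← Finset.sum_filter]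
  apply Finset.sum_congr _ (fun _ _ => rfl)
  ext d
  rw [Finset.mem_filter, Nat.mem_divisors, Nat.mem_divisors]
  constructor
  · rintro ⟨_, h⟩
    refine ⟨h, ?_⟩
    intro h0
    rw [h0, zero_dvd_iff] at hgN
    omega
  · rintro ⟨h, _⟩
    exact ⟨⟨h.trans hgN, hN.ne'⟩, h⟩

end Counting
end FLWitt

namespace FLWitt

section Algebra

attribute [local instance] LieRing.ofAssociativeRing

variable {X : Type}

theorem fl_induction {P : FreeLieAlgebra ℚ X → Prop} (hof : ∀ i, P (FreeLieAlgebra.of ℚ i))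
    (hzero : P 0) (hadd : ∀ x y, P x → P y → P (x + y)) (hsmul : ∀ (c : ℚ) x, P x → P (c • x))
    (hlie : ∀ x y, P x → P y → P ⁅x, y⁆) (x : FreeLieAlgebra ℚ X) : P x := by
  let S : LieSubalgebra ℚ (FreeLieAlgebra ℚ X) :=
    { carrier := {x | P x}
      add_mem' := fun {a b} ha hb => hadd a b ha hb
      zero_mem' := hzero
      smul_mem' := fun c x hx => hsmul c x hx
      lie_mem' := fun {a b} ha hb => hlie a b ha hb }
  let f : FreeLieAlgebra ℚ X →ₗ⁅ℚ⁆ S :=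
    FreeLieAlgebra.lift ℚ (fun i => (⟨FreeLieAlgebra.of ℚ i, hof i⟩ : S))
  have hf : S.incl.comp f = LieHom.id := by
    ext i
    simp [f]
  have : x = (f x : FreeLieAlgebra ℚ X) := by
    have := LieHom.congr_fun hf x
    simpa using this.symm
  rw [this]
  exact (f x).2

/-- square-zero extension of a Lie algebra by its adjoint module -/
def TSZ (L : Type*) := L × L

section TSZ
variable (L : Type*) [LieRing L] [LieAlgebra ℚ L]

instance : AddCommGroup (TSZ L) := inferInstanceAs (AddCommGroup (L × L))
instance : Module ℚ (TSZ L) := inferInstanceAs (Module ℚ (L × L))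

instance : LieRing (TSZ L) where
  bracket p q := (⁅p.1, q.1⁆, ⁅p.1, q.2⁆ - ⁅q.1, p.2⁆)
  add_lie := by
    rintro ⟨a, x⟩ ⟨b, y⟩ ⟨c, z⟩
    refine Prod.ext ?_ ?_
    · change ⁅a + b, c⁆ = ⁅a, c⁆ + ⁅b, c⁆
      rw [add_lie]
    · change ⁅a + b, z⁆ - ⁅c, x + y⁆ = (⁅a, z⁆ - ⁅c, x⁆) + (⁅b, z⁆ - ⁅c, y⁆)
      rw [add_lie, lie_add]; abel
  lie_add := by
    rintro ⟨a, x⟩ ⟨b, y⟩ ⟨c, z⟩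
    refine Prod.ext ?_ ?_
    · change ⁅a, b + c⁆ = ⁅a, b⁆ + ⁅a, c⁆
      rw [lie_add]
    · change ⁅a, y + z⁆ - ⁅b + c, x⁆ = (⁅a, y⁆ - ⁅b, x⁆) + (⁅a, z⁆ - ⁅c, x⁆)
      rw [add_lie, lie_add]; abel
  lie_self := by
    rintro ⟨a, x⟩
    refine Prod.ext ?_ ?_
    · change ⁅a, a⁆ = 0
      simp
    · change ⁅a, x⁆ - ⁅a, x⁆ = 0
      simp
  leibniz_lie := by
    rintro ⟨a, x⟩ ⟨b, y⟩ ⟨c, z⟩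
    refine Prod.ext ?_ ?_
    · change ⁅a, ⁅b, c⁆⁆ = ⁅⁅a, b⁆, c⁆ + ⁅b, ⁅a, c⁆⁆
      simp
    · change ⁅a, ⁅b, z⁆ - ⁅c, y⁆⁆ - ⁅⁅b, c⁆, x⁆ =
        (⁅⁅a, b⁆, z⁆ - ⁅c, ⁅a, y⁆ - ⁅b, x⁆⁆) + (⁅b, ⁅a, z⁆ - ⁅c, x⁆⁆ - ⁅⁅a, c⁆, y⁆)
      simp only [lie_sub, lie_lie]
      abel

instance : LieAlgebra ℚ (TSZ L) where
  lie_smul := by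
    rintro t ⟨a, x⟩ ⟨b, y⟩
    refine Prod.ext ?_ ?_
    · change ⁅a, t • b⁆ = t • ⁅a, b⁆
      simp
    · change ⁅a, t • y⁆ - ⁅t • b, x⁆ = t • (⁅a, y⁆ - ⁅b, x⁆)
      simp [smul_sub]

end TSZ

theorem exists_derivation (d : X → FreeLieAlgebra ℚ X) :
    ∃ D : LieDerivation ℚ (FreeLieAlgebra ℚ X) (FreeLieAlgebra ℚ X),
      ∀ i, D (FreeLieAlgebra.of ℚ i) = d i := by
  let F : FreeLieAlgebra ℚ X →ₗ⁅ℚ⁆ TSZ (FreeLieAlgebra ℚ X) :=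
    FreeLieAlgebra.lift ℚ (fun i => ((FreeLieAlgebra.of ℚ i, d i) : FreeLieAlgebra ℚ X × _))
  have hFof : ∀ i, F (FreeLieAlgebra.of ℚ i) = ((FreeLieAlgebra.of ℚ i, d i) : _ × _) := by
    intro i
    exact FreeLieAlgebra.lift_of_apply (L := TSZ (FreeLieAlgebra ℚ X)) _ _
  have h1 : ∀ x, (F x).1 = x := by
    intro x
    induction x using fl_induction with
    | hof i => rw [hFof]
    | hzero => rw [map_zero]; rfl
    | hadd x y hx hy =>
      rw [map_add]
      change (F x).1 + (F y).1 = _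
      rw [hx, hy]
    | hsmul c x hx =>
      rw [map_smul]
      change c • (F x).1 = _
      rw [hx]
    | hlie x y hx hy =>
      rw [LieHom.map_lie]
      change ⁅(F x).1, (F y).1⁆ = _
      rw [hx, hy]
  refine ⟨{ toFun := fun x => (F x).2, map_add' := ?_, map_smul' := ?_, leibniz' := ?_ }, ?_⟩
  · intro x y
    rw [map_add]; rfl
  · intro c x
    rw [map_smul]; rfl
  · intro x y
    change (F ⁅x, y⁆).2 = ⁅x, (F y).2⁆ - ⁅y, (F x).2⁆
    rw [LieHom.map_lie]
    change ⁅(F x).1, (F y).2⁆ - ⁅(F y).1, (F x).2⁆ = _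
    rw [h1, h1]
  · intro i
    change (F _).2 = _
    rw [hFof]

theorem derivation_ext {D D' : LieDerivation ℚ (FreeLieAlgebra ℚ X) (FreeLieAlgebra ℚ X)}
    (h : ∀ i, D (FreeLieAlgebra.of ℚ i) = D' (FreeLieAlgebra.of ℚ i)) : D = D' := by
  ext x
  induction x using fl_induction with
  | hof i => exact h i
  | hzero => simp
  | hadd x y hx hy => rw [map_add, map_add, hx, hy]
  | hsmul c x hx => rw [map_smul, map_smul, hx]
  | hlie x y hx hy => rw [LieDerivation.apply_lie_eq_sub, LieDerivation.apply_lie_eq_sub, hx, hy]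

/-- the free associative algebra, words model -/
abbrev TA (X : Type) := MonoidAlgebra ℚ (FreeMonoid X)

/-- The canonical map to the free associative algebra. -/
def phi : FreeLieAlgebra ℚ X →ₗ⁅ℚ⁆ TA X :=
  FreeLieAlgebra.lift ℚ (fun i => (MonoidAlgebra.single (FreeMonoid.of i) 1 : TA X))

theorem phi_of (i : X) : phi (FreeLieAlgebra.of ℚ i) =
    (MonoidAlgebra.single (FreeMonoid.of i) 1 : TA X) := by
  simp only [phi, FreeLieAlgebra.lift_of_apply]

theorem phi_lie (x y : FreeLieAlgebra ℚ X) : phi ⁅x, y⁆ = phi x * phi y - phi y * phi x := by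
  rw [LieHom.map_lie, LieRing.of_associative_ring_bracket]

/-- auxiliary operator -/
def bop (i : X) : Module.End ℚ (FreeLieAlgebra ℚ X × ℚ) where
  toFun p := (⁅FreeLieAlgebra.of ℚ i, p.1⁆ + p.2 • FreeLieAlgebra.of ℚ i, 0)
  map_add' p q := by
    ext
    · simp [add_smul]; abel
    · simp
  map_smul' c p := by
    ext
    · simp [mul_smul]
    · simp

/-- auxiliary representation -/
def Bop : TA X →ₐ[ℚ] Module.End ℚ (FreeLieAlgebra ℚ X × ℚ) :=
  MonoidAlgebra.lift ℚ _ _ (FreeMonoid.lift bop)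

theorem Bop_phi (E : LieDerivation ℚ (FreeLieAlgebra ℚ X) (FreeLieAlgebra ℚ X))
    (hE : ∀ i, E (FreeLieAlgebra.of ℚ i) = FreeLieAlgebra.of ℚ i) (x : FreeLieAlgebra ℚ X) :
    ∀ y c, Bop (phi x) (y, c) = (⁅x, y⁆ + c • E x, 0) := by
  induction x using fl_induction with
  | hof i =>
    intro y c
    rw [phi_of, Bop, MonoidAlgebra.lift_single, one_smul, FreeMonoid.lift_eval_of, hE]
    rfl
  | hzero => intro y c; simp; rfl
  | hadd x y hx hy =>
    intro z c
    rw [map_add, map_add, LinearMap.add_apply, hx, hy, map_add]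
    ext
    · simp; abel
    · simp
  | hsmul t x hx =>
    intro z c
    rw [map_smul, map_smul, LinearMap.smul_apply, hx, map_smul]
    ext
    · simp [smul_comm t c]
    · simp
  | hlie x y hx hy =>
    intro z c
    rw [phi_lie, map_sub, map_mul, map_mul, LinearMap.sub_apply, Module.End.mul_apply,
      Module.End.mul_apply, hx, hy, hx, hy, LieDerivation.apply_lie_eq_sub]
    ext
    · simp [smul_sub]; abel
    · simp

theorem euler_eq_zero (E : LieDerivation ℚ (FreeLieAlgebra ℚ X) (FreeLieAlgebra ℚ X))
    (hE : ∀ i, E (FreeLieAlgebra.of ℚ i) = FreeLieAlgebra.of ℚ i) (x : FreeLieAlgebra ℚ X)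
    (hx : phi x = 0) : E x = 0 := by
  have := Bop_phi E hE x 0 1
  rw [hx] at this
  simpa using (congrArg Prod.fst this).symm

/-- letter-counting derivation of the free associative algebra -/
def dT [DecidableEq X] (j : X) : TA X →ₗ[ℚ] TA X where
  toFun f := .ofCoeff ((fun w : FreeMonoid X => ((w.toList.count j : ℕ) : ℚ)) • f.coeff)
  map_add' f g := by ext w; simp [mul_add]
  map_smul' c f := by ext w; simp; ring

theorem dT_coeff [DecidableEq X] (j : X) (f : TA X) (w : FreeMonoid X) :
    (dT j f).coeff w = (w.toList.count j : ℚ) * f.coeff w := by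
  simp [dT]

theorem dT_single [DecidableEq X] (j : X) (w : FreeMonoid X) (r : ℚ) :
    dT j (.single w r) = (w.toList.count j : ℚ) • .single w r := by
  ext s
  rw [dT_coeff]
  by_cases h : w = s
  · subst h; simp
  · simp [Finsupp.single_apply, h]

theorem dT_mul [DecidableEq X] (j : X) (f g : TA X) : dT j (f * g) = dT j f * g + f * dT j g := by
  induction f using MonoidAlgebra.induction_linear with
  | zero => simp
  | add f f' hf hf' => rw [add_mul, map_add, hf, hf', map_add, add_mul, add_mul]; abel
  | single w r =>
    induction g using MonoidAlgebra.induction_linear with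
    | zero => simp
    | add f f' hf hf' => rw [mul_add, map_add, hf, hf', map_add, mul_add, mul_add]; abel
    | single s t =>
      rw [MonoidAlgebra.single_mul_single, dT_single, dT_single, dT_single, smul_mul_assoc,
        mul_smul_comm, MonoidAlgebra.single_mul_single, ← add_smul, FreeMonoid.toList_mul,
        List.count_append]
      push_cast
      rfl

theorem phi_deriv [DecidableEq X] (j : X)
    (D : LieDerivation ℚ (FreeLieAlgebra ℚ X) (FreeLieAlgebra ℚ X))
    (hD : ∀ i, D (FreeLieAlgebra.of ℚ i) = if j = i then FreeLieAlgebra.of ℚ i else 0)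
    (x : FreeLieAlgebra ℚ X) : phi (D x) = dT j (phi x) := by
  induction x using fl_induction with
  | hof i =>
    rw [hD, phi_of, dT_single]
    split_ifs with h
    · subst h; simp [phi_of]
    · have : ¬ i = j := fun h' => h h'.symm
      simp [this]
  | hzero => simp
  | hadd x y hx hy => simp only [map_add, hx, hy]
  | hsmul t x hx => simp only [map_smul, hx]
  | hlie x y hx hy =>
    rw [LieDerivation.apply_lie_eq_sub, map_sub, phi_lie, phi_lie, phi_lie, map_sub, dT_mul, dT_mul,
      hx, hy]
    abel

/-- `w` is the smallest word of `f`, with coefficient one. -/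
def Lead [LinearOrder X] (f : TA X) (w : List X) : Prop :=
  f.coeff (FreeMonoid.ofList w) = 1 ∧
    ∀ s, f.coeff s ≠ 0 → s.toList.length = w.length ∧ w ≤ s.toList

theorem append_le_append_of [LinearOrder X] {a b u v : List X} (h1 : a ≤ u) (h2 : b ≤ v)
    (hl : a.length = u.length) : a ++ b ≤ u ++ v := by
  rcases h1.lt_or_eq with h | rfl
  · exact (append_lt_of_length h hl b v).le
  · exact (append_le_append_iff a).2 h2

theorem exists_of_mul_coeff_ne (f g : TA X) (s : FreeMonoid X) (h : (f * g).coeff s ≠ 0) :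
    ∃ a b, a * b = s ∧ f.coeff a ≠ 0 ∧ g.coeff b ≠ 0 := by
  classical
  rw [MonoidAlgebra.coeff_mul] at h
  by_contra! hc
  apply h
  refine Finset.sum_eq_zero fun a ha => Finset.sum_eq_zero fun b hb => ?_
  rw [Finsupp.mem_support_iff] at ha hb
  simp only
  split_ifs with hab
  · exact absurd (hc a b hab ha) hb
  · rfl

theorem Lead.mul [LinearOrder X] {f g : TA X} {u v : List X} (hf : Lead f u) (hg : Lead g v) :
    Lead (f * g) (u ++ v) := by
  constructor
  · rw [FreeMonoid.ofList_append, MonoidAlgebra.coeff_mul_mul_of_uniqueMul, hf.1, hg.1,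
      one_mul]
    intro a b ha hb hab
    rw [Finsupp.mem_support_iff] at ha hb
    have h1 := hf.2 a ha
    have h2 := hg.2 b hb
    have h3 : a.toList ++ b.toList = u ++ v := hab
    have := List.append_inj h3 h1.1
    exact ⟨this.1, this.2⟩
  · intro s hs
    obtain ⟨a, b, rfl, ha, hb⟩ := exists_of_mul_coeff_ne f g s hs
    have h1 := hf.2 a ha
    have h2 := hg.2 b hb
    rw [FreeMonoid.toList_mul, List.length_append, List.length_append, h1.1, h2.1]
    exact ⟨rfl, append_le_append_of h1.2 h2.2 h1.1.symm⟩

theorem exists_lead [LinearOrder X]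
    (D : X → LieDerivation ℚ (FreeLieAlgebra ℚ X) (FreeLieAlgebra ℚ X))
    (hD : ∀ j i, D j (FreeLieAlgebra.of ℚ i) = if j = i then FreeLieAlgebra.of ℚ i else 0)
    (k : ℕ) : ∀ w : List X, w.length = k → Lyn w →
    ∃ x : FreeLieAlgebra ℚ X, (∀ j, D j x = (w.count j : ℚ) • x) ∧ Lead (phi x) w := by
  induction k using Nat.strong_induction_on with
  | _ k ih =>
    intro w hk hw
    by_cases hl : 2 ≤ w.length
    · obtain ⟨u, v, rfl, hu, hv, hlt⟩ := hw.exists_split hl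
      have hu' := List.length_pos_of_ne_nil hu.1
      have hv' := List.length_pos_of_ne_nil hv.1
      rw [List.length_append] at hk
      obtain ⟨x, hx, hxl⟩ := ih u.length (by omega) u rfl hu
      obtain ⟨y, hy, hyl⟩ := ih v.length (by omega) v rfl hv
      refine ⟨⁅x, y⁆, ?_, ?_, ?_⟩
      · intro j
        rw [LieDerivation.apply_lie_eq_add, hx, hy, lie_smul, smul_lie, ← add_smul,
          List.count_append]
        push_cast
        rw [add_comm]
      · have h1 := hxl.mul hyl
        have h2 := hyl.mul hxl
        have h3 : (phi y * phi x).coeff (FreeMonoid.ofList (u ++ v)) = 0 := by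
          by_contra hc
          exact absurd (h2.2 _ hc).2 (not_le.2 hlt)
        rw [phi_lie, MonoidAlgebra.coeff_sub, Finsupp.sub_apply, h1.1, h3, sub_zero]
      · intro s hs
        have h1 := hxl.mul hyl
        have h2 := hyl.mul hxl
        rw [phi_lie, MonoidAlgebra.coeff_sub, Finsupp.sub_apply] at hs
        by_cases h : (phi x * phi y).coeff s = 0
        · rw [h, zero_sub, neg_ne_zero] at hs
          have := h2.2 s hs
          refine ⟨by rw [this.1]; simp [add_comm], hlt.le.trans this.2⟩
        · exact h1.2 s h
    · have : w.length = 1 := by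
        have := List.length_pos_of_ne_nil hw.1
        omega
      obtain ⟨a, rfl⟩ := List.length_eq_one_iff.1 this
      refine ⟨FreeLieAlgebra.of ℚ a, ?_, ?_, ?_⟩
      · intro j
        rw [hD]
        by_cases h : j = a
        · subst h; simp
        · have h' : ¬ a = j := fun h' => h h'.symm
          simp [h, h']
      · rw [phi_of]
        exact Finsupp.single_eq_same
      · intro s hs
        rw [phi_of] at hs
        have : s = FreeMonoid.of a := by
          by_contra hc
          exact hs (Finsupp.single_eq_of_ne hc)
        subst this
        exact ⟨rfl, le_rfl⟩

end Algebra
end FLWitt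

namespace FLWitt

section Shuffle

attribute [local instance] LieRing.ofAssociativeRing

variable {X : Type}

/-- the tensor square of the free associative algebra -/
abbrev TT (X : Type) := MonoidAlgebra ℚ (FreeMonoid X × FreeMonoid X)

/-- the letters are primitive -/
def prim (i : X) : TT X :=
  MonoidAlgebra.single (FreeMonoid.of i, 1) 1 + MonoidAlgebra.single (1, FreeMonoid.of i) 1

/-- the coproduct -/
def Dl : TA X →ₐ[ℚ] TT X := MonoidAlgebra.lift ℚ _ _ (FreeMonoid.lift prim)

/-- first inclusion -/
def ia : TA X →ₐ[ℚ] TT X := MonoidAlgebra.mapDomainAlgHom ℚ ℚ (MonoidHom.inl _ _)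

/-- second inclusion -/
def ib : TA X →ₐ[ℚ] TT X := MonoidAlgebra.mapDomainAlgHom ℚ ℚ (MonoidHom.inr _ _)

theorem ia_single (w : FreeMonoid X) (r : ℚ) : ia (.single w r) = .single (w, 1) r := by
  simp [ia]

theorem ib_single (w : FreeMonoid X) (r : ℚ) : ib (.single w r) = .single (1, w) r := by
  simp [ib]

theorem ia_ib_comm (f g : TA X) : ia f * ib g = ib g * ia f := by
  induction f using MonoidAlgebra.induction_linear with
  | zero => simp
  | add f f' hf hf' => rw [map_add, add_mul, mul_add, hf, hf']
  | single w r =>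
    induction g using MonoidAlgebra.induction_linear with
    | zero => simp
    | add f f' hf hf' => rw [map_add, add_mul, mul_add, hf, hf']
    | single s t =>
      rw [ia_single, ib_single, MonoidAlgebra.single_mul_single, MonoidAlgebra.single_mul_single]
      simp [mul_comm]

theorem Dl_of (i : X) : Dl (.single (FreeMonoid.of i) 1) = prim i := by
  rw [Dl, MonoidAlgebra.lift_single, one_smul, FreeMonoid.lift_eval_of]

theorem Dl_phi (x : FreeLieAlgebra ℚ X) : Dl (phi x) = ia (phi x) + ib (phi x) := by
  induction x using fl_induction with
  | hof i => rw [phi_of, Dl_of, ia_single, ib_single, prim]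
  | hzero => simp
  | hadd x y hx hy => simp only [map_add, hx, hy]; abel
  | hsmul t x hx => simp only [map_smul, hx, smul_add]
  | hlie x y hx hy =>
    rw [phi_lie]
    simp only [map_sub, map_mul, hx, hy, mul_add, add_mul, ia_ib_comm]
    abel

theorem ia_coeff (f : TA X) (u v : FreeMonoid X) (hv : v ≠ 1) : (ia f).coeff (u, v) = 0 := by
  induction f using MonoidAlgebra.induction_linear with
  | zero => simp
  | add f f' hf hf' => rw [map_add, MonoidAlgebra.coeff_add, Finsupp.add_apply, hf, hf', add_zero]
  | single w r =>
    rw [ia_single]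
    refine Finsupp.single_eq_of_ne ?_
    intro h
    exact hv (congrArg Prod.snd h)

theorem ib_coeff (f : TA X) (u v : FreeMonoid X) (hu : u ≠ 1) : (ib f).coeff (u, v) = 0 := by
  induction f using MonoidAlgebra.induction_linear with
  | zero => simp
  | add f f' hf hf' => rw [map_add, MonoidAlgebra.coeff_add, Finsupp.add_apply, hf, hf', add_zero]
  | single w r =>
    rw [ib_single]
    refine Finsupp.single_eq_of_ne ?_
    intro h
    exact hu (congrArg Prod.fst h)

/-- shuffle multiplicity -/
def qc (w u v : List X) : ℚ :=
  (Dl (.single (FreeMonoid.ofList w) 1)).coeff (FreeMonoid.ofList u, FreeMonoid.ofList v)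

theorem Dl_cons (a : X) (w : List X) : Dl (.single (FreeMonoid.ofList (a :: w)) 1) =
    .single (FreeMonoid.of a, 1) 1 * Dl (.single (FreeMonoid.ofList w) 1) +
    .single (1, FreeMonoid.of a) 1 * Dl (.single (FreeMonoid.ofList w) 1) := by
  rw [← add_mul]
  change _ = prim a * _
  rw [← Dl_of, ← map_mul, MonoidAlgebra.single_mul_single, FreeMonoid.ofList_cons, mul_one]

theorem single_mul_nonneg (m : FreeMonoid X × FreeMonoid X) (y : TT X) (hy : ∀ p, 0 ≤ y.coeff p)
    (p : FreeMonoid X × FreeMonoid X) : 0 ≤ (.single m 1 * y : TT X).coeff p := by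
  by_cases h : ∃ d, m * d = p
  · obtain ⟨d, rfl⟩ := h
    rw [MonoidAlgebra.coeff_single_mul_mul, one_mul]
    exact hy d
  · push Not at h
    rw [MonoidAlgebra.coeff_single_mul_of_forall_mul_ne _ _ h]

theorem Dl_nonneg (w : List X) (p : FreeMonoid X × FreeMonoid X) :
    0 ≤ (Dl (.single (FreeMonoid.ofList w) 1)).coeff p := by
  induction w generalizing p with
  | nil =>
    rw [FreeMonoid.ofList_nil]
    have : (MonoidAlgebra.single 1 1 : TA X) = 1 := rfl
    rw [this, map_one]
    change 0 ≤ Finsupp.single (1 : FreeMonoid X × FreeMonoid X) (1 : ℚ) p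
    classical
    rw [Finsupp.single_apply]
    split_ifs <;> norm_num
  | cons a w ih =>
    rw [Dl_cons, MonoidAlgebra.coeff_add, Finsupp.add_apply]
    exact add_nonneg (single_mul_nonneg _ _ ih _) (single_mul_nonneg _ _ ih _)

theorem Sh_of_qc (w u v : List X) (h : qc w u v ≠ 0) : Sh u v w := by
  induction w generalizing u v with
  | nil =>
    rw [qc, FreeMonoid.ofList_nil] at h
    have : (MonoidAlgebra.single 1 1 : TA X) = 1 := rfl
    rw [this, map_one] at h
    have h2 : ((FreeMonoid.ofList u, FreeMonoid.ofList v) : FreeMonoid X × FreeMonoid X) = 1 := by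
      by_contra hc
      exact h (Finsupp.single_eq_of_ne hc)
    have hu : u = [] := congrArg Prod.fst h2
    have hv : v = [] := congrArg Prod.snd h2
    subst hu hv
    exact .nil
  | cons a w ih =>
    rw [qc, Dl_cons, MonoidAlgebra.coeff_add, Finsupp.add_apply] at h
    by_cases h1 : (.single (FreeMonoid.of a, 1) 1 * Dl (.single (FreeMonoid.ofList w) 1) :
        TT X).coeff (FreeMonoid.ofList u, FreeMonoid.ofList v) = 0
    · rw [h1, zero_add] at h
      by_cases hd : ∃ d, ((1, FreeMonoid.of a) : FreeMonoid X × FreeMonoid X) * d =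
          (FreeMonoid.ofList u, FreeMonoid.ofList v)
      · obtain ⟨⟨d, e⟩, hd⟩ := hd
        rw [← hd, MonoidAlgebra.coeff_single_mul_mul, one_mul] at h
        have := ih d.toList e.toList h
        have hu : d.toList = u := congrArg Prod.fst hd
        have hv : a :: e.toList = v := congrArg Prod.snd hd
        rw [← hu, ← hv]
        exact .right a this
      · push Not at hd
        rw [MonoidAlgebra.coeff_single_mul_of_forall_mul_ne _ _ hd] at h
        exact absurd rfl h
    · by_cases hd : ∃ d, ((FreeMonoid.of a, 1) : FreeMonoid X × FreeMonoid X) * d =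
          (FreeMonoid.ofList u, FreeMonoid.ofList v)
      · obtain ⟨⟨d, e⟩, hd⟩ := hd
        rw [← hd, MonoidAlgebra.coeff_single_mul_mul, one_mul] at h1
        have := ih d.toList e.toList h1
        have hu : a :: d.toList = u := congrArg Prod.fst hd
        have hv : e.toList = v := congrArg Prod.snd hd
        rw [← hu, ← hv]
        exact .left a this
      · push Not at hd
        rw [MonoidAlgebra.coeff_single_mul_of_forall_mul_ne _ _ hd] at h1
        exact absurd rfl h1

theorem qc_pos {w u v : List X} (h : Sh u v w) : 0 < qc w u v := by
  induction h with
  | nil =>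
    rw [qc, FreeMonoid.ofList_nil]
    have : (MonoidAlgebra.single 1 1 : TA X) = 1 := rfl
    rw [this, map_one]
    have : (1 : TT X).coeff (1, 1) = 1 := Finsupp.single_eq_same
    rw [this]; norm_num
  | @left a u v w h ih =>
    rw [qc, Dl_cons, MonoidAlgebra.coeff_add, Finsupp.add_apply]
    refine add_pos_of_pos_of_nonneg ?_ (single_mul_nonneg _ _ (Dl_nonneg _) _)
    have := MonoidAlgebra.coeff_single_mul_mul (Dl (.single (FreeMonoid.ofList w) 1)) (1 : ℚ)
      ((FreeMonoid.of a, 1) : FreeMonoid X × FreeMonoid X) (FreeMonoid.ofList u, FreeMonoid.ofList v)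
    refine lt_of_lt_of_eq ih ?_
    exact (this.trans (one_mul _)).symm
  | @right a u v w h ih =>
    rw [qc, Dl_cons, MonoidAlgebra.coeff_add, Finsupp.add_apply]
    refine add_pos_of_nonneg_of_pos (single_mul_nonneg _ _ (Dl_nonneg _) _) ?_
    have := MonoidAlgebra.coeff_single_mul_mul (Dl (.single (FreeMonoid.ofList w) 1)) (1 : ℚ)
      ((1, FreeMonoid.of a) : FreeMonoid X × FreeMonoid X) (FreeMonoid.ofList u, FreeMonoid.ofList v)
    refine lt_of_lt_of_eq ih ?_
    exact (this.trans (one_mul _)).symm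

theorem Dl_coeff (f : TA X) (u v : List X) :
    (Dl f).coeff (FreeMonoid.ofList u, FreeMonoid.ofList v) =
      f.coeff.sum (fun s c => c * qc s.toList u v) := by
  induction f using MonoidAlgebra.induction_linear with
  | zero => simp
  | add f g hf hg =>
    rw [map_add, MonoidAlgebra.coeff_add, Finsupp.add_apply, hf, hg, MonoidAlgebra.coeff_add,
      Finsupp.sum_add_index']
    · simp
    · intros; ring
  | single w r =>
    have : (MonoidAlgebra.single w r : TA X) = r • .single w 1 := by simp
    rw [MonoidAlgebra.coeff_single, Finsupp.sum_single_index (by simp), this, map_smul]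
    rfl

/-- the smallest word of a nonzero Lie element is Lyndon -/
theorem lyn_of_min [LinearOrder X] (x : FreeLieAlgebra ℚ X) (w : List X) (hw : w ≠ [])
    (h : (phi x).coeff (FreeMonoid.ofList w) ≠ 0)
    (hmin : ∀ s, (phi x).coeff s ≠ 0 → w ≤ s.toList) : Lyn w := by
  by_contra hl
  obtain ⟨u, v, huv, hu, hv, hs⟩ := exists_split_of_not_lyn hw hl
  have h1 := Dl_coeff (phi x) u v
  rw [Dl_phi, MonoidAlgebra.coeff_add, Finsupp.add_apply, ia_coeff _ _ (FreeMonoid.ofList v) hv,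
    ib_coeff _ (FreeMonoid.ofList u) _ hu,
    add_zero, Finsupp.sum, Finset.sum_eq_single (FreeMonoid.ofList w)] at h1
  · have := qc_pos (Sh.append u v)
    rw [← huv] at this
    exact (mul_ne_zero h this.ne') h1.symm
  · intro s hs' hne
    rw [Finsupp.mem_support_iff] at hs'
    by_contra hc
    have := hs _ (Sh_of_qc _ _ _ (right_ne_zero_of_mul hc))
    have h5 : s.toList = w := le_antisymm this (hmin s hs')
    exact hne h5
  · intro h'
    rw [Finsupp.notMem_support_iff] at h'
    exact absurd h' h

end Shuffle
end FLWitt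

namespace FLWitt

section Final

attribute [local instance] LieRing.ofAssociativeRing

variable {X : Type} [LinearOrder X] [Fintype X]

theorem mem_eig (D : X → LieDerivation ℚ (FreeLieAlgebra ℚ X) (FreeLieAlgebra ℚ X)) (n : X → ℕ)
    (x : FreeLieAlgebra ℚ X) :
    x ∈ (⨅ j, Module.End.eigenspace (D j).toLinearMap (n j : ℚ) :
          Submodule ℚ (FreeLieAlgebra ℚ X)) ↔ ∀ j, D j x = (n j : ℚ) • x := by
  simp only [Submodule.mem_iInf, Module.End.mem_eigenspace_iff]
  rfl

theorem sum_apply (D : X → LieDerivation ℚ (FreeLieAlgebra ℚ X) (FreeLieAlgebra ℚ X))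
    (hD : ∀ j i, D j (FreeLieAlgebra.of ℚ i) = if j = i then FreeLieAlgebra.of ℚ i else 0)
    (E : LieDerivation ℚ (FreeLieAlgebra ℚ X) (FreeLieAlgebra ℚ X))
    (hE : ∀ i, E (FreeLieAlgebra.of ℚ i) = FreeLieAlgebra.of ℚ i) (x : FreeLieAlgebra ℚ X) :
    E x = ∑ j, D j x := by
  induction x using fl_induction with
  | hof i => simp [hE, hD]
  | hzero => simp
  | hadd x y hx hy => simp only [map_add, hx, hy, Finset.sum_add_distrib]
  | hsmul c x hx => simp only [map_smul, hx, Finset.smul_sum]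
  | hlie x y hx hy =>
    simp only [LieDerivation.apply_lie_eq_sub, hx, hy, Finset.sum_sub_distrib, lie_sum]

theorem phi_inj (D : X → LieDerivation ℚ (FreeLieAlgebra ℚ X) (FreeLieAlgebra ℚ X))
    (hD : ∀ j i, D j (FreeLieAlgebra.of ℚ i) = if j = i then FreeLieAlgebra.of ℚ i else 0)
    (n : X → ℕ) (hn : n ≠ 0) (x : FreeLieAlgebra ℚ X) (hx : ∀ j, D j x = (n j : ℚ) • x)
    (h : phi x = 0) : x = 0 := by
  obtain ⟨E, hE⟩ := exists_derivation (X := X) (fun i => FreeLieAlgebra.of ℚ i)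
  have h1 := euler_eq_zero E hE x h
  rw [sum_apply D hD E hE] at h1
  simp only [hx] at h1
  rw [← Finset.sum_smul] at h1
  refine (smul_eq_zero.1 h1).resolve_left ?_
  intro h2
  apply hn
  have h3 : ∑ i, n i = 0 := by exact_mod_cast h2
  funext i
  exact (Finset.sum_eq_zero_iff.1 h3) i (Finset.mem_univ i)

theorem phi_supp (D : X → LieDerivation ℚ (FreeLieAlgebra ℚ X) (FreeLieAlgebra ℚ X))
    (hD : ∀ j i, D j (FreeLieAlgebra.of ℚ i) = if j = i then FreeLieAlgebra.of ℚ i else 0)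
    (n : X → ℕ) (x : FreeLieAlgebra ℚ X) (hx : ∀ j, D j x = (n j : ℚ) • x)
    (s : FreeMonoid X) (h : (phi x).coeff s ≠ 0) : s.toList ∈ Wd n := by
  rw [mem_Wd]
  intro j
  have h1 := phi_deriv j (D j) (hD j) x
  rw [hx, map_smul] at h1
  have h2 := congrArg (fun f : TA X => f.coeff s) h1
  simp only [dT_coeff] at h2
  have h3 : (n j : ℚ) * (phi x).coeff s = (s.toList.count j : ℚ) * (phi x).coeff s := h2
  exact_mod_cast (mul_right_cancel₀ h h3).symm

/-- Lyndon words of content `n` -/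
abbrev LW (n : X → ℕ) := {w : List X // w ∈ Wd n ∧ Lyn w}

/-- coefficients at Lyndon words -/
def restr (n : X → ℕ) : FreeLieAlgebra ℚ X →ₗ[ℚ] (LW n → ℚ) where
  toFun x w := (phi x).coeff (FreeMonoid.ofList w.1)
  map_add' x y := by ext w; simp
  map_smul' c x := by ext w; simp

theorem restr_inj (D : X → LieDerivation ℚ (FreeLieAlgebra ℚ X) (FreeLieAlgebra ℚ X))
    (hD : ∀ j i, D j (FreeLieAlgebra.of ℚ i) = if j = i then FreeLieAlgebra.of ℚ i else 0)
    (n : X → ℕ) (hn : n ≠ 0) (x : FreeLieAlgebra ℚ X) (hx : ∀ j, D j x = (n j : ℚ) • x)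
    (h : restr n x = 0) : x = 0 := by
  apply phi_inj D hD n hn x hx
  by_contra hp
  have hne : (phi x).coeff.support.Nonempty := by
    rw [Finsupp.support_nonempty_iff]
    intro hc
    apply hp
    ext s
    rw [hc]; rfl
  obtain ⟨w, hw, hmin⟩ := Finset.exists_min_image _ (fun s : FreeMonoid X => s.toList) hne
  rw [Finsupp.mem_support_iff] at hw
  have hW := phi_supp D hD n x hx w hw
  have hw0 : w.toList ≠ [] := by
    intro h0
    apply hn
    funext j
    have := mem_Wd.1 hW j
    rw [h0] at this
    simpa using this.symm
  have hL : Lyn w.toList := lyn_of_min x w.toList hw0 hw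
    (fun s hs => hmin s (Finsupp.mem_support_iff.2 hs))
  exact hw (congrFun h ⟨w.toList, hW, hL⟩)

theorem finrank_eig (D : X → LieDerivation ℚ (FreeLieAlgebra ℚ X) (FreeLieAlgebra ℚ X))
    (hD : ∀ j i, D j (FreeLieAlgebra.of ℚ i) = if j = i then FreeLieAlgebra.of ℚ i else 0)
    (n : X → ℕ) (hn : n ≠ 0) :
    FiniteDimensional ℚ (⨅ j, Module.End.eigenspace (D j).toLinearMap (n j : ℚ) :
          Submodule ℚ (FreeLieAlgebra ℚ X)) ∧
    Module.finrank ℚ (⨅ j, Module.End.eigenspace (D j).toLinearMap (n j : ℚ) :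
          Submodule ℚ (FreeLieAlgebra ℚ X)) = Nat.card (LW n) := by
  have hmem := mem_eig D n
  generalize (⨅ j, Module.End.eigenspace (D j).toLinearMap (n j : ℚ) :
          Submodule ℚ (FreeLieAlgebra ℚ X)) = V at hmem
  have hfin : Finite (LW n) :=
    Set.Finite.subset (Wd n).finite_toSet (fun w hw => hw.1)
  have := Fintype.ofFinite (LW n)
  have hinj : Function.Injective ((restr n).comp V.subtype) := by
    rw [← LinearMap.ker_eq_bot, LinearMap.ker_eq_bot']
    intro x hx
    exact Subtype.ext (restr_inj D hD n hn x.1 ((hmem _).1 x.2) hx)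
  have hF : FiniteDimensional ℚ V := Module.Finite.of_injective _ hinj
  refine ⟨hF, le_antisymm ?_ ?_⟩
  · have := LinearMap.finrank_le_finrank_of_injective hinj
    rwa [Module.finrank_fintype_fun_eq_card, ← Nat.card_eq_fintype_card] at this
  · have hex : ∀ w : LW n, ∃ x : V, Lead (phi x.1) w.1 := by
      intro w
      obtain ⟨x, hx, hl⟩ := exists_lead D hD _ w.1 rfl w.2.2
      refine ⟨⟨x, (hmem x).2 fun j => ?_⟩, hl⟩
      rw [hx, mem_Wd.1 w.2.1 j]
    choose b hb using hex
    have hli : LinearIndependent ℚ b := by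
      classical
      rw [Fintype.linearIndependent_iff]
      intro c hc
      by_contra! hi
      obtain ⟨i₀, hi₀⟩ := hi
      obtain ⟨i, hi, hmin⟩ := Finset.exists_min_image (Finset.univ.filter fun k => c k ≠ 0)
        (fun k : LW n => k.1) ⟨i₀, by simpa using hi₀⟩
      simp only [Finset.mem_filter, Finset.mem_univ, true_and] at hi hmin
      have h1 : (restr n) ((∑ k, c k • b k : V) : FreeLieAlgebra ℚ X) i = 0 := by
        rw [hc]; simp
      rw [Submodule.coe_sum, map_sum, Finset.sum_apply, Finset.sum_eq_single i] at h1
      · rw [Submodule.coe_smul, map_smul, Pi.smul_apply, smul_eq_mul] at h1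
        have h2 : restr n (b i : FreeLieAlgebra ℚ X) i = 1 := (hb i).1
        rw [h2, mul_one] at h1
        exact hi h1
      · intro k _ hk
        rw [Submodule.coe_smul, map_smul, Pi.smul_apply, smul_eq_mul]
        by_contra hne
        have h3 := hmin k (left_ne_zero_of_mul hne)
        have h4 := ((hb k).2 _ (right_ne_zero_of_mul hne)).2
        exact hk (Subtype.ext (le_antisymm h4 h3))
      · intro h; exact absurd (Finset.mem_univ _) h
    rw [Nat.card_eq_fintype_card]
    exact hli.fintype_card_le_finrank

open Classical in
theorem card_LW (n : X → ℕ) : Nat.card (LW n) = ((Wd n).filter Lyn).card := by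
  rw [Nat.subtype_card]
  intro w
  simp

end Final
end FLWitt

/-- **Multigraded Witt formula for free Lie algebras.** Let `L` be the free Lie algebra over
`ℚ` on `m` generators. There exist unique derivations `D j` with `D j (β i) = δ_{ji} β i`;
and for every nonzero tuple `n : Fin m → ℕ` with `N = ∑ n i` and `g = gcd n`, the
simultaneous eigenspace `⋂ j {x | D j x = n j • x}` is finite dimensional, of dimension
`mult n` satisfying `N * mult n = ∑_{d ∣ g} μ(d) * (N/d)! / ∏ (n i / d)!`. -/
theorem free_lie_witt_formula (m : ℕ) (n : Fin m → ℕ) (hn : n ≠ 0) :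
    (∀ j : Fin m,
      ∃! D : LieDerivation ℚ (FreeLieAlgebra ℚ (Fin m)) (FreeLieAlgebra ℚ (Fin m)),
        ∀ i, D (FreeLieAlgebra.of ℚ i) =
          if j = i then FreeLieAlgebra.of ℚ i else 0) ∧
    (∀ D : Fin m → LieDerivation ℚ (FreeLieAlgebra ℚ (Fin m)) (FreeLieAlgebra ℚ (Fin m)),
      (∀ j i, D j (FreeLieAlgebra.of ℚ i) =
          if j = i then FreeLieAlgebra.of ℚ i else 0) →
      FiniteDimensional ℚ
        (⨅ j, Module.End.eigenspace (D j).toLinearMap (n j : ℚ) :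
          Submodule ℚ (FreeLieAlgebra ℚ (Fin m))) ∧
      ((∑ i, n i : ℕ) : ℤ) *
          (Module.finrank ℚ
            (⨅ j, Module.End.eigenspace (D j).toLinearMap (n j : ℚ) :
              Submodule ℚ (FreeLieAlgebra ℚ (Fin m))) : ℤ) =
        ∑ d ∈ (Finset.univ.gcd n).divisors,
          ArithmeticFunction.moebius d *
            (Nat.multinomial Finset.univ (fun i => n i / d) : ℤ)) := by
  refine ⟨fun j => ?_, fun D hD => ?_⟩
  · obtain ⟨D, hD⟩ := FLWitt.exists_derivation (X := Fin m)
      (fun i => if j = i then FreeLieAlgebra.of ℚ i else 0)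
    refine ⟨D, hD, fun D' hD' => FLWitt.derivation_ext fun i => ?_⟩
    rw [hD, hD']
  · obtain ⟨h1, h2⟩ := FLWitt.finrank_eig D hD n hn
    refine ⟨h1, ?_⟩
    rw [h2, FLWitt.card_LW]
    exact FLWitt.card_lyn n hn
end
end

section
/- Root multiplicities on the diagonal for the simplest rank-2 hyperbolic Kac–Moody algebra: in g(A) with A = [[2,−3],[−3,2]], the multiplicities of the roots (m,m) for m = 1,…,12 are mult(1,1) = 1, mult(2,2) = 1, mult(3,3) = 3, mult(4,4) = 6, mult(5,5) = 16, mult(6,6) = 39, mult(7,7) = 107, mult(8,8) = 288, mult(9,9) = 808, mult(10,10) = 2278, mult(11,11) = 6559, and mult(12,12) = 19022. -/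
noncomputable section

open CartanMatrix

/-- A generalized Cartan matrix: `A i i = 2`, off-diagonal entries are non-positive, and
`A i j = 0 ↔ A j i = 0`. -/
def IsGCM {B : Type*} (A : Matrix B B ℤ) : Prop :=
  (∀ i, A i i = 2) ∧ (∀ i j, i ≠ j → A i j ≤ 0) ∧ (∀ i j, A i j = 0 ↔ A j i = 0)

/-- The images in the Kac–Moody algebra `Matrix.ToLieAlgebra ℚ A` of the generators of the
free Lie algebra. -/
def KMgen {B : Type*} [DecidableEq B] (A : Matrix B B ℤ) (x : Generators B) :
    Matrix.ToLieAlgebra ℚ A :=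
  LieSubmodule.Quotient.mk (N := Relations.toIdeal ℚ A) (FreeLieAlgebra.of ℚ x)

/-- The Cartan generator `h i`. -/
def gH {B : Type*} [DecidableEq B] (A : Matrix B B ℤ) (i : B) : Matrix.ToLieAlgebra ℚ A :=
  KMgen A (Generators.H i)

/-- The raising generator `e i`. -/
def gE {B : Type*} [DecidableEq B] (A : Matrix B B ℤ) (i : B) : Matrix.ToLieAlgebra ℚ A :=
  KMgen A (Generators.E i)

/-- The lowering generator `f i`. -/
def gF {B : Type*} [DecidableEq B] (A : Matrix B B ℤ) (i : B) : Matrix.ToLieAlgebra ℚ A :=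
  KMgen A (Generators.F i)

/-- The root space of `g(A)` attached to `n : B → ℤ`: the simultaneous eigenspace of the
adjoint action of the Cartan generators `h i`, with eigenvalues `∑ j, A i j * n j`. -/
def rootSpace {B : Type*} [Fintype B] [DecidableEq B] (A : Matrix B B ℤ) (n : B → ℤ) :
    Submodule ℚ (Matrix.ToLieAlgebra ℚ A) :=
  ⨅ i, Module.End.eigenspace
    (LieAlgebra.ad ℚ (Matrix.ToLieAlgebra ℚ A) (gH A i)) ((∑ j, A i j * n j : ℤ) : ℚ)

/-- The multiplicity of `n` in `g(A)`: the dimension of the root space. -/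
def rootMult {B : Type*} [Fintype B] [DecidableEq B] (A : Matrix B B ℤ) (n : B → ℤ) : ℕ :=
  Module.finrank ℚ (rootSpace A n)

/-- The Cartan matrix of the simplest rank-2 hyperbolic Kac–Moody algebra. -/
def A2hyp : Matrix (Fin 2) (Fin 2) ℤ := !![2, -3; -3, 2]

section Aux

attribute [local instance] LieRing.ofAssociativeRing

namespace R2

/-- The Serre word `ad(a)^4 b`. -/
def ser {L : Type*} [LieRing L] (a b : L) : L := ⁅a, ⁅a, ⁅a, ⁅a, b⁆⁆⁆⁆

theorem map_ser {L L' : Type*} [LieRing L] [LieAlgebra ℚ L] [LieRing L'] [LieAlgebra ℚ L']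
    (f : L →ₗ⁅ℚ⁆ L') (a b : L) : f (ser a b) = ser (f a) (f b) := by
  simp [ser]

/-- A Lie subalgebra containing the images of the free generators is everything. -/
theorem gen_top {X L : Type*} [LieRing L] [LieAlgebra ℚ L] (f : FreeLieAlgebra ℚ X →ₗ⁅ℚ⁆ L)
    (hf : Function.Surjective f) (S : LieSubalgebra ℚ L)
    (hS : ∀ x, f (FreeLieAlgebra.of ℚ x) ∈ S) (y : L) : y ∈ S := by
  obtain ⟨z, rfl⟩ := hf y
  let F : FreeLieAlgebra ℚ X →ₗ⁅ℚ⁆ S := FreeLieAlgebra.lift ℚ fun x => ⟨_, hS x⟩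
  have : S.incl.comp F = f := FreeLieAlgebra.hom_ext fun x => by
    simp [F, FreeLieAlgebra.lift_of_apply]
  rw [← this]
  exact (F z).2

/-- A subspace containing the generators and stable under bracketing with the generators
is everything. -/
theorem gen_top' {X L : Type*} [LieRing L] [LieAlgebra ℚ L] (f : FreeLieAlgebra ℚ X →ₗ⁅ℚ⁆ L)
    (hf : Function.Surjective f) (S : Submodule ℚ L)
    (hS : ∀ x, f (FreeLieAlgebra.of ℚ x) ∈ S)
    (hb : ∀ x, ∀ y ∈ S, ⁅f (FreeLieAlgebra.of ℚ x), y⁆ ∈ S) (y : L) : y ∈ S := by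
  let Q : LieSubalgebra ℚ L :=
    { carrier := {x | ∀ p ∈ S, ⁅x, p⁆ ∈ S}
      add_mem' := fun {a b} ha hb p hp => by
        rw [add_lie]; exact S.add_mem (ha p hp) (hb p hp)
      zero_mem' := fun p hp => by simp
      smul_mem' := fun c x hx p hp => by
        rw [smul_lie]; exact S.smul_mem c (hx p hp)
      lie_mem' := fun {a b} ha hb p hp => by
        rw [lie_lie]; exact S.sub_mem (ha _ (hb p hp)) (hb _ (ha p hp)) }
  have hQ : ∀ x, x ∈ Q := gen_top f hf Q hb
  let S' : LieSubalgebra ℚ L := { S with lie_mem' := fun {a b} _ hb => hQ a b hb }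
  exact gen_top f hf S' hS y

/-- The ideal generated by the Serre elements in the free Lie algebra on two generators. -/
def serIdeal : LieIdeal ℚ (FreeLieAlgebra ℚ (Fin 2)) :=
  LieSubmodule.lieSpan ℚ _ {ser (FreeLieAlgebra.of ℚ 0) (FreeLieAlgebra.of ℚ 1),
    ser (FreeLieAlgebra.of ℚ 1) (FreeLieAlgebra.of ℚ 0)}

/-- The positive part: free Lie algebra on two generators modulo the Serre relations. -/
def N : Type := FreeLieAlgebra ℚ (Fin 2) ⧸ serIdeal

instance : LieRing N := inferInstanceAs (LieRing (FreeLieAlgebra ℚ (Fin 2) ⧸ serIdeal))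
instance : LieAlgebra ℚ N := inferInstanceAs (LieAlgebra ℚ (FreeLieAlgebra ℚ (Fin 2) ⧸ serIdeal))

/-- Quotient map. -/
def mkN : FreeLieAlgebra ℚ (Fin 2) →ₗ⁅ℚ⁆ N where
  toFun x := LieSubmodule.Quotient.mk (N := serIdeal) x
  map_add' _ _ := rfl
  map_smul' _ _ := rfl
  map_lie' := fun {x y} => LieSubmodule.Quotient.mk_bracket (I := serIdeal) x y

theorem mkN_surj : Function.Surjective mkN := Quot.mk_surjective

theorem mkN_eq_zero {x} (hx : x ∈ serIdeal) : mkN x = 0 :=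
  (LieSubmodule.Quotient.mk_eq_zero' (N := serIdeal)).2 hx

/-- The generators. -/
def e (i : Fin 2) : N := mkN (FreeLieAlgebra.of ℚ i)

theorem ser01 : ser (e 0) (e 1) = 0 := by
  rw [e, e, ← map_ser]
  exact mkN_eq_zero (LieSubmodule.subset_lieSpan (by simp))

theorem ser10 : ser (e 1) (e 0) = 0 := by
  rw [e, e, ← map_ser]
  exact mkN_eq_zero (LieSubmodule.subset_lieSpan (by simp))

/-- Universal property. -/
theorem exists_lift {L : Type*} [LieRing L] [LieAlgebra ℚ L] (a : Fin 2 → L)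
    (h0 : ser (a 0) (a 1) = 0) (h1 : ser (a 1) (a 0) = 0) :
    ∃ f : N →ₗ⁅ℚ⁆ L, ∀ i, f (e i) = a i := by
  let F := FreeLieAlgebra.lift ℚ a
  have hF : ∀ i, F (FreeLieAlgebra.of ℚ i) = a i := fun i => FreeLieAlgebra.lift_of_apply _ _
  have hle : serIdeal ≤ F.ker := by
    refine LieSubmodule.lieSpan_le.2 ?_
    rintro x (rfl | rfl)
    · simp [map_ser, hF, h0]
    · simp [map_ser, hF, h1]
  let G : N →ₗ[ℚ] L := Submodule.liftQ serIdeal.toSubmodule F.toLinearMap (fun x hx => by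
    have := hle hx
    simpa using this)
  have hG : ∀ x, G (mkN x) = F x := fun x => rfl
  refine ⟨{ G with map_lie' := fun {x y} => ?_ }, fun i => ?_⟩
  · obtain ⟨x, rfl⟩ := mkN_surj x
    obtain ⟨y, rfl⟩ := mkN_surj y
    change G ⁅mkN x, mkN y⁆ = ⁅G (mkN x), G (mkN y)⁆
    rw [← LieHom.map_lie, hG, hG, hG, LieHom.map_lie]
  · exact hF i

theorem N_top (S : LieSubalgebra ℚ N) (hS : ∀ i, e i ∈ S) (y : N) : y ∈ S :=
  gen_top mkN mkN_surj S hS y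

theorem N_top' (S : Submodule ℚ N) (hS : ∀ i, e i ∈ S)
    (hb : ∀ i, ∀ y ∈ S, ⁅e i, y⁆ ∈ S) (y : N) : y ∈ S :=
  gen_top' mkN mkN_surj S hS hb y

/-! ### Twisted extensions and twisted derivations -/

/-- Data for a twisted extension of `L` by `M`. -/
structure TwData (L M : Type*) [LieRing L] [LieAlgebra ℚ L] [AddCommGroup M] [Module ℚ M] where
  ρ : L →ₗ[ℚ] M →ₗ[ℚ] M
  c : L →ₗ[ℚ] L →ₗ[ℚ] M
  hρ : ∀ x y m, ρ ⁅x, y⁆ m = ρ x (ρ y m) - ρ y (ρ x m)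
  c_self : ∀ x, c x x = 0
  coc : ∀ x y z, ρ x (c y z) + c x ⁅y, z⁆ =
    - ρ z (c x y) + c ⁅x, y⁆ z + ρ y (c x z) + c y ⁅x, z⁆

section
variable {L M : Type*} [LieRing L] [LieAlgebra ℚ L] [AddCommGroup M] [Module ℚ M]

/-- The twisted extension. -/
def TE (_t : TwData L M) : Type _ := L × M

instance (t : TwData L M) : AddCommGroup (TE t) := inferInstanceAs (AddCommGroup (L × M))
instance (t : TwData L M) : Module ℚ (TE t) := inferInstanceAs (Module ℚ (L × M))
instance (t : TwData L M) : Bracket (TE t) (TE t) :=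
  ⟨fun p q => (⁅p.1, q.1⁆, t.ρ p.1 q.2 - t.ρ q.1 p.2 + t.c p.1 q.1)⟩

/-- Constructor. -/
def TE.mk (t : TwData L M) (x : L) (m : M) : TE t := (x, m)
theorem TE.fst_mk (t : TwData L M) (x : L) (m : M) : (TE.mk t x m).1 = x := rfl
theorem TE.snd_mk (t : TwData L M) (x : L) (m : M) : (TE.mk t x m).2 = m := rfl

theorem TE.lie_def (t : TwData L M) (p q : TE t) :
    ⁅p, q⁆ = ((⁅p.1, q.1⁆, t.ρ p.1 q.2 - t.ρ q.1 p.2 + t.c p.1 q.1) : L × M) := rfl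
theorem TE.fst_add (t : TwData L M) (p q : TE t) : (p + q).1 = p.1 + q.1 := rfl
theorem TE.snd_add (t : TwData L M) (p q : TE t) : (p + q).2 = p.2 + q.2 := rfl
theorem TE.fst_smul (t : TwData L M) (a : ℚ) (q : TE t) : (a • q).1 = a • q.1 := rfl
theorem TE.snd_smul (t : TwData L M) (a : ℚ) (q : TE t) : (a • q).2 = a • q.2 := rfl
theorem TE.fst_lie (t : TwData L M) (p q : TE t) : (⁅p, q⁆ : TE t).1 = ⁅p.1, q.1⁆ := rfl
theorem TE.snd_lie (t : TwData L M) (p q : TE t) :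
    (⁅p, q⁆ : TE t).2 = t.ρ p.1 q.2 - t.ρ q.1 p.2 + t.c p.1 q.1 := rfl
theorem TE.ext' (t : TwData L M) {p q : TE t} (h1 : p.1 = q.1) (h2 : p.2 = q.2) : p = q :=
  Prod.ext h1 h2

instance (t : TwData L M) : LieRing (TE t) where
  add_lie p q r := by
    apply TE.ext'
    · simp [TE.fst_lie, TE.fst_add]
    · simp only [TE.snd_lie, TE.fst_add, TE.snd_add, map_add, LinearMap.add_apply]; abel
  lie_add p q r := by
    apply TE.ext'
    · simp [TE.fst_lie, TE.fst_add]
    · simp only [TE.snd_lie, TE.fst_add, TE.snd_add, map_add, LinearMap.add_apply]; abel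
  lie_self p := by
    apply TE.ext'
    · simp only [TE.fst_lie, lie_self]; rfl
    · simp only [TE.snd_lie, sub_self, t.c_self, add_zero]; rfl
  leibniz_lie p q r := by
    apply TE.ext'
    · simp only [TE.fst_lie, TE.fst_add]; exact leibniz_lie _ _ _
    · have := t.coc p.1 q.1 r.1
      simp only [TE.snd_lie, TE.fst_lie, TE.snd_add, map_add, map_sub, t.hρ]
      rw [← sub_eq_zero] at this ⊢
      rw [← this]; abel

instance (t : TwData L M) : LieAlgebra ℚ (TE t) where
  lie_smul a p q := by
    apply TE.ext'
    · simp [TE.fst_lie, TE.fst_smul]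
    · simp only [TE.snd_lie, TE.fst_smul, TE.snd_smul, map_smul, LinearMap.smul_apply, smul_sub,
        smul_add]

end

theorem exists_twisted {M : Type*} [AddCommGroup M] [Module ℚ M] (t : TwData N M)
    (m : Fin 2 → M)
    (h0 : (ser (TE.mk t (e 0) (m 0)) (TE.mk t (e 1) (m 1))).2 = 0)
    (h1 : (ser (TE.mk t (e 1) (m 1)) (TE.mk t (e 0) (m 0))).2 = 0) :
    ∃ δ : N →ₗ[ℚ] M, (∀ i, δ (e i) = m i) ∧
      ∀ x y, δ ⁅x, y⁆ = t.ρ x (δ y) - t.ρ y (δ x) + t.c x y := by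
  obtain ⟨F, hF⟩ := exists_lift (L := TE t) (fun i => TE.mk t (e i) (m i))
    (TE.ext' t ser01 h0) (TE.ext' t ser10 h1)
  have hfst : ∀ x, (F x).1 = x := by
    let S : LieSubalgebra ℚ N :=
      { carrier := {x | (F x).1 = x}
        add_mem' := fun {a b} ha hb => by
          have ha : (F a).1 = a := ha
          have hb : (F b).1 = b := hb
          simp [TE.fst_add, ha, hb]
        zero_mem' := by
          change (F 0).1 = 0
          rw [map_zero]; rfl
        smul_mem' := fun c x hx => by
          have hx : (F x).1 = x := hx
          simp [TE.fst_smul, hx]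
        lie_mem' := fun {a b} ha hb => by
          have ha : (F a).1 = a := ha
          have hb : (F b).1 = b := hb
          change (F ⁅a, b⁆).1 = ⁅a, b⁆
          rw [LieHom.map_lie, TE.fst_lie, ha, hb] }
    exact N_top S fun i => by
      change (F (e i)).1 = e i
      rw [hF]; rfl
  refine ⟨{ toFun := fun x => (F x).2
            map_add' := fun x y => by rw [map_add]; rfl
            map_smul' := fun x y => by rw [map_smul]; rfl }, fun i => ?_, fun x y => ?_⟩
  · change (F (e i)).2 = _
    rw [hF]; rfl
  · change (F ⁅x, y⁆).2 = _
    rw [LieHom.map_lie, TE.snd_lie, hfst, hfst]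
    rfl

/-! ### Degree derivations -/

/-- The adjoint data. -/
def adData : TwData N N where
  ρ := (LieAlgebra.ad ℚ N).toLinearMap
  c := 0
  hρ x y m := by simp
  c_self x := by simp
  coc x y z := by simp

theorem adData_ρ (x y : N) : adData.ρ x y = ⁅x, y⁆ := rfl
theorem adData_c (x y : N) : adData.c x y = 0 := rfl

theorem ad_ser (a b : N) (s t : ℚ) :
    (ser (TE.mk adData a (s • a)) (TE.mk adData b (t • b))).2 = (4 * s + t) • ser a b := by
  simp only [ser, TE.snd_lie, TE.fst_lie, TE.snd_mk, TE.fst_mk, adData_ρ, adData_c, add_zero,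
    lie_sub, lie_smul]
  simp only [← lie_skew b a, ← lie_skew _ a, lie_neg, lie_sub, lie_smul]
  module

theorem exists_D (i : Fin 2) : ∃ D : N →ₗ[ℚ] N, (∀ j, D (e j) = if j = i then e j else 0) ∧
    ∀ x y, D ⁅x, y⁆ = ⁅D x, y⁆ + ⁅x, D y⁆ := by
  obtain ⟨D, h1, h2⟩ := exists_twisted adData (fun j => (if j = i then (1 : ℚ) else 0) • e j)
    (by rw [ad_ser, ser01, smul_zero]) (by rw [ad_ser, ser10, smul_zero])
  refine ⟨D, fun j => ?_, fun x y => ?_⟩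
  · rw [h1]; split_ifs <;> simp
  rw [h2, adData_ρ, adData_ρ, adData_c, ← lie_skew y (D x)]; abel

/-- The degree derivation. -/
def D (i : Fin 2) : N →ₗ[ℚ] N := (exists_D i).choose
theorem D_e (i j : Fin 2) : D i (e j) = if j = i then e j else 0 := (exists_D i).choose_spec.1 j
theorem D_lie (i : Fin 2) (x y : N) : D i ⁅x, y⁆ = ⁅D i x, y⁆ + ⁅x, D i y⁆ :=
  (exists_D i).choose_spec.2 x y

end R2

namespace R2

/-! ### Operators on the exterior algebra -/

section
variable {V : Type*} [AddCommGroup V] [Module ℚ V]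

theorem ext_ind {P : ExteriorAlgebra ℚ V → Prop} (h0 : ∀ r : ℚ, P (algebraMap _ _ r))
    (ha : ∀ x y, P x → P y → P (x + y))
    (hm : ∀ v w, P w → P (ExteriorAlgebra.ι ℚ v * w)) (w) : P w :=
  CliffordAlgebra.left_induction (Q := (0 : QuadraticForm ℚ V)) h0 ha (fun x m h => hm m x h) w

theorem exists_fold (a : V →ₗ[ℚ] ExteriorAlgebra ℚ V →ₗ[ℚ] ExteriorAlgebra ℚ V) (s : ℚ)
    (ha : ∀ x w, a x (ExteriorAlgebra.ι ℚ x * w) + s • (ExteriorAlgebra.ι ℚ x * a x w) = 0) :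
    ∃ T : ExteriorAlgebra ℚ V →ₗ[ℚ] ExteriorAlgebra ℚ V, (∀ r : ℚ, T (algebraMap _ _ r) = 0) ∧
      ∀ x w, T (ExteriorAlgebra.ι ℚ x * w) = a x w + s • (ExteriorAlgebra.ι ℚ x * T w) := by
  let m : V →ₗ[ℚ] ExteriorAlgebra ℚ V →ₗ[ℚ] ExteriorAlgebra ℚ V :=
    (LinearMap.mul ℚ (ExteriorAlgebra ℚ V)).comp (ExteriorAlgebra.ι ℚ)
  let f : V →ₗ[ℚ] (ExteriorAlgebra ℚ V × ExteriorAlgebra ℚ V) →ₗ[ℚ] ExteriorAlgebra ℚ V :=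
    a.compl₂ (LinearMap.fst ℚ _ _) + s • m.compl₂ (LinearMap.snd ℚ _ _)
  have hfd : ∀ x p, f x p = a x p.1 + s • (ExteriorAlgebra.ι ℚ x * p.2) := fun x p => rfl
  have hf : ∀ x w fx, f x (ExteriorAlgebra.ι ℚ x * w, f x (w, fx)) =
      (0 : QuadraticForm ℚ V) x • fx := by
    intro x w fx
    simp only [hfd, zero_apply, zero_smul]
    rw [mul_add, smul_add, ← add_assoc, ha, zero_add, mul_smul_comm, ← mul_assoc,
      ExteriorAlgebra.ι_sq_zero]
    simp
  refine ⟨CliffordAlgebra.foldr' (0 : QuadraticForm ℚ V) f hf 0, fun r => ?_, fun x w => ?_⟩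
  · exact (CliffordAlgebra.foldr'_algebraMap _ _ hf _ _).trans (smul_zero r)
  · exact CliffordAlgebra.foldr'_ι_mul _ _ hf _ _ _

end

/-- The exterior algebra of the positive part. -/
abbrev Lam : Type := ExteriorAlgebra ℚ N
/-- Inclusion of the positive part. -/
abbrev io : N →ₗ[ℚ] Lam := ExteriorAlgebra.ι ℚ

theorem io_swap (x y : N) : io x * io y = - (io y * io x) :=
  eq_neg_of_add_eq_zero_left (ExteriorAlgebra.ι_add_mul_swap x y)
theorem io_swap' (x y : N) (w : Lam) : io x * (io y * w) = - (io y * (io x * w)) := by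
  rw [← mul_assoc, io_swap, neg_mul, mul_assoc]
theorem io_sq (x : N) : io x * io x = 0 := ExteriorAlgebra.ι_sq_zero x

theorem exists_der (f : N →ₗ[ℚ] N) : ∃ T : Lam →ₗ[ℚ] Lam, (∀ r : ℚ, T (algebraMap _ _ r) = 0) ∧
    ∀ x w, T (io x * w) = io (f x) * w + io x * T w := by
  obtain ⟨T, h1, h2⟩ := exists_fold (((LinearMap.mul ℚ Lam).comp io).comp f) 1 (fun x w => by
    change io (f x) * (io x * w) + (1 : ℚ) • (io x * (io (f x) * w)) = 0
    rw [io_swap' (f x) x, one_smul, neg_add_cancel])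
  exact ⟨T, h1, fun x w => (h2 x w).trans (by rw [one_smul]; rfl)⟩

/-- Derivation extending a linear endomorphism. -/
def der (f : N →ₗ[ℚ] N) : Lam →ₗ[ℚ] Lam := (exists_der f).choose
theorem der_alg (f r) : der f (algebraMap ℚ Lam r) = 0 := (exists_der f).choose_spec.1 r
theorem der_mul (f x w) : der f (io x * w) = io (f x) * w + io x * der f w :=
  (exists_der f).choose_spec.2 x w
theorem der_one (f) : der f 1 = 0 := by simpa using der_alg f 1
theorem der_io (f x) : der f (io x) = io (f x) := by
  have := der_mul f x 1
  rwa [der_one, mul_one, mul_one, mul_zero, add_zero] at this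

theorem der_mul' (f u w) : der f (u * w) = der f u * w + u * der f w := by
  induction u using ext_ind with
  | h0 r => rw [der_alg, zero_mul, zero_add, ← Algebra.smul_def, ← Algebra.smul_def, map_smul]
  | ha x y hx hy => rw [add_mul, map_add, hx, hy, map_add]; noncomm_ring
  | hm v u ih => rw [mul_assoc, der_mul, ih, der_mul]; noncomm_ring

theorem der_ext {T T' : Lam →ₗ[ℚ] Lam} (f : N →ₗ[ℚ] N) (h0 : ∀ r, T (algebraMap ℚ Lam r) = 0)
    (hm : ∀ x w, T (io x * w) = io (f x) * w + io x * T w)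
    (h0' : ∀ r, T' (algebraMap ℚ Lam r) = 0)
    (hm' : ∀ x w, T' (io x * w) = io (f x) * w + io x * T' w) : T = T' := by
  refine LinearMap.ext fun w => ?_
  induction w using ext_ind with
  | h0 r => rw [h0, h0']
  | ha x y hx hy => rw [map_add, hx, hy, map_add]
  | hm v u ih => rw [hm, hm', ih]

/-- `der` as a linear map. -/
def derL : (N →ₗ[ℚ] N) →ₗ[ℚ] Lam →ₗ[ℚ] Lam where
  toFun := der
  map_add' f g := der_ext (f + g) (der_alg _) (der_mul _)
    (fun r => by simp [der_alg]) (fun x w => by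
      simp only [LinearMap.add_apply, der_mul, map_add]; noncomm_ring)
  map_smul' a f := der_ext (a • f) (der_alg _) (der_mul _)
    (fun r => by simp [der_alg]) (fun x w => by
      simp only [LinearMap.smul_apply, der_mul, map_smul, RingHom.id_apply, smul_add,
        smul_mul_assoc, mul_smul_comm])

theorem der_comm (f g : N →ₗ[ℚ] N) (w) :
    der (f ∘ₗ g - g ∘ₗ f) w = der f (der g w) - der g (der f w) := by
  have : der (f ∘ₗ g - g ∘ₗ f) = der f ∘ₗ der g - der g ∘ₗ der f :=
    der_ext (f ∘ₗ g - g ∘ₗ f) (der_alg _) (der_mul _) (fun r => by simp [der_alg])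
      (fun x w => by
        simp only [LinearMap.sub_apply, LinearMap.comp_apply, der_mul, map_add, map_sub]
        noncomm_ring)
  rw [this]; rfl

/-- Extension of the adjoint action. -/
def Lx : N →ₗ[ℚ] Lam →ₗ[ℚ] Lam := derL ∘ₗ (LieAlgebra.ad ℚ N).toLinearMap

theorem Lx_alg (x r) : Lx x (algebraMap ℚ Lam r) = 0 := der_alg _ r
theorem Lx_one (x) : Lx x 1 = 0 := der_one _
theorem Lx_mul (x y w) : Lx x (io y * w) = io ⁅x, y⁆ * w + io y * Lx x w := der_mul _ y w
theorem Lx_io (x y) : Lx x (io y) = io ⁅x, y⁆ := der_io _ y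
theorem Lx_mul' (x u w) : Lx x (u * w) = Lx x u * w + u * Lx x w := der_mul' _ u w

theorem Lx_lie (x y w) : Lx ⁅x, y⁆ w = Lx x (Lx y w) - Lx y (Lx x w) := by
  have := der_comm (LieAlgebra.ad ℚ N x) (LieAlgebra.ad ℚ N y) w
  have h : LieAlgebra.ad ℚ N ⁅x, y⁆ = LieAlgebra.ad ℚ N x ∘ₗ LieAlgebra.ad ℚ N y -
    LieAlgebra.ad ℚ N y ∘ₗ LieAlgebra.ad ℚ N x := by
    ext z; simp
  rw [← h] at this
  exact this

theorem exists_d : ∃ T : Lam →ₗ[ℚ] Lam, (∀ r : ℚ, T (algebraMap _ _ r) = 0) ∧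
    ∀ x w, T (io x * w) = Lx x w - io x * T w := by
  obtain ⟨T, h1, h2⟩ := exists_fold Lx (-1) (fun x w => by
    rw [Lx_mul, lie_self, map_zero, zero_mul]; module)
  exact ⟨T, h1, fun x w => (h2 x w).trans (by module)⟩

/-- The Chevalley–Eilenberg differential. -/
def dd : Lam →ₗ[ℚ] Lam := exists_d.choose
theorem dd_alg (r) : dd (algebraMap ℚ Lam r) = 0 := exists_d.choose_spec.1 r
theorem dd_mul (x w) : dd (io x * w) = Lx x w - io x * dd w := exists_d.choose_spec.2 x w
theorem dd_one : dd 1 = 0 := by simpa using dd_alg 1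
theorem dd_io (x) : dd (io x) = 0 := by
  have := dd_mul x 1
  rwa [dd_one, mul_one, Lx_one, mul_zero, sub_zero] at this

theorem dd_Lx (x w) : dd (Lx x w) = Lx x (dd w) := by
  induction w using ext_ind with
  | h0 r => rw [dd_alg, Lx_alg, map_zero, map_zero]
  | ha u v hu hv => simp only [map_add, hu, hv]
  | hm v w ih => rw [Lx_mul, dd_mul, map_sub, map_add, dd_mul, dd_mul, ih, Lx_mul, Lx_lie]; abel

/-! ### The cocycle -/

/-- `ι(D_i x) ι(D_j y)`. -/
def qq (i j : Fin 2) : N →ₗ[ℚ] N →ₗ[ℚ] Lam :=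
  (LinearMap.mul ℚ Lam).compl₁₂ (io ∘ₗ D i) (io ∘ₗ D j)
theorem qq_apply (i j x y) : qq i j x y = io (D i x) * io (D j y) := rfl

/-- The cocycle. -/
def cc : N →ₗ[ℚ] N →ₗ[ℚ] Lam :=
  (2 : ℚ) • qq 0 0 - (3 : ℚ) • (qq 0 1 + qq 1 0) + (2 : ℚ) • qq 1 1
theorem cc_apply (x y) : cc x y = (2 : ℚ) • (io (D 0 x) * io (D 0 y))
    - (3 : ℚ) • (io (D 0 x) * io (D 1 y) + io (D 1 x) * io (D 0 y))
    + (2 : ℚ) • (io (D 1 x) * io (D 1 y)) := rfl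

theorem qq_coc (i j x y z) :
    Lx x (qq i j y z) + qq i j x ⁅y, z⁆ + Lx z (qq i j x y) - qq i j ⁅x, y⁆ z - Lx y (qq i j x z)
      - qq i j y ⁅x, z⁆ = io (D j y) * io ⁅D i x, z⁆ - io (D i y) * io ⁅D j x, z⁆ := by
  simp only [qq_apply, Lx_mul, Lx_io, D_lie, map_add]
  rw [← lie_skew z (D j y), ← lie_skew y (D i x), ← lie_skew z (D i x), map_neg, map_neg, map_neg,
    neg_mul, io_swap ⁅D i x, z⁆ (D j y)]
  noncomm_ring

theorem cc_coc (x y z) : Lx x (cc y z) + cc x ⁅y, z⁆ =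
    - Lx z (cc x y) + cc ⁅x, y⁆ z + Lx y (cc x z) + cc y ⁅x, z⁆ := by
  have h00 := qq_coc 0 0 x y z
  have h11 := qq_coc 1 1 x y z
  have h01 := qq_coc 0 1 x y z
  have h10 := qq_coc 1 0 x y z
  simp only [cc, LinearMap.add_apply, LinearMap.sub_apply, LinearMap.smul_apply, map_add, map_sub,
    map_smul]
  linear_combination (norm := module) (2 : ℚ) • h00 + (2 : ℚ) • h11 - (3 : ℚ) • h01
    - (3 : ℚ) • h10

/-- The data for the codifferential. -/
def ccData : TwData N Lam where
  ρ := Lx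
  c := cc
  hρ := Lx_lie
  c_self x := by
    rw [cc_apply, io_sq, io_sq, io_swap (D 0 x) (D 1 x)]; simp
  coc := cc_coc

theorem ccData_ρ (x w) : ccData.ρ x w = Lx x w := rfl
theorem ccData_c (x y) : ccData.c x y = cc x y := rfl

theorem exists_del : ∃ δ : N →ₗ[ℚ] Lam, (∀ i, δ (e i) = 0) ∧
      ∀ x y, δ ⁅x, y⁆ = Lx x (δ y) - Lx y (δ x) + cc x y := by
  obtain ⟨δ, h1, h2⟩ := exists_twisted ccData (fun _ => 0)
    (by
      simp [ser, TE.snd_lie, TE.fst_lie, TE.snd_mk, TE.fst_mk, ccData_ρ, ccData_c, cc_apply,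
        Lx_mul, Lx_io, D_lie, D_e]
      simp only [mul_add]
      module)
    (by
      simp [ser, TE.snd_lie, TE.fst_lie, TE.snd_mk, TE.fst_mk, ccData_ρ, ccData_c, cc_apply,
        Lx_mul, Lx_io, D_lie, D_e]
      simp only [mul_add]
      module)
  exact ⟨δ, h1, h2⟩

/-- The codifferential on the positive part. -/
def del : N →ₗ[ℚ] Lam := exists_del.choose
theorem del_e (i) : del (e i) = 0 := exists_del.choose_spec.1 i
theorem del_lie (x y) : del ⁅x, y⁆ = Lx x (del y) - Lx y (del x) + cc x y :=
  exists_del.choose_spec.2 x y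

/-- Degree two part. -/
def Lam2 : Submodule ℚ Lam := Submodule.span ℚ {u | ∃ y z, u = io y * io z}
theorem mem_Lam2 (y z) : io y * io z ∈ Lam2 := Submodule.subset_span ⟨y, z, rfl⟩

theorem Lx_Lam2 (x) {u} (hu : u ∈ Lam2) : Lx x u ∈ Lam2 := by
  induction hu using Submodule.span_induction with
  | mem u hu =>
    obtain ⟨y, z, rfl⟩ := hu
    rw [Lx_mul, Lx_io]; exact add_mem (mem_Lam2 _ _) (mem_Lam2 _ _)
  | zero => simp
  | add a b _ _ ha hb => rw [map_add]; exact add_mem ha hb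
  | smul a b _ hb => rw [map_smul]; exact Submodule.smul_mem _ _ hb

theorem cc_Lam2 (x y) : cc x y ∈ Lam2 := by
  rw [cc_apply]
  exact add_mem (sub_mem (Submodule.smul_mem _ _ (mem_Lam2 _ _))
    (Submodule.smul_mem _ _ (add_mem (mem_Lam2 _ _) (mem_Lam2 _ _))))
    (Submodule.smul_mem _ _ (mem_Lam2 _ _))

theorem del_Lam2 (x) : del x ∈ Lam2 := by
  refine N_top' (Lam2.comap del) (fun i => ?_) (fun i y hy => ?_) x
  · rw [Submodule.mem_comap, del_e]; exact zero_mem _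
  · rw [Submodule.mem_comap, del_lie, del_e, map_zero, sub_zero]
    exact add_mem (Lx_Lam2 _ hy) (cc_Lam2 _ _)

theorem Lam2_comm (x) {u} (hu : u ∈ Lam2) (w) : u * (io x * w) = io x * (u * w) := by
  induction hu using Submodule.span_induction with
  | mem u hu =>
    obtain ⟨y, z, rfl⟩ := hu
    rw [mul_assoc, mul_assoc, io_swap' z x, mul_neg, io_swap' y x, neg_neg]
  | zero => simp
  | add a b _ _ ha hb => rw [add_mul, ha, hb]; noncomm_ring
  | smul a b _ hb => rw [smul_mul_assoc, smul_mul_assoc, hb, mul_smul_comm]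

theorem exists_dl : ∃ T : Lam →ₗ[ℚ] Lam, (∀ r : ℚ, T (algebraMap _ _ r) = 0) ∧
    ∀ x w, T (io x * w) = del x * w - io x * T w := by
  obtain ⟨T, h1, h2⟩ := exists_fold ((LinearMap.mul ℚ Lam).comp del) (-1) (fun x w => by
    change del x * (io x * w) + (-1 : ℚ) • (io x * (del x * w)) = 0
    rw [Lam2_comm x (del_Lam2 x)]; module)
  exact ⟨T, h1, fun x w => (h2 x w).trans (by
    change del x * w + (-1 : ℚ) • (io x * T w) = _
    module)⟩

/-- The codifferential. -/
def dl : Lam →ₗ[ℚ] Lam := exists_dl.choose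
theorem dl_alg (r) : dl (algebraMap ℚ Lam r) = 0 := exists_dl.choose_spec.1 r
theorem dl_mul (x w) : dl (io x * w) = del x * w - io x * dl w := exists_dl.choose_spec.2 x w

/-! ### The Laplacian -/

theorem theta {u} (hu : u ∈ Lam2) (v w) :
    dd (u * (io v * w)) - dd u * (io v * w) - u * dd (io v * w) =
      Lx v u * w - io v * (dd (u * w) - dd u * w - u * dd w) := by
  induction hu using Submodule.span_induction with
  | mem u hu =>
    obtain ⟨y, z, rfl⟩ := hu
    simp only [mul_assoc, dd_mul, Lx_mul, Lx_io, dd_io, mul_zero, sub_zero, add_mul, mul_sub,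
      mul_add, sub_mul]
    rw [← lie_skew v y, ← lie_skew v z, map_neg, map_neg, neg_mul, neg_mul, mul_neg,
      io_swap' v z, io_swap' v y, io_swap' v ⁅y, z⁆, io_swap' v y, io_swap' v z,
      io_swap' ⁅y, v⁆ z]
    abel
  | zero => simp
  | add a b _ _ ha hb =>
    simp only [add_mul, map_add, mul_add, mul_sub] at *
    linear_combination (norm := abel) ha + hb
  | smul a b _ hb =>
    simp only [smul_mul_assoc, map_smul, mul_smul_comm, ← smul_sub]
    rw [hb]

/-- The error term. -/
theorem Ex_rec (x v w) :
    dd (del x * (io v * w)) - dd (del x) * (io v * w) - del x * dd (io v * w)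
      + (dl (Lx x (io v * w)) - Lx x (dl (io v * w))) = cc x v * w - io v * (
      dd (del x * w) - dd (del x) * w - del x * dd w
      + (dl (Lx x w) - Lx x (dl w))) := by
  rw [theta (del_Lam2 x), Lx_mul, dl_mul, map_add, dl_mul, dl_mul, map_sub, Lx_mul', Lx_mul, del_lie]
  noncomm_ring

/-- `∑ A_ij ι(D_i x) D̂_j w`. -/
def YY (x : N) (w : Lam) : Lam := (2 : ℚ) • (io (D 0 x) * der (D 0) w)
  - (3 : ℚ) • (io (D 0 x) * der (D 1) w + io (D 1 x) * der (D 0) w)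
  + (2 : ℚ) • (io (D 1 x) * der (D 1) w)

theorem Ex_eq (x w) :
    dd (del x * w) - dd (del x) * w - del x * dd w + (dl (Lx x w) - Lx x (dl w)) = YY x w := by
  induction w using ext_ind with
  | h0 r =>
    rw [YY, der_alg, der_alg, dd_alg, Lx_alg, dl_alg, map_zero, map_zero, ← Algebra.commutes,
      ← Algebra.commutes r (dd _), ← Algebra.smul_def, ← Algebra.smul_def, map_smul]
    simp
  | ha a b ha hb =>
    simp only [YY, mul_add, map_add, smul_add] at *
    linear_combination (norm := abel) ha + hb
  | hm v w ih =>
    rw [Ex_rec, ih, cc_apply]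
    simp only [YY, der_mul, mul_add, mul_sub, add_mul, sub_mul, smul_mul_assoc, mul_smul_comm,
      mul_assoc]
    rw [io_swap' v (D 0 x), io_swap' v (D 0 x), io_swap' v (D 1 x), io_swap' v (D 1 x)]
    module

/-- The scalar operator on the positive part. -/
def SN : N →ₗ[ℚ] N := D 0 ∘ₗ D 0 + D 1 ∘ₗ D 1 - (3 / 2 : ℚ) • (D 0 ∘ₗ D 1 + D 1 ∘ₗ D 0) - D 0 - D 1
/-- The scalar operator. -/
def SL : Lam →ₗ[ℚ] Lam := der (D 0) ∘ₗ der (D 0) + der (D 1) ∘ₗ der (D 1)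
  - (3 / 2 : ℚ) • (der (D 0) ∘ₗ der (D 1) + der (D 1) ∘ₗ der (D 0)) - der (D 0) - der (D 1)

theorem SN_apply (x) : SN x = D 0 (D 0 x) + D 1 (D 1 x)
  - (3 / 2 : ℚ) • (D 0 (D 1 x) + D 1 (D 0 x)) - D 0 x - D 1 x := rfl
theorem SL_apply (x) : SL x = der (D 0) (der (D 0) x) + der (D 1) (der (D 1) x)
  - (3 / 2 : ℚ) • (der (D 0) (der (D 1) x) + der (D 1) (der (D 0) x)) - der (D 0) x - der (D 1) x :=
  rfl

theorem dd_cc (x y) : dd (cc x y) = io ((2 : ℚ) • ⁅D 0 x, D 0 y⁆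
    - (3 : ℚ) • (⁅D 0 x, D 1 y⁆ + ⁅D 1 x, D 0 y⁆) + (2 : ℚ) • ⁅D 1 x, D 1 y⁆) := by
  simp only [cc_apply, map_add, map_sub, map_smul, dd_mul, dd_io, Lx_io, mul_zero, sub_zero]

theorem dd_del (x) : dd (del x) = io (SN x) := by
  let S : LieSubalgebra ℚ N :=
    { LinearMap.eqLocus (dd ∘ₗ del) (io ∘ₗ SN) with
      lie_mem' := fun {a b} ha hb => by
        have ha : dd (del a) = io (SN a) := ha
        have hb : dd (del b) = io (SN b) := hb
        change dd (del ⁅a, b⁆) = io (SN ⁅a, b⁆)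
        rw [del_lie, map_add, map_sub, dd_Lx, dd_Lx, ha, hb, Lx_io, Lx_io, dd_cc, ← map_sub,
          ← map_add, ← lie_skew b (SN a)]
        congr 1
        simp only [SN_apply, D_lie, map_add, lie_add, add_lie, lie_sub, sub_lie, lie_smul,
          smul_lie]
        module }
  refine N_top S (fun i => ?_) x
  change dd (del (e i)) = io (SN (e i))
  rw [del_e, map_zero, SN_apply]
  fin_cases i <;> simp [D_e]

theorem laplace (w) : dd (dl w) + dl (dd w) = SL w := by
  induction w using ext_ind with
  | h0 r => simp [SL_apply, dd_alg, dl_alg, der_alg]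
  | ha a b ha hb => simp only [map_add]; rw [← ha, ← hb]; abel
  | hm x w ih =>
    have h := Ex_eq x w
    have h1 : SL (io x * w) = io (SN x) * w + io x * SL w + YY x w := by
      simp only [SL_apply, SN_apply, YY, der_mul, map_add, map_sub, map_smul, mul_add, add_mul,
        mul_sub, sub_mul, smul_mul_assoc, mul_smul_comm]
      module
    rw [h1, ← ih, ← h, dl_mul, dd_mul, map_sub, map_sub, dd_mul, dl_mul, dd_del]
    noncomm_ring

end R2

namespace R2

/-! ### Joint eigenspaces -/

section
variable {V : Type*} [AddCommGroup V] [Module ℚ V]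

/-- Joint eigenspace of two operators. -/
def JE (f : Fin 2 → Module.End ℚ V) (χ : Fin 2 → ℚ) : Submodule ℚ V :=
  ⨅ i, Module.End.eigenspace (f i) (χ i)

theorem mem_JE {f : Fin 2 → Module.End ℚ V} {χ : Fin 2 → ℚ} {x : V} :
    x ∈ JE f χ ↔ ∀ i, f i x = χ i • x := by
  simp [JE]

theorem JE_indep (f : Fin 2 → Module.End ℚ V) (hf : ∀ i j, Commute (f i) (f j)) :
    iSupIndep (JE f) := by
  refine (Module.End.independent_iInf_maxGenEigenspace_of_forall_mapsTo f
    (fun i j φ => Module.End.mapsTo_maxGenEigenspace_of_comm (hf j i) φ)).mono ?_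
  intro χ
  refine iInf_mono fun i => ?_
  exact Module.End.genEigenspace_le_maximal (f i) (χ i) 1

theorem indep_eq {ι : Type*} {H U : ι → Submodule ℚ V} (hH : iSupIndep H) (hU : ∀ i, U i ≤ H i)
    (ht : ⨆ i, U i = ⊤) (i : ι) : U i = H i := by
  refine le_antisymm (hU i) ?_
  have h1 : U i ⊔ ⨆ (j) (_ : j ≠ i), U j = ⊤ := by
    rw [eq_top_iff, ← ht]
    refine iSup_le fun j => ?_
    by_cases hj : j = i
    · subst hj; exact le_sup_left
    · exact le_trans (le_iSup₂_of_le j hj le_rfl) le_sup_right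
  have h2 : H i ⊓ ⨆ (j) (_ : j ≠ i), U j = ⊥ := by
    rw [← disjoint_iff]
    exact (hH i).mono_right (iSup₂_mono fun j _ => hU j)
  calc H i = (U i ⊔ ⨆ (j) (_ : j ≠ i), U j) ⊓ H i := by rw [h1, top_inf_eq]
    _ = U i ⊔ (⨆ (j) (_ : j ≠ i), U j) ⊓ H i := sup_inf_assoc_of_le _ (hU i)
    _ ≤ U i := by rw [inf_comm, h2, sup_bot_eq]

end

theorem natCast_inj2 : Function.Injective (fun (β : Fin 2 → ℕ) (i : Fin 2) => (β i : ℚ)) := by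
  intro a b h
  funext i
  have h1 : (a i : ℚ) = b i := congrFun h i
  exact_mod_cast h1

/-! ### The grading -/

theorem D_comm (i j : Fin 2) (x : N) : D i (D j x) = D j (D i x) := by
  let S : LieSubalgebra ℚ N :=
    { LinearMap.eqLocus (D i ∘ₗ D j) (D j ∘ₗ D i) with
      lie_mem' := fun {a b} ha hb => by
        have ha : D i (D j a) = D j (D i a) := ha
        have hb : D i (D j b) = D j (D i b) := hb
        change D i (D j ⁅a, b⁆) = D j (D i ⁅a, b⁆)
        simp only [D_lie, map_add, ha, hb]
        abel }
  refine N_top S (fun k => ?_) x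
  change D i (D j (e k)) = D j (D i (e k))
  rw [D_e, D_e]
  split_ifs <;> simp_all [D_e]

/-- Graded pieces. -/
def NG (β : Fin 2 → ℕ) : Submodule ℚ N := JE D (fun i => (β i : ℚ))

theorem mem_NG {β : Fin 2 → ℕ} {x : N} : x ∈ NG β ↔ ∀ i, D i x = (β i : ℚ) • x := mem_JE

theorem NG_indep : iSupIndep NG :=
  (JE_indep D (fun i j => LinearMap.ext fun x => D_comm i j x)).comp natCast_inj2

theorem NG_lie {β γ : Fin 2 → ℕ} {x y : N} (hx : x ∈ NG β) (hy : y ∈ NG γ) :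
    ⁅x, y⁆ ∈ NG (β + γ) := by
  rw [mem_NG] at *
  intro i
  rw [D_lie, hx, hy, smul_lie, lie_smul, Pi.add_apply]; push_cast; module

/-- Degree of a generator. -/
abbrev al (i : Fin 2) : Fin 2 → ℕ := Pi.single i 1

theorem e_NG (i : Fin 2) : e i ∈ NG (al i) := by
  rw [mem_NG]; intro j
  rw [D_e]
  by_cases h : i = j
  · subst h; simp
  · simp [h, Ne.symm h]

/-- Right normed words. -/
def wd : List (Fin 2) → N
  | [] => 0
  | [i] => e i
  | i :: j :: w => ⁅e i, wd (j :: w)⁆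

/-- Degree of a word. -/
def dg (w : List (Fin 2)) : Fin 2 → ℕ := fun i => w.count i

theorem dg_cons (i w) : dg (i :: w) = al i + dg w := by
  funext j
  simp only [dg, List.count_cons, Pi.add_apply, al, Pi.single_apply]
  by_cases h : i = j
  · subst h; simp [add_comm]
  · simp [h, Ne.symm h]

theorem wd_NG : ∀ w, wd w ∈ NG (dg w)
  | [] => zero_mem _
  | [i] => by
    have := e_NG i
    rw [dg_cons]
    have h : dg [] = 0 := rfl
    rw [h, add_zero]; exact this
  | i :: j :: w => by
    rw [dg_cons]; exact NG_lie (e_NG i) (wd_NG (j :: w))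

/-- Span of words of given degree. -/
def UG (β : Fin 2 → ℕ) : Submodule ℚ N := Submodule.span ℚ (Set.image wd {w | dg w = β})

theorem UG_le (β) : UG β ≤ NG β := by
  refine Submodule.span_le.2 ?_
  rintro _ ⟨w, rfl, rfl⟩
  exact wd_NG w

theorem wd_UG (w) : wd w ∈ UG (dg w) := Submodule.subset_span ⟨w, rfl, rfl⟩

theorem wd_span : Submodule.span ℚ (Set.range wd) = ⊤ := by
  rw [eq_top_iff]
  intro x _
  refine N_top' _ (fun i => ?_) (fun i y hy => ?_) x
  · exact Submodule.subset_span ⟨[i], rfl⟩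
  · induction hy using Submodule.span_induction with
    | mem u hu =>
      obtain ⟨w, rfl⟩ := hu
      cases w with
      | nil => simp [wd]
      | cons j w => exact Submodule.subset_span ⟨i :: j :: w, rfl⟩
    | zero => simp
    | add a b _ _ ha hb => rw [lie_add]; exact add_mem ha hb
    | smul a b _ hb => rw [lie_smul]; exact Submodule.smul_mem _ _ hb

theorem UG_top : ⨆ β, UG β = ⊤ := by
  rw [eq_top_iff, ← wd_span]
  refine Submodule.span_le.2 ?_
  rintro _ ⟨w, rfl⟩
  exact Submodule.mem_iSup_of_mem _ (wd_UG w)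

theorem UG_eq (β) : UG β = NG β := indep_eq NG_indep UG_le UG_top β

theorem NG_top : ⨆ β, NG β = ⊤ := by
  rw [← UG_top]; exact iSup_congr fun β => (UG_eq β).symm

theorem length_eq_dg (w) : w.length = dg w 0 + dg w 1 := by
  induction w with
  | nil => rfl
  | cons i w ih =>
    rw [dg_cons]
    fin_cases i <;> simp [ih, al] <;> ring

instance NG_fin (β) : Module.Finite ℚ (NG β) := by
  rw [← UG_eq]
  refine Module.Finite.span_of_finite ℚ (Set.Finite.image _ ?_)
  refine (List.finite_length_eq (Fin 2) (β 0 + β 1)).subset ?_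
  rintro w rfl
  exact length_eq_dg w

/-- Multiplicity. -/
def mm (β : Fin 2 → ℕ) : ℕ := Module.finrank ℚ (NG β)

theorem NG_zero : NG 0 = ⊥ := by
  rw [← UG_eq, UG, eq_bot_iff]
  refine Submodule.span_le.2 ?_
  rintro _ ⟨w, hw, rfl⟩
  have : w.length = 0 := by rw [length_eq_dg, hw]; rfl
  rw [List.length_eq_zero_iff.1 this]
  rfl

theorem mm_zero : mm 0 = 0 := by rw [mm, NG_zero]; simp

theorem e_ne (i : Fin 2) : e i ≠ 0 := by
  have hl : ∀ a b : ℚ, ⁅a, b⁆ = 0 := fun a b => by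
    rw [LieRing.of_associative_ring_bracket, mul_comm, sub_self]
  obtain ⟨f, hf⟩ := exists_lift (L := ℚ) (fun _ => 1) (hl _ _) (hl _ _)
  intro h
  have := hf i
  rw [h, map_zero] at this
  exact zero_ne_one this

theorem NG_al (i) : NG (al i) = Submodule.span ℚ {e i} := by
  rw [← UG_eq, UG]
  congr 1
  ext x
  simp only [Set.mem_image, Set.mem_ofPred_eq, Set.mem_singleton_iff]
  constructor
  · rintro ⟨w, hw, rfl⟩
    have : w.length = 1 := by
      rw [length_eq_dg, hw]; fin_cases i <;> simp
    obtain ⟨j, rfl⟩ := List.length_eq_one_iff.1 this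
    have h := congrFun hw i
    have : j = i := by
      by_contra hne
      simp [dg, hne] at h
    subst this; rfl
  · rintro rfl
    exact ⟨[i], by rw [dg_cons]; exact add_zero _, rfl⟩

theorem mm_al (i) : mm (al i) = 1 := by
  rw [mm, NG_al]; exact finrank_span_singleton (e_ne i)

/-! ### Elimination -/

section
variable (i j : Fin 2)

/-- `ad(e_i)^k e_j`. -/
def vk : ℕ → N
  | 0 => e j
  | k + 1 => ⁅e i, vk k⁆

/-- Right normed words in the `vk`. -/
def vw : List (Fin 4) → N
  | [] => 0
  | [k] => vk i j k
  | k :: l :: w => ⁅vk i j k, vw (l :: w)⁆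

theorem vk_NG (k) : vk i j k ∈ NG (k • al i + al j) := by
  induction k with
  | zero => rw [zero_smul, zero_add]; exact e_NG j
  | succ k ih =>
    have := NG_lie (e_NG i) ih
    rw [← add_assoc, ← succ_nsmul'] at this
    exact this

theorem vw_NG : ∀ w, vw i j w ∈ NG ((w.map Fin.val).sum • al i + w.length • al j)
  | [] => zero_mem _
  | [k] => by simpa [vw] using vk_NG i j k
  | k :: l :: w => by
    have := NG_lie (vk_NG i j k) (vw_NG (l :: w))
    rw [vw]
    convert this using 1
    simp only [List.map_cons, List.sum_cons, List.length_cons, add_smul, one_smul]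
    abel_nf

theorem sum_le (w : List (Fin 4)) : (w.map Fin.val).sum ≤ 3 * w.length := by
  induction w with
  | nil => simp
  | cons k w ih => simp only [List.map_cons, List.sum_cons, List.length_cons]; omega

theorem sum_eq (w : List (Fin 4)) (h : 3 * w.length ≤ (w.map Fin.val).sum) :
    ∀ k ∈ w, k = 3 := by
  induction w with
  | nil => simp
  | cons k w ih =>
    simp only [List.map_cons, List.sum_cons, List.length_cons] at h
    have := sum_le w
    intro l hl
    rcases List.mem_cons.1 hl with rfl | hl
    · omega
    · exact ih (by omega) l hl

theorem vw_three : ∀ w : List (Fin 4), (∀ k ∈ w, k = 3) → 2 ≤ w.length → vw i j w = 0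
  | [], _, h => by simp at h
  | [k], _, h => by simp at h
  | [k, l], h, _ => by
    have hk : k = 3 := h k (by simp)
    have hl : l = 3 := h l (by simp)
    subst hk hl; simp [vw]
  | k :: l :: n :: w, h, _ => by
    rw [vw, vw_three (l :: n :: w) (fun k hk => h k (List.mem_cons_of_mem _ hk)) (by simp),
      lie_zero]

theorem vw_span (hij : i ≠ j) (hs : ser (e i) (e j) = 0) :
    Submodule.span ℚ {e i} ⊔ Submodule.span ℚ (Set.range (vw i j)) = ⊤ := by
  set W := Submodule.span ℚ (Set.range (vw i j)) with hW
  have hv : ∀ k, vk i j k ∈ W := by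
    intro k
    by_cases hk : k < 4
    · exact Submodule.subset_span ⟨[⟨k, hk⟩], rfl⟩
    · have : ∀ n, vk i j (n + 4) = 0 := by
        intro n
        induction n with
        | zero => exact hs
        | succ n ih =>
          change ⁅e i, vk i j (n + 4)⁆ = 0
          rw [ih, lie_zero]
      rw [show k = (k - 4) + 4 by omega, this]; exact zero_mem _
  have hvb : ∀ k, ∀ y ∈ W, ⁅vk i j k, y⁆ ∈ W := by
    intro k y hy
    by_cases hk : k < 4
    · induction hy using Submodule.span_induction with
      | mem u hu =>
        obtain ⟨w, rfl⟩ := hu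
        cases w with
        | nil => simp [vw]
        | cons l w => exact Submodule.subset_span ⟨⟨k, hk⟩ :: l :: w, rfl⟩
      | zero => simp
      | add a b _ _ ha hb => rw [lie_add]; exact add_mem ha hb
      | smul a b _ hb => rw [lie_smul]; exact Submodule.smul_mem _ _ hb
    · have : ∀ n, vk i j (n + 4) = 0 := by
        intro n
        induction n with
        | zero => exact hs
        | succ n ih =>
          change ⁅e i, vk i j (n + 4)⁆ = 0
          rw [ih, lie_zero]
      rw [show k = (k - 4) + 4 by omega, this, zero_lie]; exact zero_mem _
  have hei : ∀ w, ⁅e i, vw i j w⁆ ∈ W := by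
    intro w
    induction w with
    | nil => simp [vw]
    | cons k w ih =>
      cases w with
      | nil => exact hv (k + 1)
      | cons l w =>
        rw [vw, leibniz_lie]
        refine add_mem (hvb (k + 1) _ (Submodule.subset_span ⟨_, rfl⟩)) (hvb k _ ih)
  have heW : ∀ y ∈ W, ⁅e i, y⁆ ∈ W := by
    intro y hy
    induction hy using Submodule.span_induction with
    | mem u hu => obtain ⟨w, rfl⟩ := hu; exact hei w
    | zero => simp
    | add a b _ _ ha hb => rw [lie_add]; exact add_mem ha hb
    | smul a b _ hb => rw [lie_smul]; exact Submodule.smul_mem _ _ hb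
  have hk : ∀ k : Fin 2, k = i ∨ k = j := by omega
  rw [eq_top_iff]
  intro x _
  refine N_top' _ (fun k => ?_) (fun k y hy => ?_) x
  · rcases hk k with rfl | rfl
    · exact Submodule.mem_sup_left (Submodule.mem_span_singleton_self _)
    · exact Submodule.mem_sup_right (hv 0)
  · obtain ⟨a, ha, b, hb, rfl⟩ := Submodule.mem_sup.1 hy
    obtain ⟨t, rfl⟩ := Submodule.mem_span_singleton.1 ha
    refine Submodule.mem_sup_right ?_
    rw [lie_add, lie_smul]
    rcases hk k with rfl | rfl
    · rw [lie_self, smul_zero, zero_add]; exact heW b hb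
    · refine add_mem (Submodule.smul_mem _ _ ?_) (hvb 0 b hb)
      rw [← lie_skew]; exact neg_mem (hv 1)

theorem NG_elim (hij : i ≠ j) (hs : ser (e i) (e j) = 0) (β : Fin 2 → ℕ) (hβ : 3 * β j ≤ β i)
    (h1 : β ≠ al i) (h2 : β ≠ 3 • al i + al j) : NG β = ⊥ := by
  classical
  let U : (Fin 2 → ℕ) → Submodule ℚ N := fun γ =>
    if 3 * γ j ≤ γ i ∧ γ ≠ al i ∧ γ ≠ 3 • al i + al j then ⊥ else NG γ
  have hU : ∀ γ, U γ ≤ NG γ := by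
    intro γ; simp only [U]; split_ifs <;> simp
  have ht : ⨆ γ, U γ = ⊤ := by
    rw [eq_top_iff, ← vw_span i j hij hs, sup_le_iff, Submodule.span_le, Submodule.span_le]
    constructor
    · rintro _ rfl
      refine Submodule.mem_iSup_of_mem (al i) ?_
      simp only [U]
      rw [if_neg (by simp)]
      exact e_NG i
    · rintro _ ⟨w, rfl⟩
      by_cases hw : 2 ≤ w.length ∧ 3 * w.length ≤ (w.map Fin.val).sum
      · rw [vw_three i j w (sum_eq w hw.2) hw.1]; exact zero_mem _
      · cases w with
        | nil => exact zero_mem _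
        | cons k w =>
          refine Submodule.mem_iSup_of_mem _ (?_ : _ ∈ U ((((k :: w).map Fin.val).sum • al i
            + (k :: w).length • al j)))
          simp only [U]
          rw [if_neg]
          · exact vw_NG i j _
          · rintro ⟨ha, hb, hc⟩
            have hh : 3 * (k :: w).length ≤ ((k :: w).map Fin.val).sum := by
              generalize ((k :: w).map Fin.val).sum = a at ha
              generalize (k :: w).length = b at ha
              simpa [Pi.single_apply, hij, Ne.symm hij] using ha
            have hk := sum_eq _ hh
            have hw1 : w = [] := by
              cases w with
              | nil => rfl
              | cons l w => exact absurd ⟨by simp, hh⟩ hw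
            subst hw1
            have : k = 3 := hk k (by simp)
            subst this
            exact hc (by simp)
  have := indep_eq NG_indep hU ht β
  rw [← this]
  simp only [U]
  rw [if_pos ⟨hβ, h1, h2⟩]

end

theorem mm_elim0 (β : Fin 2 → ℕ) (hβ : 3 * β 1 ≤ β 0)
    (h1 : β ≠ al 0) (h2 : β ≠ 3 • al 0 + al 1) : mm β = 0 := by
  rw [mm, NG_elim 0 1 (by decide) ser01 β hβ h1 h2]; simp
theorem mm_elim1 (β : Fin 2 → ℕ) (hβ : 3 * β 0 ≤ β 1)
    (h1 : β ≠ al 1) (h2 : β ≠ 3 • al 1 + al 0) : mm β = 0 := by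
  rw [mm, NG_elim 1 0 (by decide) ser10 β hβ h1 h2]; simp

end R2

namespace R2

/-! ### Parity -/

/-- Parity operator. -/
def ep : Lam →ₐ[ℚ] Lam := CliffordAlgebra.involute
theorem ep_io (x) : ep (io x) = - io x := CliffordAlgebra.involute_ι x
theorem ep_alg (r) : ep (algebraMap ℚ Lam r) = algebraMap ℚ Lam r := ep.commutes r

theorem ep_der (f w) : ep (der f w) = der f (ep w) := by
  induction w using ext_ind with
  | h0 r => rw [ep_alg, der_alg, map_zero]
  | ha a b ha hb => simp only [map_add, ha, hb]
  | hm x w ih =>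
    rw [der_mul, map_add, map_mul, map_mul, map_mul, ep_io, ep_io, ih, neg_mul, neg_mul, neg_mul,
      map_neg, der_mul]; abel

theorem ep_Lam2 {u} (hu : u ∈ Lam2) : ep u = u := by
  induction hu using Submodule.span_induction with
  | mem u hu =>
    obtain ⟨y, z, rfl⟩ := hu
    rw [map_mul, ep_io, ep_io, neg_mul_neg]
  | zero => simp
  | add a b _ _ ha hb => rw [map_add, ha, hb]
  | smul a b _ hb => rw [map_smul, hb]

theorem ep_dl (w) : dl (ep w) = - ep (dl w) := by
  induction w using ext_ind with
  | h0 r => rw [ep_alg, dl_alg, map_zero, neg_zero]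
  | ha a b ha hb => simp only [map_add, ha, hb, neg_add]
  | hm x w ih =>
    rw [dl_mul, map_mul, ep_io, neg_mul, map_neg, dl_mul, map_sub, map_mul, map_mul, ep_io,
      ep_Lam2 (del_Lam2 x), ih]
    noncomm_ring

/-! ### Compatibility with the grading -/

theorem der_Lx (i x w) : der (D i) (Lx x w) = Lx (D i x) w + Lx x (der (D i) w) := by
  induction w using ext_ind with
  | h0 r => simp [Lx_alg, der_alg]
  | ha a b ha hb => simp only [map_add, ha, hb]; abel
  | hm y w ih =>
    simp only [Lx_mul, der_mul, map_add, ih, D_lie]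
    noncomm_ring

theorem der_dd (i w) : der (D i) (dd w) = dd (der (D i) w) := by
  induction w using ext_ind with
  | h0 r => rw [dd_alg, der_alg, map_zero, map_zero]
  | ha a b ha hb => simp only [map_add, ha, hb]
  | hm x w ih =>
    rw [dd_mul, map_sub, der_mul, der_mul, map_add, dd_mul, dd_mul, ih, der_Lx]; abel

theorem der_cc (i x y) : der (D i) (cc x y) = cc (D i x) y + cc x (D i y) := by
  simp only [cc_apply, map_add, map_sub, map_smul, der_mul, der_io, D_comm i 0, D_comm i 1]
  module

theorem der_del (i x) : der (D i) (del x) = del (D i x) := by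
  let S : LieSubalgebra ℚ N :=
    { LinearMap.eqLocus (der (D i) ∘ₗ del) (del ∘ₗ D i) with
      lie_mem' := fun {a b} ha hb => by
        have ha : der (D i) (del a) = del (D i a) := ha
        have hb : der (D i) (del b) = del (D i b) := hb
        change der (D i) (del ⁅a, b⁆) = del (D i ⁅a, b⁆)
        rw [del_lie, D_lie, map_add, map_add, map_sub, del_lie, del_lie, der_Lx, der_Lx, der_cc,
          ha, hb]
        abel }
  refine N_top S (fun k => ?_) x
  change der (D i) (del (e k)) = del (D i (e k))
  rw [del_e, D_e, map_zero]
  split_ifs <;> simp [del_e]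

theorem der_dl (i w) : der (D i) (dl w) = dl (der (D i) w) := by
  induction w using ext_ind with
  | h0 r => rw [dl_alg, der_alg, map_zero, map_zero]
  | ha a b ha hb => simp only [map_add, ha, hb]
  | hm x w ih =>
    rw [dl_mul, map_sub, der_mul, der_mul, map_add, dl_mul, dl_mul, ih, der_mul', der_del]; abel

theorem der_der (i j w) : der (D i) (der (D j) w) = der (D j) (der (D i) w) := by
  have h := der_comm (D i) (D j) w
  have h0 : D i ∘ₗ D j - D j ∘ₗ D i = 0 := by
    ext x; simp [D_comm i j]
  have h1 : der 0 w = 0 := by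
    have := LinearMap.map_zero derL
    exact congrArg (fun f : Lam →ₗ[ℚ] Lam => f w) this
  rw [h0, h1] at h
  exact (sub_eq_zero.1 h.symm)

/-! ### Bases -/

/-- Index type of a homogeneous basis. -/
def II : Type := Σ β : Fin 2 → ℕ, Fin (mm β)

instance : LinearOrder II := IsWellOrder.linearOrder WellOrderingRel

/-- The degree. -/
def II.deg (k : II) : Fin 2 → ℕ := k.1

theorem N_internal : DirectSum.IsInternal NG :=
  DirectSum.isInternal_submodule_of_iSupIndep_of_iSup_eq_top NG_indep NG_top

/-- A homogeneous basis. -/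
def bN : Module.Basis II ℚ N := N_internal.collectedBasis fun β => Module.finBasis ℚ (NG β)

theorem bN_mem (k : II) : bN k ∈ NG k.deg := N_internal.collectedBasis_mem _ k

/-- Basis of the exterior algebra. -/
def bL : Module.Basis (Finset II) ℚ Lam := bN.ExteriorAlgebra

theorem der_multi (f : N →ₗ[ℚ] N) : ∀ (n : ℕ) (v : Fin n → N) (c : Fin n → ℚ)
    (_ : ∀ k, f (v k) = c k • v k),
    der f (ExteriorAlgebra.ιMulti ℚ n v) = (∑ k, c k) • ExteriorAlgebra.ιMulti ℚ n v
  | 0, v, c, _ => by simp [der_one]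
  | n + 1, v, c, h => by
    rw [ExteriorAlgebra.ιMulti_succ_apply, der_mul, h,
      der_multi f n (Matrix.vecTail v) (fun k => c k.succ) (fun k => h k.succ), Fin.sum_univ_succ,
      map_smul, smul_mul_assoc, mul_smul_comm, add_smul]

theorem ep_multi : ∀ (n : ℕ) (v : Fin n → N),
    ep (ExteriorAlgebra.ιMulti ℚ n v) = ((-1 : ℚ) ^ n) • ExteriorAlgebra.ιMulti ℚ n v
  | 0, v => by simp
  | n + 1, v => by
    rw [ExteriorAlgebra.ιMulti_succ_apply, map_mul, ep_io, ep_multi n, pow_succ, mul_neg_one,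
      mul_smul_comm, neg_smul, neg_mul, smul_neg]

theorem bL_apply (s : Finset II) :
    bL s = ExteriorAlgebra.ιMulti ℚ s.card (bN ∘ s.orderEmbOfFin rfl) :=
  ExteriorAlgebra.basis_apply bN s

theorem ep_bL (s) : ep (bL s) = ((-1 : ℚ) ^ s.card) • bL s := by rw [bL_apply, ep_multi]

theorem der_bL (i s) : der (D i) (bL s) = ((∑ k ∈ s, k.deg) i : ℕ) • bL s := by
  rw [bL_apply, der_multi (D i) _ (bN ∘ s.orderEmbOfFin rfl) (fun k => ((s.orderEmbOfFin rfl k).deg i : ℚ))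
    (fun k => (mem_NG.1 (bN_mem _) i))]
  have : (∑ k : Fin s.card, ((s.orderEmbOfFin rfl k).deg i : ℚ)) = ((∑ k ∈ s, k.deg) i : ℕ) := by
    conv_rhs => rw [← Finset.map_orderEmbOfFin_univ s rfl]
    rw [Finset.sum_map, Finset.sum_apply]
    push_cast
    rfl
  rw [this, Nat.cast_smul_eq_nsmul]

/-- Operators defining the grading of the exterior algebra. -/
def LG (β : Fin 2 → ℕ) : Submodule ℚ Lam := JE (fun i => der (D i)) (fun i => (β i : ℚ))
theorem mem_LG {β : Fin 2 → ℕ} {x : Lam} : x ∈ LG β ↔ ∀ i, der (D i) x = (β i : ℚ) • x := mem_JE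

theorem LG_indep : iSupIndep LG :=
  (JE_indep (fun i => der (D i)) (fun i j => LinearMap.ext fun x => der_der i j x)).comp
    natCast_inj2

theorem LG_eq (β) : Submodule.span ℚ (Set.range (fun s : {s : Finset II // ∑ k ∈ s, k.deg = β} =>
    bL s.1)) = LG β := by
  refine indep_eq (U := fun β => Submodule.span ℚ (Set.range
    (fun s : {s : Finset II // ∑ k ∈ s, k.deg = β} => bL s.1))) LG_indep (fun γ => ?_) ?_ β
  · refine Submodule.span_le.2 ?_
    rintro _ ⟨⟨s, rfl⟩, rfl⟩
    refine mem_LG.2 fun i => ?_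
    rw [der_bL, Nat.cast_smul_eq_nsmul]
  · rw [eq_top_iff, ← bL.span_eq]
    refine Submodule.span_le.2 ?_
    rintro _ ⟨s, rfl⟩
    exact Submodule.mem_iSup_of_mem _ (Submodule.subset_span ⟨⟨s, rfl⟩, rfl⟩)

theorem strace {W : Type*} [AddCommGroup W] [Module ℚ W] [Module.Finite ℚ W]
    (d δ ε : W →ₗ[ℚ] W) (c : ℚ) (hc : c ≠ 0) (h : ∀ w, d (δ w) + δ (d w) = c • w)
    (hε : ∀ w, δ (ε w) = - ε (δ w)) : LinearMap.trace ℚ W ε = 0 := by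
  have h1 : (d ∘ₗ δ) + (δ ∘ₗ d) = c • LinearMap.id := LinearMap.ext h
  have h2 : δ ∘ₗ ε = - (ε ∘ₗ δ) := LinearMap.ext hε
  have h3 : LinearMap.trace ℚ W (ε ∘ₗ (d ∘ₗ δ)) = LinearMap.trace ℚ W (δ ∘ₗ (ε ∘ₗ d)) := by
    rw [← LinearMap.comp_assoc]
    exact LinearMap.trace_comp_comm' _ _
  have h4 : LinearMap.trace ℚ W (ε ∘ₗ (d ∘ₗ δ)) + LinearMap.trace ℚ W (ε ∘ₗ (δ ∘ₗ d)) = 0 := by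
    rw [h3, ← LinearMap.comp_assoc, h2, LinearMap.neg_comp, map_neg, LinearMap.comp_assoc,
      neg_add_cancel]
  rw [← map_add, ← LinearMap.comp_add, h1, LinearMap.comp_smul, LinearMap.comp_id, map_smul,
    smul_eq_mul] at h4
  exact (mul_eq_zero.1 h4).resolve_left hc

theorem euler (β : Fin 2 → ℕ) (T : Finset (Finset II))
    (hT : ∀ s, s ∈ T ↔ ∑ k ∈ s, k.deg = β)
    (hβ : (β 0 : ℤ) ^ 2 + (β 1 : ℤ) ^ 2 - 3 * β 0 * β 1 - β 0 - β 1 ≠ 0) :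
    ∑ s ∈ T, (-1 : ℤ) ^ s.card = 0 := by
  classical
  let X := {s : Finset II // ∑ k ∈ s, k.deg = β}
  let fX : Fintype X := Fintype.subtype T hT
  let v : X → Lam := fun s => bL s.1
  have hv : LinearIndependent ℚ v := bL.linearIndependent.comp _ Subtype.val_injective
  let B := Module.Basis.span hv
  let W := Submodule.span ℚ (Set.range v)
  have hW : W = LG β := LG_eq β
  have hmem : ∀ f : Lam →ₗ[ℚ] Lam, (∀ i w, der (D i) (f w) = f (der (D i) w)) →
      ∀ w ∈ W, f w ∈ W := by
    intro f hf w hw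
    rw [hW, mem_LG] at *
    intro i
    rw [hf, hw, map_smul]
  have : Module.Finite ℚ W := Module.Finite.of_basis B
  let ε : W →ₗ[ℚ] W := ep.toLinearMap.restrict (hmem _ fun i w => (ep_der (D i) w).symm)
  have htr : LinearMap.trace ℚ W ε = 0 := by
    refine strace (dd.restrict (hmem _ der_dd)) (dl.restrict (hmem _ der_dl)) ε
      ((β 0 : ℚ) ^ 2 + (β 1 : ℚ) ^ 2 - 3 * β 0 * β 1 - β 0 - β 1) (by exact_mod_cast hβ) ?_ ?_
    · rintro ⟨w, hw⟩
      apply Subtype.ext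
      change dd (dl w) + dl (dd w) = _ • w
      rw [laplace, SL_apply]
      rw [hW, mem_LG] at hw
      simp only [hw, map_smul]
      module
    · rintro ⟨w, hw⟩
      apply Subtype.ext
      exact ep_dl w
  rw [LinearMap.trace_eq_matrix_trace ℚ B, Matrix.trace] at htr
  have hd : ∀ s : X, (LinearMap.toMatrix B B ε).diag s = (-1 : ℚ) ^ s.1.card := by
    intro s
    have : ε (B s) = ((-1 : ℚ) ^ s.1.card) • B s := by
      apply Subtype.ext
      have hB : ((B s : W) : Lam) = bL s.1 := by
        simp only [B, Module.Basis.span_apply]; rfl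
      change ep (B s : W) = ((-1 : ℚ) ^ s.1.card) • ((B s : W) : Lam)
      rw [hB, ep_bL]
    rw [Matrix.diag_apply, LinearMap.toMatrix_apply, this]
    simp
  simp only [hd] at htr
  have h2 : ∑ s ∈ T, (-1 : ℚ) ^ s.card = 0 := by
    rw [← htr]
    exact Finset.sum_subtype T hT (fun s => (-1 : ℚ) ^ s.card)
  exact_mod_cast h2

end R2

namespace R2

/-! ### Signed counting of subsets -/
section comb
variable {κ : Type*} [DecidableEq κ] (d : κ → ℤ × ℤ)

/-- Signed count of the subsets of `J` of degree `β`. -/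
def cJ (J : Finset κ) (β : ℤ × ℤ) : ℤ :=
  ∑ s ∈ J.powerset, if ∑ k ∈ s, d k = β then (-1) ^ s.card else 0

theorem cJ_empty (β : ℤ × ℤ) : cJ d ∅ β = if (0 : ℤ × ℤ) = β then 1 else 0 := by
  simp [cJ]

theorem cJ_insert {a : κ} {J : Finset κ} (ha : a ∉ J) (β : ℤ × ℤ) :
    cJ d (insert a J) β = cJ d J β - cJ d J (β - d a) := by
  rw [cJ, Finset.sum_powerset_insert ha, sub_eq_add_neg, cJ, cJ, ← Finset.sum_neg_distrib]
  congr 1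
  refine Finset.sum_congr rfl fun s hs => ?_
  have has : a ∉ s := fun h => ha (Finset.mem_powerset.1 hs h)
  rw [Finset.sum_insert has, Finset.card_insert_of_notMem has, pow_succ]
  by_cases h : d a + ∑ k ∈ s, d k = β
  · rw [if_pos h, if_pos (by rw [← h]; abel)]; ring
  · rw [if_neg h, if_neg (fun h' => h (by rw [h']; abel))]; ring

theorem cJ_neg {J : Finset κ} (hd : ∀ i ∈ J, 0 ≤ (d i).1 ∧ 0 ≤ (d i).2) (β : ℤ × ℤ)
    (hβ : β.1 < 0 ∨ β.2 < 0) : cJ d J β = 0 := by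
  refine Finset.sum_eq_zero fun s hs => if_neg fun h => ?_
  have hs := Finset.mem_powerset.1 hs
  have h1 : 0 ≤ β.1 := by
    rw [← h, Prod.fst_sum]; exact Finset.sum_nonneg fun i hi => (hd i (hs hi)).1
  have h2 : 0 ≤ β.2 := by
    rw [← h, Prod.snd_sum]; exact Finset.sum_nonneg fun i hi => (hd i (hs hi)).2
  omega

theorem cJ_logder (J : Finset κ) (hd : ∀ i ∈ J, 0 ≤ (d i).1 ∧ 0 ≤ (d i).2)
    (h0 : ∀ i ∈ J, d i ≠ 0) (K : ℕ) (β : ℤ × ℤ) (h1 : β.1 ≤ K) (h2 : β.2 ≤ K) :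
    (β.1 + β.2) * cJ d J β =
      - ∑ i ∈ J, ((d i).1 + (d i).2) *
        ∑ k ∈ Finset.range K, cJ d J (β - ((k + 1 : ℕ) : ℤ) • d i) := by
  induction J using Finset.induction_on generalizing β with
  | empty =>
    rw [cJ_empty]
    by_cases h : (0 : ℤ × ℤ) = β
    · subst h; simp
    · simp [h]
  | insert a J ha ih =>
    have hdJ : ∀ i ∈ J, 0 ≤ (d i).1 ∧ 0 ≤ (d i).2 := fun i hi =>
      hd i (Finset.mem_insert_of_mem hi)
    have hda := hd a (Finset.mem_insert_self _ _)
    have h0a := h0 a (Finset.mem_insert_self _ _)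
    have ih' := ih hdJ (fun i hi => h0 i (Finset.mem_insert_of_mem hi))
    have e1 := ih' β h1 h2
    have e2 := ih' (β - d a) (by simp; omega) (by simp; omega)
    rw [Finset.sum_insert ha]
    simp only [cJ_insert d ha]
    have tel : ∑ k ∈ Finset.range K, (cJ d J (β - ((k + 1 : ℕ) : ℤ) • d a) -
        cJ d J (β - ((k + 1 : ℕ) : ℤ) • d a - d a)) = cJ d J (β - d a) := by
      have := Finset.sum_range_sub' (fun k : ℕ => cJ d J (β - ((k + 1 : ℕ) : ℤ) • d a)) K
      have hz : cJ d J (β - ((K + 1 : ℕ) : ℤ) • d a) = 0 := by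
        apply cJ_neg d hdJ
        have : 1 ≤ (d a).1 ∨ 1 ≤ (d a).2 := by
          by_contra hc
          exact h0a (Prod.ext (by simp; omega) (by simp; omega))
        simp only [Prod.fst_sub, Prod.snd_sub, Prod.smul_fst, Prod.smul_snd, smul_eq_mul]
        push_cast
        rcases this with h | h
        · left; nlinarith
        · right; nlinarith
      rw [hz] at this
      simp only [zero_add, Nat.cast_one, one_smul, sub_zero] at this
      rw [← this]
      refine Finset.sum_congr rfl fun k _ => ?_
      congr 2
      push_cast
      simp only [add_smul, one_smul]; abel
    rw [tel]
    have e3 : ∑ x ∈ J, ((d x).1 + (d x).2) * ∑ k ∈ Finset.range K,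
        (cJ d J (β - ((k + 1 : ℕ) : ℤ) • d x) - cJ d J (β - ((k + 1 : ℕ) : ℤ) • d x - d a)) =
        ∑ x ∈ J, ((d x).1 + (d x).2) * ∑ k ∈ Finset.range K, cJ d J (β - ((k + 1 : ℕ) : ℤ) • d x)
        - ∑ x ∈ J, ((d x).1 + (d x).2) * ∑ k ∈ Finset.range K,
          cJ d J (β - d a - ((k + 1 : ℕ) : ℤ) • d x) := by
      rw [← Finset.sum_sub_distrib]
      refine Finset.sum_congr rfl fun x _ => ?_
      rw [Finset.sum_sub_distrib, mul_sub]
      congr 2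
      refine Finset.sum_congr rfl fun k _ => ?_
      rw [sub_right_comm]
    rw [e3]
    simp only [Prod.fst_sub, Prod.snd_sub] at e2
    linear_combination e1 - e2

end comb

/-! ### Uniqueness for the product-sum recursion -/

/-- The logarithmic-derivative equation relating multiplicities and product coefficients. -/
def Eqn (M : ℕ × ℕ → ℤ) (P : ℤ × ℤ → ℤ) : Prop :=
  ∀ a b : ℕ, a < 13 → b < 13 → ((a : ℤ) + b) * P (a, b) =
    - ∑ p ∈ Finset.range 13 ×ˢ Finset.range 13, M p * ((p.1 : ℤ) + p.2) *
      ∑ k ∈ Finset.range 12, P ((a : ℤ) - ((k + 1 : ℕ) : ℤ) * p.1, (b : ℤ) - ((k + 1 : ℕ) : ℤ) * p.2)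

theorem Eqn_uniq {M M' : ℕ × ℕ → ℤ} {P P' : ℤ × ℤ → ℤ} (h : Eqn M P) (h' : Eqn M' P')
    (h0 : P (0, 0) = 1) (h0' : P' (0, 0) = 1)
    (hn : ∀ z : ℤ × ℤ, z.1 < 0 ∨ z.2 < 0 → P z = 0)
    (hn' : ∀ z : ℤ × ℤ, z.1 < 0 ∨ z.2 < 0 → P' z = 0)
    (hor : ∀ a b : ℕ, a < 13 → b < 13 → a + b ≠ 0 → M (a, b) = M' (a, b) ∨ P (a, b) = P' (a, b))
    (n : ℕ) : ∀ a b : ℕ, a < 13 → b < 13 → a + b = n → 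
      P (a, b) = P' (a, b) ∧ (n ≠ 0 → M (a, b) = M' (a, b)) := by
  induction n using Nat.strong_induction_on with
  | _ n ih =>
  intro a b ha hb hab
  rcases Nat.eq_zero_or_pos n with h00 | hpos
  · obtain ⟨rfl, rfl⟩ : a = 0 ∧ b = 0 := by omega
    simp [h0, h0', h00]
  have e1 := h a b ha hb
  have e2 := h' a b ha hb
  have key : ∑ p ∈ Finset.range 13 ×ˢ Finset.range 13, (M p * ((p.1 : ℤ) + p.2) *
      (∑ k ∈ Finset.range 12, P ((a : ℤ) - ((k + 1 : ℕ) : ℤ) * p.1, (b : ℤ) - ((k + 1 : ℕ) : ℤ) * p.2))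
      - M' p * ((p.1 : ℤ) + p.2) *
      (∑ k ∈ Finset.range 12, P' ((a : ℤ) - ((k + 1 : ℕ) : ℤ) * p.1, (b : ℤ) - ((k + 1 : ℕ) : ℤ) * p.2)))
      = (M (a, b) - M' (a, b)) * ((a : ℤ) + b) := by
    have hself : ∀ Q : ℤ × ℤ → ℤ, Q (0, 0) = 1 → (∀ z : ℤ × ℤ, z.1 < 0 ∨ z.2 < 0 → Q z = 0) →
        ∑ k ∈ Finset.range 12, Q ((a : ℤ) - ((k + 1 : ℕ) : ℤ) * a, (b : ℤ) - ((k + 1 : ℕ) : ℤ) * b)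
          = 1 := by
      intro Q hQ hQn
      rw [Finset.sum_eq_single 0]
      · simpa using hQ
      · intro k _ hk
        apply hQn
        have : (1 : ℤ) ≤ k := by omega
        have : (1 : ℤ) ≤ a ∨ (1 : ℤ) ≤ b := by omega
        push_cast
        rcases this with h | h
        · left; nlinarith
        · right; nlinarith
      · simp
    rw [Finset.sum_eq_single (a, b)]
    · simp only
      rw [hself P h0 hn, hself P' h0' hn']; ring
    · rintro ⟨c, d⟩ hp hne
      simp only [Finset.mem_product, Finset.mem_range] at hp
      rcases Nat.eq_zero_or_pos (c + d) with hz | hz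
      · obtain ⟨rfl, rfl⟩ : c = 0 ∧ d = 0 := by omega
        simp
      by_cases hcd : c ≤ a ∧ d ≤ b
      · have hlt : c + d < n := by
          rcases Nat.lt_or_ge (c + d) n with h | h
          · exact h
          · exact absurd (Prod.ext (by simp; omega) (by simp; omega)) hne
        have hM := (ih (c + d) hlt c d hp.1 hp.2 rfl).2 (by omega)
        rw [hM, sub_eq_zero]
        congr 1
        refine Finset.sum_congr rfl fun k _ => ?_
        by_cases hk : (k + 1) * c ≤ a ∧ (k + 1) * d ≤ b
        · have h3 : (k + 1) * c + (k + 1) * d ≥ c + d := by nlinarith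
          have := (ih (a - (k + 1) * c + (b - (k + 1) * d)) (by omega) (a - (k + 1) * c)
            (b - (k + 1) * d) (by omega) (by omega) rfl).1
          rw [Nat.cast_sub hk.1, Nat.cast_sub hk.2] at this
          push_cast at this ⊢
          exact this
        · have hk' : (a : ℤ) - ((k + 1 : ℕ) : ℤ) * c < 0 ∨ (b : ℤ) - ((k + 1 : ℕ) : ℤ) * d < 0 := by
            rw [not_and_or] at hk
            rcases hk with h | h
            · left; push Not at h; have : (a : ℤ) < ((k + 1) * c : ℕ) := by exact_mod_cast h
              push_cast at this ⊢; linarith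
            · right; push Not at h; have : (b : ℤ) < ((k + 1) * d : ℕ) := by exact_mod_cast h
              push_cast at this ⊢; linarith
          rw [hn _ hk', hn' _ hk']
      · have hz' : ∀ Q : ℤ × ℤ → ℤ, (∀ z : ℤ × ℤ, z.1 < 0 ∨ z.2 < 0 → Q z = 0) →
            ∑ k ∈ Finset.range 12, Q ((a : ℤ) - ((k + 1 : ℕ) : ℤ) * c,
              (b : ℤ) - ((k + 1 : ℕ) : ℤ) * d) = 0 := by
          intro Q hQ
          refine Finset.sum_eq_zero fun k _ => hQ _ ?_
          rw [not_and_or] at hcd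
          push_cast
          rcases hcd with h | h
          · left
            have : (a : ℤ) < c := by omega
            have h2 : 0 ≤ (k : ℤ) * c := by positivity
            linarith
          · right
            have : (b : ℤ) < d := by omega
            have h2 : 0 ≤ (k : ℤ) * d := by positivity
            linarith
        simp only
        rw [hz' P hn, hz' P' hn']; simp
    · intro hmem
      exact absurd (by simp [ha, hb]) hmem
  rw [Finset.sum_sub_distrib] at key
  have hab' : ((a : ℤ) + b) ≠ 0 := by omega
  have e3 : ((a : ℤ) + b) * (P (a, b) - P' (a, b) + (M (a, b) - M' (a, b))) = 0 := by
    linear_combination e1 - e2 - key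
  have e4 := (mul_eq_zero.1 e3).resolve_left hab'
  rcases hor a b ha hb (by omega) with h | h
  · exact ⟨by linarith, fun _ => h⟩
  · exact ⟨h, fun _ => by linarith⟩

end R2

namespace R2

/-! ### The numerical table -/

/-- Table of multiplicities. -/
def tab : List (List ℤ) :=
  [[0, 1, 0, 0, 0, 0, 0, 0, 0, 0, 0, 0, 0],
   [1, 1, 1, 1, 0, 0, 0, 0, 0, 0, 0, 0, 0],
   [0, 1, 1, 2, 1, 1, 0, 0, 0, 0, 0, 0, 0],
   [0, 1, 2, 3, 4, 4, 3, 2, 1, 0, 0, 0, 0],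
   [0, 0, 1, 4, 6, 9, 9, 9, 6, 4, 1, 0, 0],
   [0, 0, 1, 4, 9, 16, 23, 27, 27, 23, 16, 9, 4],
   [0, 0, 0, 3, 9, 23, 39, 60, 73, 80, 73, 60, 39],
   [0, 0, 0, 2, 9, 27, 60, 107, 162, 211, 240, 240, 211],
   [0, 0, 0, 1, 6, 27, 73, 162, 288, 449, 600, 720, 758],
   [0, 0, 0, 0, 4, 23, 80, 211, 449, 808, 1267, 1754, 2167],
   [0, 0, 0, 0, 1, 16, 73, 240, 600, 1267, 2278, 3630, 5130],
   [0, 0, 0, 0, 0, 9, 60, 240, 720, 1754, 3630, 6559, 10531],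
   [0, 0, 0, 0, 0, 4, 39, 211, 758, 2167, 5130, 10531, 19022]]

/-- Table lookup. -/
def tM (p : ℕ × ℕ) : ℤ := (tab.getD p.1 []).getD p.2 0

/-- The denominator on natural degrees. -/
def pN (a b : ℕ) : ℤ :=
  bif Nat.beq a 0 then (bif Nat.beq b 0 then 1 else bif Nat.beq b 1 then -1 else 0)
  else bif Nat.beq a 1 then (bif Nat.beq b 0 then -1 else bif Nat.beq b 4 then 1 else 0)
  else bif Nat.beq a 4 then (bif Nat.beq b 1 then 1 else bif Nat.beq b 12 then -1 else 0)
  else bif Nat.beq a 12 then (bif Nat.beq b 4 then -1 else 0)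
  else 0

/-- The denominator on integer degrees. -/
def tP (z : ℤ × ℤ) : ℤ := if z.1 < 0 ∨ z.2 < 0 then 0 else pN z.1.toNat z.2.toNat

theorem tP_sub (a b c d : ℕ) : tP ((a : ℤ) - c, (b : ℤ) - d) =
    bif Nat.ble c a && Nat.ble d b then pN (a - c) (b - d) else 0 := by
  rw [tP]
  by_cases h : c ≤ a ∧ d ≤ b
  · rw [if_neg (by simp; omega)]
    have : (Nat.ble c a && Nat.ble d b) = true := by simpa using h
    rw [this]
    simp only [cond_true]
    congr 1 <;> omega
  · have : (Nat.ble c a && Nat.ble d b) = false := by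
      rw [Bool.eq_false_iff]; simpa using h
    rw [if_pos (by simp; omega), this]; rfl

/-- Sum over an initial segment. -/
def sm (f : ℕ → ℤ) : ℕ → ℤ
  | 0 => 0
  | n + 1 => f n + sm f n

theorem sm_eq (f : ℕ → ℤ) (n : ℕ) : ∑ i ∈ Finset.range n, f i = sm f n := by
  induction n with
  | zero => rfl
  | succ n ih => rw [Finset.sum_range_succ, ih, sm, add_comm]

/-- Right-hand side of the equation, computable form. -/
def rhs (a b : ℕ) : ℤ :=
  sm (fun c => bif Nat.ble c a then sm (fun d => bif Nat.ble d b then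
    tM (c, d) * ((c : ℤ) + d) * sm (fun k => bif Nat.ble ((k + 1) * c) a && Nat.ble ((k + 1) * d) b
      then pN (a - (k + 1) * c) (b - (k + 1) * d) else 0) 12 else 0) 13 else 0) 13

theorem rhs_eq (a b : ℕ) : ∑ p ∈ Finset.range 13 ×ˢ Finset.range 13, tM p * ((p.1 : ℤ) + p.2) *
      ∑ k ∈ Finset.range 12, tP ((a : ℤ) - ((k + 1 : ℕ) : ℤ) * p.1,
        (b : ℤ) - ((k + 1 : ℕ) : ℤ) * p.2) = rhs a b := by
  rw [Finset.sum_product, rhs, ← sm_eq]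
  refine Finset.sum_congr rfl fun c _ => ?_
  have inner : ∀ d : ℕ, ∑ k ∈ Finset.range 12, tP ((a : ℤ) - ((k + 1 : ℕ) : ℤ) * c,
        (b : ℤ) - ((k + 1 : ℕ) : ℤ) * d) = sm (fun k => bif Nat.ble ((k + 1) * c) a &&
          Nat.ble ((k + 1) * d) b then pN (a - (k + 1) * c) (b - (k + 1) * d) else 0) 12 := by
    intro d
    rw [← sm_eq]
    refine Finset.sum_congr rfl fun k _ => ?_
    rw [← tP_sub]; push_cast; rfl
  have hz : ∀ d : ℕ, ¬ (c ≤ a ∧ d ≤ b) → ∑ k ∈ Finset.range 12,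
      tP ((a : ℤ) - ((k + 1 : ℕ) : ℤ) * c, (b : ℤ) - ((k + 1 : ℕ) : ℤ) * d) = 0 := by
    intro d h
    refine Finset.sum_eq_zero fun k _ => if_pos ?_
    rw [not_and_or] at h
    push_cast
    rcases h with h | h
    · left
      have : (a : ℤ) < c := by omega
      have h2 : 0 ≤ (k : ℤ) * c := by positivity
      linarith
    · right
      have : (b : ℤ) < d := by omega
      have h2 : 0 ≤ (k : ℤ) * d := by positivity
      linarith
  by_cases hc : c ≤ a
  · have h1 : Nat.ble c a = true := by simpa using hc
    rw [h1, cond_true, ← sm_eq]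
    refine Finset.sum_congr rfl fun d _ => ?_
    by_cases hd : d ≤ b
    · have h2 : Nat.ble d b = true := by simpa using hd
      rw [h2, cond_true, ← inner d]
    · have h2 : Nat.ble d b = false := by rw [Bool.eq_false_iff]; simpa using hd
      rw [h2, cond_false]
      simp only
      rw [hz d (by tauto), mul_zero]
  · have h1 : Nat.ble c a = false := by rw [Bool.eq_false_iff]; simpa using hc
    rw [h1, cond_false]
    refine Finset.sum_eq_zero fun d _ => ?_
    simp only
    rw [hz d (by tauto), mul_zero]

theorem tab_check : ∀ a : ℕ, a < 13 → ∀ b : ℕ, b < 13 → ((a : ℤ) + b) * pN a b = - rhs a b := by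
  decide +kernel

theorem tP_nat (a b : ℕ) : tP ((a : ℤ), (b : ℤ)) = pN a b := by
  rw [tP, if_neg (by simp)]; rfl

theorem Eqn_tab : Eqn tM tP := by
  intro a b ha hb
  rw [rhs_eq, tP_nat]
  exact tab_check a ha b hb

end R2

namespace R2

/-- Degree of an index as an integer pair. -/
def dI (k : II) : ℤ × ℤ := ((k.deg 0 : ℤ), (k.deg 1 : ℤ))

/-- Embedding of pairs in functions. -/
def pe : ℕ × ℕ ↪ (Fin 2 → ℕ) := ⟨fun p => ![p.1, p.2], fun p q h => by
  have h0 := congrFun h 0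
  have h1 := congrFun h 1
  exact Prod.ext h0 h1⟩

/-- All indices of small degree. -/
def JJ : Finset II := Finset.sigma ((Finset.range 13 ×ˢ Finset.range 13).map pe) fun _ => Finset.univ

theorem mem_JJ (k : II) : k ∈ JJ ↔ k.deg 0 < 13 ∧ k.deg 1 < 13 := by
  refine Finset.mem_sigma.trans ?_
  simp only [Finset.mem_map, Finset.mem_product, Finset.mem_range, Finset.mem_univ, and_true]
  constructor
  · rintro ⟨p, hp, h⟩
    rw [II.deg, ← h]; exact hp
  · intro h
    exact ⟨(k.deg 0, k.deg 1), h, by ext i; fin_cases i <;> rfl⟩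

theorem sum_JJ (g : ℤ × ℤ → ℤ) : ∑ k ∈ JJ, g (dI k) =
    ∑ p ∈ Finset.range 13 ×ˢ Finset.range 13, (mm ![p.1, p.2] : ℤ) * g (p.1, p.2) := by
  refine (Finset.sum_sigma _ _ _).trans ?_
  rw [Finset.sum_map]
  refine Finset.sum_congr rfl fun p _ => ?_
  have : ∀ s : Fin (mm (pe p)), g (dI ⟨pe p, s⟩) = g (p.1, p.2) := fun s => rfl
  simp only [this]
  simp
  left; rfl

theorem dI_ne (k : II) : dI k ≠ 0 := by
  intro h
  have h0 : (k.deg 0 : ℤ) = 0 := congrArg Prod.fst h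
  have h1 : (k.deg 1 : ℤ) = 0 := congrArg Prod.snd h
  have h2 : k.1 = 0 := by
    ext i
    fin_cases i
    · exact_mod_cast h0
    · exact_mod_cast h1
  have : 0 < mm k.1 := lt_of_le_of_lt (Nat.zero_le _) k.2.2
  rw [h2, mm_zero] at this
  exact absurd this (Nat.not_lt_zero _)

/-- Signed counts for `N`. -/
def PP : ℤ × ℤ → ℤ := cJ dI JJ

theorem PP_eqn : Eqn (fun p => mm ![p.1, p.2]) PP := by
  intro a b ha hb
  have := cJ_logder dI JJ (fun i _ => ⟨by simp [dI], by simp [dI]⟩) (fun i _ => dI_ne i) 12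
    ((a : ℤ), (b : ℤ)) (by simp; omega) (by simp; omega)
  rw [PP]
  simp only at this
  rw [this, sum_JJ (fun z => (z.1 + z.2) * ∑ k ∈ Finset.range 12,
    cJ dI JJ (((a : ℤ), (b : ℤ)) - ((k + 1 : ℕ) : ℤ) • z))]
  refine congrArg Neg.neg (Finset.sum_congr rfl fun p _ => ?_)
  rw [mul_assoc]; rfl

theorem PP_neg (z : ℤ × ℤ) (h : z.1 < 0 ∨ z.2 < 0) : PP z = 0 :=
  cJ_neg dI (fun i _ => ⟨by simp [dI], by simp [dI]⟩) z h

theorem sum_dI (s : Finset II) : ∑ k ∈ s, dI k =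
    ((((∑ k ∈ s, k.deg) 0 : ℕ) : ℤ), (((∑ k ∈ s, k.deg) 1 : ℕ) : ℤ)) := by
  apply Prod.ext
  · simp [Prod.fst_sum, Finset.sum_apply, dI]
  · simp [Prod.snd_sum, Finset.sum_apply, dI]

theorem PP_zero : PP (0, 0) = 1 := by
  rw [PP, cJ, Finset.sum_eq_single ∅]
  · simp; rfl
  · intro s _ hs
    obtain ⟨k, hk⟩ := Finset.nonempty_iff_ne_empty.2 hs
    refine if_neg fun h => dI_ne k ?_
    have h1 : ∑ k ∈ s, (dI k).1 = 0 := by rw [← Prod.fst_sum, h]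
    have h2 : ∑ k ∈ s, (dI k).2 = 0 := by rw [← Prod.snd_sum, h]
    exact Prod.ext ((Finset.sum_eq_zero_iff_of_nonneg (fun i _ => by simp [dI])).1 h1 k hk)
      ((Finset.sum_eq_zero_iff_of_nonneg (fun i _ => by simp [dI])).1 h2 k hk)
  · simp

theorem PP_euler (a b : ℕ) (ha : a < 13) (hb : b < 13)
    (hβ : (a : ℤ) ^ 2 + (b : ℤ) ^ 2 - 3 * a * b - a - b ≠ 0) : PP (a, b) = 0 := by
  rw [PP, cJ, ← Finset.sum_filter]
  apply euler ![a, b]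
  · intro s
    rw [Finset.mem_filter, Finset.mem_powerset, sum_dI]
    constructor
    · rintro ⟨_, h⟩
      have h0 : (∑ k ∈ s, k.deg) 0 = a := by exact_mod_cast (Prod.mk.injEq .. ▸ h).1
      have h1 : (∑ k ∈ s, k.deg) 1 = b := by exact_mod_cast (Prod.mk.injEq .. ▸ h).2
      ext i
      fin_cases i
      · exact h0
      · exact h1
    · intro h
      refine ⟨Finset.subset_iff.2 ?_, by rw [h]; simp⟩
      intro k hk
      rw [mem_JJ]
      have hle : k.deg ≤ ![a, b] := by
        rw [← h]; exact Finset.single_le_sum (f := II.deg) (fun i _ => zero_le) hk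
      have h0 := hle 0
      have h1 := hle 1
      simp only [Matrix.cons_val_zero, Matrix.cons_val_one] at h0 h1
      omega
  · simpa using hβ

theorem special : ∀ a : ℕ, a < 13 → ∀ b : ℕ, b < 13 →
    (a : ℤ) ^ 2 + (b : ℤ) ^ 2 - 3 * a * b - a - b = 0 →
    (a, b) ∈ [(0, 0), (1, 0), (0, 1), (4, 1), (1, 4), (12, 4), (4, 12)] := by
  intro a ha b hb h
  interval_cases a <;> interval_cases b <;> first | decide | (exfalso; revert h; norm_num)

theorem nonspecial : ∀ a : ℕ, a < 13 → ∀ b : ℕ, b < 13 →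
    (a : ℤ) ^ 2 + (b : ℤ) ^ 2 - 3 * a * b - a - b ≠ 0 → pN a b = 0 := by
  decide +kernel

theorem mm_tab (a b : ℕ) (ha : a < 13) (hb : b < 13) (hab : a + b ≠ 0) :
    (mm ![a, b] : ℤ) = tM (a, b) := by
  have := (Eqn_uniq PP_eqn Eqn_tab PP_zero (by decide) PP_neg (fun z hz => if_pos hz) ?_ (a + b)
    a b ha hb rfl).2 hab
  · exact this
  intro a b ha hb hab
  by_cases h : (a : ℤ) ^ 2 + (b : ℤ) ^ 2 - 3 * a * b - a - b = 0
  · left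
    have hs := special a ha b hb h
    simp only [List.mem_cons, Prod.mk.injEq, List.not_mem_nil, or_false] at hs
    rcases hs with ⟨rfl, rfl⟩ | ⟨rfl, rfl⟩ | ⟨rfl, rfl⟩ | ⟨rfl, rfl⟩ | ⟨rfl, rfl⟩ |
      ⟨rfl, rfl⟩ | ⟨rfl, rfl⟩
    · exact absurd rfl hab
    · have : (![1, 0] : Fin 2 → ℕ) = al 0 := by decide
      simp only [this, mm_al]; rfl
    · have : (![0, 1] : Fin 2 → ℕ) = al 1 := by decide
      simp only [this, mm_al]; rfl
    · simp only; rw [mm_elim0 ![4, 1] (by decide) (by decide) (by decide)]; rfl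
    · simp only; rw [mm_elim1 ![1, 4] (by decide) (by decide) (by decide)]; rfl
    · simp only; rw [mm_elim0 ![12, 4] (by decide) (by decide) (by decide)]; rfl
    · simp only; rw [mm_elim1 ![4, 12] (by decide) (by decide) (by decide)]; rfl
  · right
    rw [PP_euler a b ha hb h, tP_nat, nonspecial a ha b hb h]

theorem mm_diag (m : ℕ) (h1 : m ≠ 0) (h2 : m < 13) (v : ℕ) (hv : tM (m, m) = v) :
    mm ![m, m] = v := by
  have := mm_tab m m h2 h2 (by omega)
  rw [hv] at this
  exact_mod_cast this


end R2

namespace R2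

/-! ### A module for the Kac–Moody algebra on the enveloping algebra of `N` -/

/-- The enveloping algebra. -/
abbrev UU := UniversalEnvelopingAlgebra ℚ N

/-- The canonical map. -/
def iu : N →ₗ⁅ℚ⁆ UU := UniversalEnvelopingAlgebra.ι ℚ

theorem iu_lie (x y : N) : iu ⁅x, y⁆ = iu x * iu y - iu y * iu x := by
  rw [LieHom.map_lie, LieRing.of_associative_ring_bracket]

theorem U_ind (S : Submodule ℚ UU) (h1 : 1 ∈ S) (hS : ∀ i, ∀ u ∈ S, iu (e i) * u ∈ S) (u : UU) :
    u ∈ S := by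
  let T : LieSubalgebra ℚ N :=
    { carrier := {x | ∀ u ∈ S, iu x * u ∈ S}
      add_mem' := fun {a b} ha hb u hu => by
        rw [map_add, add_mul]; exact S.add_mem (ha u hu) (hb u hu)
      zero_mem' := fun u hu => by simp
      smul_mem' := fun c x hx u hu => by
        rw [map_smul, smul_mul_assoc]; exact S.smul_mem c (hx u hu)
      lie_mem' := fun {a b} ha hb u hu => by
        rw [iu_lie, sub_mul, mul_assoc, mul_assoc]
        exact S.sub_mem (ha _ (hb u hu)) (hb _ (ha u hu)) }
  have hT : ∀ x, ∀ u ∈ S, iu x * u ∈ S := fun x => N_top T hS x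
  let A : Subalgebra ℚ UU :=
    { carrier := {v | ∀ u ∈ S, v * u ∈ S}
      add_mem' := fun {a b} ha hb u hu => by
        rw [add_mul]; exact S.add_mem (ha u hu) (hb u hu)
      mul_mem' := fun {a b} ha hb u hu => by
        rw [mul_assoc]; exact ha _ (hb u hu)
      algebraMap_mem' := fun r u hu => by
        rw [← Algebra.smul_def]; exact S.smul_mem r hu }
  let f : N →ₗ⁅ℚ⁆ A :=
    { toFun := fun x => ⟨iu x, hT x⟩
      map_add' := fun x y => Subtype.ext (map_add iu x y)
      map_smul' := fun x y => Subtype.ext (map_smul iu x y)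
      map_lie' := fun {x y} => Subtype.ext (by
        rw [LieRing.of_associative_ring_bracket]; exact iu_lie x y) }
  let G : UU →ₐ[ℚ] A := UniversalEnvelopingAlgebra.lift ℚ f
  have hG : A.val.comp G = AlgHom.id ℚ UU := by
    apply UniversalEnvelopingAlgebra.hom_ext
    ext x
    change ((G (UniversalEnvelopingAlgebra.ι ℚ x) : A) : UU) = UniversalEnvelopingAlgebra.ι ℚ x
    rw [UniversalEnvelopingAlgebra.lift_ι_apply]; rfl
  have h2 : ((G u : A) : UU) = u := DFunLike.congr_fun hG u
  have h3 := (G u).2 1 h1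
  rw [mul_one] at h3
  exact h2 ▸ h3

theorem exists_ext (c : N →ₗ[ℚ] Module.End ℚ UU)
    (hc : ∀ x y u, c ⁅x, y⁆ u = iu x * c y u - c y (iu x * u) - iu y * c x u + c x (iu y * u)) :
    ∃ F : Module.End ℚ UU, F 1 = 0 ∧ ∀ x u, F (iu x * u) = iu x * F u + c x u := by
  let t : N →ₗ⁅ℚ⁆ Module.End ℚ (UU × UU) :=
    { toFun := fun x =>
        { toFun := fun p => (iu x * p.1, iu x * p.2 + c x p.1)
          map_add' := fun p q => by
            apply Prod.ext
            · simp [mul_add]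
            · simp [mul_add]; abel
          map_smul' := fun r p => by apply Prod.ext <;> simp }
      map_add' := fun x y => by
        apply LinearMap.ext; intro p
        apply Prod.ext
        · simp [add_mul]
        · simp [add_mul]; abel
      map_smul' := fun r x => by
        apply LinearMap.ext; intro p
        apply Prod.ext <;> simp
      map_lie' := fun {x y} => by
        rw [LieRing.of_associative_ring_bracket]
        apply LinearMap.ext; intro p
        apply Prod.ext
        · simp [-LieHom.map_lie, sub_mul, mul_assoc, iu_lie]
        · simp [-LieHom.map_lie, sub_mul, mul_add, mul_assoc, hc, iu_lie]; abel }
  let Θ := UniversalEnvelopingAlgebra.lift ℚ t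
  have hΘ : ∀ x, Θ (iu x) = t x := fun x => UniversalEnvelopingAlgebra.lift_ι_apply ℚ t x
  have hm : ∀ x u p, Θ (iu x * u) p = (iu x * (Θ u p).1, iu x * (Θ u p).2 + c x (Θ u p).1) := by
    intro x u p
    rw [map_mul, hΘ]; rfl
  let G : UU →ₗ[ℚ] UU × UU := LinearMap.applyₗ ((1 : UU), (0 : UU)) ∘ₗ Θ.toLinearMap
  have hG : ∀ u, G u = Θ u (1, 0) := fun u => rfl
  have h1 : ∀ u, (G u).1 = u := by
    intro u
    refine U_ind (LinearMap.eqLocus (LinearMap.fst ℚ UU UU ∘ₗ G) LinearMap.id) ?_ ?_ u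
    · change (G 1).1 = 1
      rw [hG, map_one]; rfl
    · intro i u hu
      have hu : (G u).1 = u := hu
      change (G _).1 = _
      rw [hG, hm, ← hG, hu]; rfl
  refine ⟨LinearMap.snd ℚ UU UU ∘ₗ G, ?_, ?_⟩
  · change (G 1).2 = 0
    rw [hG, map_one]; rfl
  · intro x u
    change (G _).2 = iu x * (G u).2 + _
    rw [hG, hm, ← hG, h1]

/-- Weighted degree derivation. -/
def dA (i : Fin 2) : N →ₗ[ℚ] N := ∑ j, (A2hyp i j : ℚ) • D j

theorem dA_apply (i x) : dA i x = (A2hyp i 0 : ℚ) • D 0 x + (A2hyp i 1 : ℚ) • D 1 x := by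
  simp [dA]
theorem dA_e (i j) : dA i (e j) = (A2hyp i j : ℚ) • e j := by
  rw [dA_apply, D_e, D_e]; fin_cases j <;> simp
theorem dA_lie (i x y) : dA i ⁅x, y⁆ = ⁅dA i x, y⁆ + ⁅x, dA i y⁆ := by
  simp only [dA_apply, D_lie, add_lie, lie_add, smul_lie, lie_smul]; module

theorem exists_H (i : Fin 2) : ∃ F : Module.End ℚ UU, F 1 = 0 ∧
    ∀ x u, F (iu x * u) = iu x * F u + iu (dA i x) * u := by
  refine exists_ext ((LinearMap.mul ℚ UU) ∘ₗ iu.toLinearMap ∘ₗ dA i) fun x y u => ?_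
  simp [-LieHom.map_lie, dA_lie, iu_lie, sub_mul, add_mul, mul_assoc]; abel

/-- Cartan operators. -/
def oH (i : Fin 2) : Module.End ℚ UU := (exists_H i).choose
theorem oH_one (i) : oH i 1 = 0 := (exists_H i).choose_spec.1
theorem oH_mul (i x u) : oH i (iu x * u) = iu x * oH i u + iu (dA i x) * u :=
  (exists_H i).choose_spec.2 x u

/-- Left multiplication. -/
def oL : N →ₗ⁅ℚ⁆ Module.End ℚ UU where
  toFun x := LinearMap.mulLeft ℚ (iu x)
  map_add' x y := by ext u; simp [add_mul]
  map_smul' r x := by ext u; simp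
  map_lie' := fun {x y} => by
    rw [LieRing.of_associative_ring_bracket]
    apply LinearMap.ext; intro u
    simp [-LieHom.map_lie, sub_mul, mul_assoc, iu_lie]

theorem oL_apply (x u) : oL x u = iu x * u := rfl

theorem br (a b : Module.End ℚ UU) (u) : ⁅a, b⁆ u = a (b u) - b (a u) := by
  rw [LieRing.of_associative_ring_bracket]; rfl

theorem oH_oL (i x) : ⁅oH i, oL x⁆ = oL (dA i x) := by
  apply LinearMap.ext; intro u
  rw [br, oL_apply, oL_apply, oL_apply, oH_mul]; abel

theorem oH_E (i j) : ⁅oH i, oL (e j)⁆ = (A2hyp i j : ℚ) • oL (e j) := by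
  rw [oH_oL, dA_e, map_smul]

theorem op_zero (Z : Module.End ℚ UU) (h1 : Z 1 = 0) (h : ∀ k, ⁅oL (e k), Z⁆ = 0) : Z = 0 := by
  apply LinearMap.ext; intro u
  refine U_ind (LinearMap.ker Z) h1 (fun i u hu => ?_) u
  have hu : Z u = 0 := hu
  have := DFunLike.congr_fun (h i) u
  rw [br, hu, map_zero, zero_sub, LinearMap.zero_apply, neg_eq_zero] at this
  exact this

theorem lie_one {a b : Module.End ℚ UU} (ha : a 1 = 0) (hb : b 1 = 0) : ⁅a, b⁆ 1 = 0 := by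
  rw [br, ha, hb]; simp

theorem oH_H (i j) : ⁅oH i, oH j⁆ = 0 := by
  refine op_zero _ (lie_one (oH_one i) (oH_one j)) fun k => ?_
  rw [leibniz_lie, ← lie_skew (oL (e k)) (oH i), ← lie_skew (oL (e k)) (oH j), oH_E, oH_E,
    neg_lie, smul_lie, lie_neg, lie_smul, oH_E, ← lie_skew, oH_E]
  module

/-! ### Lie computations -/

section
variable {L : Type*} [LieRing L] [LieAlgebra ℚ L]

theorem wt_step {h f v : L} {p r : ℚ} (h1 : ⁅h, f⁆ = p • f) (h2 : ⁅h, v⁆ = r • v) :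
    ⁅h, ⁅f, v⁆⁆ = (p + r) • ⁅f, v⁆ := by
  rw [leibniz_lie, h1, h2, smul_lie, lie_smul, add_smul]

theorem ser_E0 {E h a b : L} (h0 : ⁅E, a⁆ = h) (h1 : ⁅E, b⁆ = 0) {p : ℚ}
    (ha : ⁅h, a⁆ = (2 * p) • a) (hb : ⁅h, b⁆ = (-3 * p) • b) : ⁅E, ser a b⁆ = 0 := by
  have w1 := wt_step ha hb
  have w2 := wt_step ha w1
  have w3 := wt_step ha w2
  rw [ser, leibniz_lie, h0, w3, leibniz_lie E a, h0, w2, leibniz_lie E a, h0, w1, leibniz_lie E a,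
    h0, hb, h1, lie_zero, add_zero]
  simp only [lie_add, lie_smul]
  module

theorem ser_E1 {E h a b : L} (h0 : ⁅E, a⁆ = 0) (h1 : ⁅E, b⁆ = h) {p : ℚ}
    (ha : ⁅h, a⁆ = p • a) : ⁅E, ser a b⁆ = 0 := by
  rw [ser, leibniz_lie, h0, leibniz_lie E a, h0, leibniz_lie E a, h0, leibniz_lie E a, h0, h1,
    ← lie_skew a h, ha]
  simp

end

/-- The data for the adjoint action of `N` on operators. -/
def opData : TwData N (Module.End ℚ UU) where
  ρ := (LieAlgebra.ad ℚ (Module.End ℚ UU)).toLinearMap ∘ₗ oL.toLinearMap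
  c := 0
  hρ x y m := by simp
  c_self x := by simp
  coc x y z := by simp

theorem opData_ρ (x y) : opData.ρ x y = ⁅oL x, y⁆ := rfl
theorem opData_c (x y) : opData.c x y = 0 := rfl

theorem op_ser0 (x y : N) (Z : Module.End ℚ UU) (p : ℚ) (ha : ⁅Z, oL x⁆ = (2 * p) • oL x)
    (hb : ⁅Z, oL y⁆ = (-3 * p) • oL y) :
    (ser (TE.mk opData x Z) (TE.mk opData y 0)).2 = 0 := by
  have w1 := wt_step ha hb
  have w2 := wt_step ha w1
  have w3 := wt_step ha w2
  simp only [ser, TE.snd_lie, TE.fst_lie, TE.snd_mk, TE.fst_mk, opData_ρ, opData_c, add_zero,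
    lie_sub, lie_zero, zero_sub, LieHom.map_lie, ← lie_skew _ Z, hb, w1, w2, w3, lie_neg, lie_smul,
    neg_neg]
  module

theorem op_ser1 (x y : N) (Z : Module.End ℚ UU) (p : ℚ) (ha : ⁅Z, oL x⁆ = p • oL x) :
    (ser (TE.mk opData x 0) (TE.mk opData y Z)).2 = 0 := by
  simp only [ser, TE.snd_lie, TE.fst_lie, TE.snd_mk, TE.fst_mk, opData_ρ, opData_c, add_zero,
    lie_sub, lie_zero, sub_zero, LieHom.map_lie, ← lie_skew _ Z, ha, lie_neg, lie_smul,
    lie_self, smul_zero, neg_zero]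

end R2

namespace R2

theorem A00 : (A2hyp 0 0 : ℚ) = 2 := by simp [A2hyp]
theorem A01 : (A2hyp 0 1 : ℚ) = -3 := by simp [A2hyp]
theorem A10 : (A2hyp 1 0 : ℚ) = -3 := by simp [A2hyp]
theorem A11 : (A2hyp 1 1 : ℚ) = 2 := by simp [A2hyp]

theorem exists_F (i : Fin 2) : ∃ F : Module.End ℚ UU, F 1 = 0 ∧
    ∀ j, ⁅oL (e j), F⁆ = if j = i then oH i else 0 := by
  have hs : ∃ c : N →ₗ[ℚ] Module.End ℚ UU, (∀ j, c (e j) = if j = i then - oH i else 0) ∧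
      ∀ x y, c ⁅x, y⁆ = opData.ρ x (c y) - opData.ρ y (c x) + opData.c x y := by
    fin_cases i
    · refine exists_twisted opData _ ?_ ?_
      · refine op_ser0 _ _ _ (-1) ?_ ?_
        · simp [oH_E, A00]
        · simp [oH_E, A01]
      · refine op_ser1 _ _ _ 3 ?_
        simp [oH_E, A01]
    · refine exists_twisted opData _ ?_ ?_
      · refine op_ser1 _ _ _ 3 ?_
        simp [oH_E, A10]
      · refine op_ser0 _ _ _ (-1) ?_ ?_
        · simp [oH_E, A11]
        · simp [oH_E, A10]
  obtain ⟨c, hc1, hc2⟩ := hs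
  obtain ⟨F, h1, h2⟩ := exists_ext c (fun x y u => by
    rw [hc2, opData_ρ, opData_ρ, opData_c, add_zero, LinearMap.sub_apply, br, br]
    simp only [oL_apply]; abel)
  refine ⟨F, h1, fun j => ?_⟩
  apply LinearMap.ext; intro u
  rw [br, oL_apply, oL_apply, h2, hc1]
  split_ifs <;> simp

/-- Lowering operators. -/
def oF (i : Fin 2) : Module.End ℚ UU := (exists_F i).choose
theorem oF_one (i) : oF i 1 = 0 := (exists_F i).choose_spec.1
theorem oE_F (j i) : ⁅oL (e j), oF i⁆ = if j = i then oH i else 0 := (exists_F i).choose_spec.2 j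

theorem oH_F (i j) : ⁅oH i, oF j⁆ = -(A2hyp i j : ℚ) • oF j := by
  rw [← sub_eq_zero]
  refine op_zero _ ?_ fun k => ?_
  · rw [LinearMap.sub_apply, lie_one (oH_one i) (oF_one j), LinearMap.smul_apply, oF_one]; simp
  · rw [lie_sub, leibniz_lie, ← lie_skew (oL (e k)) (oH i), oH_E, lie_smul, oE_F, neg_lie, smul_lie,
      oE_F]
    split_ifs with h
    · subst h; rw [oH_H]; module
    · simp

theorem ser_one {a b : Module.End ℚ UU} (ha : a 1 = 0) (hb : b 1 = 0) : ser a b 1 = 0 :=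
  lie_one ha (lie_one ha (lie_one ha (lie_one ha hb)))

theorem oF_ser01 : ser (oF 0) (oF 1) = 0 := by
  refine op_zero _ (ser_one (oF_one 0) (oF_one 1)) fun k => ?_
  fin_cases k
  · refine ser_E0 (h := oH 0) (by simp [oE_F]) (by simp [oE_F]) (p := -1) ?_ ?_
    · rw [oH_F, A00]; norm_num
    · rw [oH_F, A01]; norm_num
  · refine ser_E1 (h := oH 1) (by simp [oE_F]) (by simp [oE_F]) (p := 3) ?_
    rw [oH_F, A10]; norm_num

theorem oF_ser10 : ser (oF 1) (oF 0) = 0 := by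
  refine op_zero _ (ser_one (oF_one 1) (oF_one 0)) fun k => ?_
  fin_cases k
  · refine ser_E1 (h := oH 0) (by simp [oE_F]) (by simp [oE_F]) (p := 3) ?_
    rw [oH_F, A01]; norm_num
  · refine ser_E0 (h := oH 1) (by simp [oE_F]) (by simp [oE_F]) (p := -1) ?_ ?_
    · rw [oH_F, A11]; norm_num
    · rw [oH_F, A10]; norm_num

/-! ### The Kac–Moody algebra -/

/-- The algebra. -/
abbrev gg := Matrix.ToLieAlgebra ℚ A2hyp

/-- The quotient map. -/
def mkg : FreeLieAlgebra ℚ (Generators (Fin 2)) →ₗ⁅ℚ⁆ gg where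
  toFun x := LieSubmodule.Quotient.mk (N := Relations.toIdeal ℚ A2hyp) x
  map_add' _ _ := rfl
  map_smul' _ _ := rfl
  map_lie' := fun {x y} => LieSubmodule.Quotient.mk_bracket (I := Relations.toIdeal ℚ A2hyp) x y

theorem mkg_surj : Function.Surjective mkg := Quot.mk_surjective

theorem mkg_zero {x} (hx : x ∈ Relations.toSet ℚ A2hyp) : mkg x = 0 :=
  (LieSubmodule.Quotient.mk_eq_zero' (N := Relations.toIdeal ℚ A2hyp)).2
    (LieSubmodule.subset_lieSpan hx)

theorem mkg_H (i) : mkg (FreeLieAlgebra.of ℚ (Generators.H i)) = gH A2hyp i := rfl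
theorem mkg_E (i) : mkg (FreeLieAlgebra.of ℚ (Generators.E i)) = gE A2hyp i := rfl
theorem mkg_F (i) : mkg (FreeLieAlgebra.of ℚ (Generators.F i)) = gF A2hyp i := rfl

theorem g_HH (i j) : ⁅gH A2hyp i, gH A2hyp j⁆ = 0 := by
  have := mkg_zero (x := Relations.HH ℚ (i, j)) (by simp [Relations.toSet])
  simpa [Relations.HH, mkg_H] using this

theorem g_EF (i j) : ⁅gE A2hyp i, gF A2hyp j⁆ = if i = j then gH A2hyp i else 0 := by
  have := mkg_zero (x := Relations.EF ℚ (i, j)) (by simp [Relations.toSet])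
  by_cases h : i = j
  · subst h
    simpa [Relations.EF, mkg_H, mkg_E, mkg_F, sub_eq_zero] using this
  · simpa [Relations.EF, mkg_H, mkg_E, mkg_F, h] using this

theorem g_HE (i j) : ⁅gH A2hyp i, gE A2hyp j⁆ = (A2hyp i j : ℚ) • gE A2hyp j := by
  have := mkg_zero (x := Relations.HE ℚ A2hyp (i, j)) (by simp [Relations.toSet])
  rw [Int.cast_smul_eq_zsmul]
  simpa [Relations.HE, mkg_H, mkg_E, sub_eq_zero] using this

theorem g_HF (i j) : ⁅gH A2hyp i, gF A2hyp j⁆ = -(A2hyp i j : ℚ) • gF A2hyp j := by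
  have := mkg_zero (x := Relations.HF ℚ A2hyp (i, j)) (by simp [Relations.toSet])
  rw [neg_smul, Int.cast_smul_eq_zsmul]
  simpa [Relations.HF, mkg_H, mkg_F, add_eq_zero_iff_eq_neg] using this

theorem ser_pow {L : Type*} [LieRing L] [LieAlgebra ℚ L] (a b : L) :
    ((LieAlgebra.ad ℚ L a) ^ 3) ⁅a, b⁆ = ser a b := by
  simp [pow_succ, ser]

theorem adE01 : Relations.adE ℚ A2hyp (0, 1) =
    ser (FreeLieAlgebra.of ℚ (Generators.E 0)) (FreeLieAlgebra.of ℚ (Generators.E 1)) := ser_pow _ _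
theorem adE10 : Relations.adE ℚ A2hyp (1, 0) =
    ser (FreeLieAlgebra.of ℚ (Generators.E 1)) (FreeLieAlgebra.of ℚ (Generators.E 0)) := ser_pow _ _
theorem adF01 : Relations.adF ℚ A2hyp (0, 1) =
    ser (FreeLieAlgebra.of ℚ (Generators.F 0)) (FreeLieAlgebra.of ℚ (Generators.F 1)) := ser_pow _ _
theorem adF10 : Relations.adF ℚ A2hyp (1, 0) =
    ser (FreeLieAlgebra.of ℚ (Generators.F 1)) (FreeLieAlgebra.of ℚ (Generators.F 0)) := ser_pow _ _
theorem adEii (i) : Relations.adE ℚ A2hyp (i, i) = 0 := by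
  simp [Relations.adE]
theorem adFii (i) : Relations.adF ℚ A2hyp (i, i) = 0 := by
  simp [Relations.adF]

theorem g_E01 : ser (gE A2hyp 0) (gE A2hyp 1) = 0 := by
  have := mkg_zero (x := Relations.adE ℚ A2hyp (0, 1)) (by simp [Relations.toSet])
  rwa [adE01, map_ser] at this
theorem g_E10 : ser (gE A2hyp 1) (gE A2hyp 0) = 0 := by
  have := mkg_zero (x := Relations.adE ℚ A2hyp (1, 0)) (by simp [Relations.toSet])
  rwa [adE10, map_ser] at this
theorem g_F01 : ser (gF A2hyp 0) (gF A2hyp 1) = 0 := by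
  have := mkg_zero (x := Relations.adF ℚ A2hyp (0, 1)) (by simp [Relations.toSet])
  rwa [adF01, map_ser] at this
theorem g_F10 : ser (gF A2hyp 1) (gF A2hyp 0) = 0 := by
  have := mkg_zero (x := Relations.adF ℚ A2hyp (1, 0)) (by simp [Relations.toSet])
  rwa [adF10, map_ser] at this

/-- The images of the generators in operators on the enveloping algebra. -/
def oG : Generators (Fin 2) → Module.End ℚ UU
  | .H i => oH i
  | .E i => oL (e i)
  | .F i => oF i

theorem oE_ser01 : ser (oL (e 0)) (oL (e 1)) = 0 := by rw [← map_ser, ser01, map_zero]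
theorem oE_ser10 : ser (oL (e 1)) (oL (e 0)) = 0 := by rw [← map_ser, ser10, map_zero]

theorem exists_rep : ∃ R : gg →ₗ⁅ℚ⁆ Module.End ℚ UU, ∀ i, R (gE A2hyp i) = oL (e i) := by
  let F := FreeLieAlgebra.lift ℚ oG
  have hF : ∀ x, F (FreeLieAlgebra.of ℚ x) = oG x := fun i => FreeLieAlgebra.lift_of_apply _ _
  have hH : ∀ i, F (FreeLieAlgebra.of ℚ (.H i)) = oH i := fun i => hF _
  have hE : ∀ i, F (FreeLieAlgebra.of ℚ (.E i)) = oL (e i) := fun i => hF _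
  have hFF : ∀ i, F (FreeLieAlgebra.of ℚ (.F i)) = oF i := fun i => hF _
  have hle : Relations.toIdeal ℚ A2hyp ≤ F.ker := by
    refine LieSubmodule.lieSpan_le.2 ?_
    intro x hx
    change F x = 0
    rcases hx with ((((⟨⟨i, j⟩, rfl⟩ | ⟨⟨i, j⟩, rfl⟩) | ⟨⟨i, j⟩, rfl⟩) | ⟨⟨i, j⟩, rfl⟩) |
      ⟨⟨i, j⟩, rfl⟩) | ⟨⟨i, j⟩, rfl⟩
    · simp [Relations.HH, hH, oH_H]
    · by_cases h : i = j
      · subst h; simp [Relations.EF, hH, hE, hFF, oE_F]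
      · simp [Relations.EF, hE, hFF, oE_F, h]
    · simp [Relations.HE, hH, hE, oH_E, Int.cast_smul_eq_zsmul]
    · simp [Relations.HF, hH, hFF, oH_F, Int.cast_smul_eq_zsmul]
    · have h01 : F (Relations.adE ℚ A2hyp (0, 1)) = 0 := by
        rw [adE01, map_ser, hE, hE, oE_ser01]
      have h10 : F (Relations.adE ℚ A2hyp (1, 0)) = 0 := by
        rw [adE10, map_ser, hE, hE, oE_ser10]
      fin_cases i <;> fin_cases j
      · exact (congrArg F (adEii 0)).trans (map_zero F)
      · exact h01
      · exact h10
      · exact (congrArg F (adEii 1)).trans (map_zero F)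
    · have h01 : F (Relations.adF ℚ A2hyp (0, 1)) = 0 := by
        rw [adF01, map_ser, hFF, hFF, oF_ser01]
      have h10 : F (Relations.adF ℚ A2hyp (1, 0)) = 0 := by
        rw [adF10, map_ser, hFF, hFF, oF_ser10]
      fin_cases i <;> fin_cases j
      · exact (congrArg F (adFii 0)).trans (map_zero F)
      · exact h01
      · exact h10
      · exact (congrArg F (adFii 1)).trans (map_zero F)
  let G : gg →ₗ[ℚ] Module.End ℚ UU :=
    Submodule.liftQ (Relations.toIdeal ℚ A2hyp).toSubmodule F.toLinearMap (fun x hx => by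
      have := hle hx
      simpa using this)
  have hG : ∀ x, G (mkg x) = F x := fun x => rfl
  refine ⟨{ G with map_lie' := fun {x y} => ?_ }, fun i => ?_⟩
  · obtain ⟨x, rfl⟩ := mkg_surj x
    obtain ⟨y, rfl⟩ := mkg_surj y
    change G ⁅mkg x, mkg y⁆ = ⁅G (mkg x), G (mkg y)⁆
    rw [← LieHom.map_lie, hG, hG, hG, LieHom.map_lie]
  · exact hE i

/-! ### Faithfulness -/

theorem D_inj (z : N) (hz : D 0 z + D 1 z = 0) : z = 0 := by
  have key : ∀ k : II, ∀ x : N, bN.repr (D 0 x + D 1 x) k =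
      ((k.deg 0 : ℚ) + k.deg 1) * bN.repr x k := by
    intro k x
    have : (bN.coord k) ∘ₗ (D 0 + D 1) = ((k.deg 0 : ℚ) + k.deg 1) • bN.coord k := by
      refine bN.ext fun l => ?_
      have h := mem_NG.1 (bN_mem l)
      simp only [LinearMap.comp_apply, LinearMap.add_apply, h, ← add_smul, map_smul,
        LinearMap.smul_apply, Module.Basis.coord_apply, Module.Basis.repr_self, smul_eq_mul]
      by_cases hkl : l = k
      · subst hkl; rfl
      · simp [Finsupp.single_eq_of_ne (Ne.symm hkl)]
    exact DFunLike.congr_fun this x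
  refine bN.repr.map_eq_zero_iff.1 (Finsupp.ext fun k => ?_)
  have h := key k z
  rw [hz, map_zero] at h
  have hk : ((k.deg 0 : ℚ) + k.deg 1) ≠ 0 := by
    intro h0
    have h1 : k.deg 0 + k.deg 1 = 0 := by exact_mod_cast h0
    refine dI_ne k (Prod.ext ?_ ?_)
    · change ((k.deg 0 : ℕ) : ℤ) = 0
      omega
    · change ((k.deg 1 : ℕ) : ℤ) = 0
      omega
  exact (mul_eq_zero.1 h.symm).resolve_left hk

/-- A faithful representation of `N`. -/
def tau : N →ₗ⁅ℚ⁆ Module.End ℚ (N × ℚ) where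
  toFun x :=
    { toFun := fun p => (⁅x, p.1⁆ + p.2 • (D 0 x + D 1 x), 0)
      map_add' := fun p q => by
        apply Prod.ext
        · simp [add_smul]; abel
        · simp
      map_smul' := fun r p => by
        apply Prod.ext
        · simp [mul_smul]
        · simp }
  map_add' x y := by
    apply LinearMap.ext; intro p
    apply Prod.ext
    · simp; abel
    · simp
  map_smul' r x := by
    apply LinearMap.ext; intro p
    apply Prod.ext
    · simp; module
    · simp
  map_lie' := fun {x y} => by
    rw [LieRing.of_associative_ring_bracket]
    apply LinearMap.ext; intro p
    apply Prod.ext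
    · simp only [LinearMap.coe_mk, AddHom.coe_mk, LinearMap.sub_apply, Module.End.mul_apply,
        Prod.fst_sub, zero_smul, add_zero, lie_add, lie_smul, lie_lie, D_lie]
      rw [← lie_skew (D 0 x) y, ← lie_skew (D 1 x) y]
      module
    · simp

theorem iu_inj (z : N) (hz : iu z = 0) : z = 0 := by
  have h1 : UniversalEnvelopingAlgebra.lift ℚ tau (iu z) = tau z :=
    UniversalEnvelopingAlgebra.lift_ι_apply ℚ tau z
  rw [hz, map_zero] at h1
  have h2 := congrArg Prod.fst (DFunLike.congr_fun h1 ((0 : N), (1 : ℚ)))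
  apply D_inj
  simpa [tau] using h2.symm

/-- The positive part in the Kac–Moody algebra. -/
theorem exists_phi : ∃ f : N →ₗ⁅ℚ⁆ gg, ∀ i, f (e i) = gE A2hyp i :=
  exists_lift _ g_E01 g_E10
theorem exists_psi : ∃ f : N →ₗ⁅ℚ⁆ gg, ∀ i, f (e i) = gF A2hyp i :=
  exists_lift _ g_F01 g_F10

/-- The map from `N`. -/
def phi : N →ₗ⁅ℚ⁆ gg := exists_phi.choose
theorem phi_e (i) : phi (e i) = gE A2hyp i := exists_phi.choose_spec i
/-- The map from `N` to the negative part. -/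
def psi : N →ₗ⁅ℚ⁆ gg := exists_psi.choose
theorem psi_e (i) : psi (e i) = gF A2hyp i := exists_psi.choose_spec i

theorem phi_inj : Function.Injective phi := by
  refine (injective_iff_map_eq_zero phi).2 fun z hz => ?_
  obtain ⟨R, hR⟩ := exists_rep
  have h : ∀ x, R (phi x) = oL x := by
    let S : LieSubalgebra ℚ N :=
      { LinearMap.eqLocus ((R.comp phi : N →ₗ⁅ℚ⁆ Module.End ℚ UU) : N →ₗ[ℚ] Module.End ℚ UU)
          (oL : N →ₗ[ℚ] Module.End ℚ UU) with
        lie_mem' := fun {a b} ha hb => by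
          have ha : R (phi a) = oL a := ha
          have hb : R (phi b) = oL b := hb
          change R (phi ⁅a, b⁆) = oL ⁅a, b⁆
          rw [LieHom.map_lie, LieHom.map_lie, LieHom.map_lie, ha, hb] }
    exact N_top S fun i => by
      change R (phi (e i)) = oL (e i)
      rw [phi_e, hR]
  have h2 := h z
  rw [hz, map_zero] at h2
  have h3 := DFunLike.congr_fun h2 (1 : UU)
  rw [oL_apply, mul_one] at h3
  exact iu_inj z h3.symm

end R2

namespace R2

/-- Span of the Cartan generators. -/
def SH : Submodule ℚ gg := Submodule.span ℚ (Set.range (gH A2hyp))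

theorem gH_K (K : N →ₗ⁅ℚ⁆ gg) (c : ℚ)
    (hK : ∀ i j, ⁅gH A2hyp i, K (e j)⁆ = (c * (A2hyp i j : ℚ)) • K (e j)) (i : Fin 2) (x : N) :
    ⁅gH A2hyp i, K x⁆ = c • K (dA i x) := by
  let S : LieSubalgebra ℚ N :=
    { LinearMap.eqLocus (LieAlgebra.ad ℚ gg (gH A2hyp i) ∘ₗ (K : N →ₗ[ℚ] gg))
        (c • ((K : N →ₗ[ℚ] gg) ∘ₗ dA i)) with
      lie_mem' := fun {a b} ha hb => by
        have ha : ⁅gH A2hyp i, K a⁆ = c • K (dA i a) := ha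
        have hb : ⁅gH A2hyp i, K b⁆ = c • K (dA i b) := hb
        change ⁅gH A2hyp i, K ⁅a, b⁆⁆ = c • K (dA i ⁅a, b⁆)
        rw [LieHom.map_lie, leibniz_lie, ha, hb, dA_lie, map_add, LieHom.map_lie, LieHom.map_lie,
          smul_lie, lie_smul, smul_add] }
  refine N_top S (fun j => ?_) x
  change ⁅gH A2hyp i, K (e j)⁆ = c • K (dA i (e j))
  rw [hK, dA_e, map_smul, smul_smul]

theorem gH_phi (i x) : ⁅gH A2hyp i, phi x⁆ = phi (dA i x) := by
  have := gH_K phi 1 (fun i j => by rw [phi_e, g_HE, one_mul]) i x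
  rwa [one_smul] at this

theorem gH_psi (i x) : ⁅gH A2hyp i, psi x⁆ = -psi (dA i x) := by
  have := gH_K psi (-1) (fun i j => by rw [psi_e, g_HF, neg_one_mul]) i x
  rwa [neg_one_smul] at this

theorem SH_lie {p : gg} (hp : p ∈ SH) (Q : Submodule ℚ gg) (y : gg)
    (h : ∀ i, ⁅gH A2hyp i, y⁆ ∈ Q) : ⁅p, y⁆ ∈ Q := by
  induction hp using Submodule.span_induction with
  | mem u hu => obtain ⟨i, rfl⟩ := hu; exact h i
  | zero => simp
  | add a b _ _ ha hb => rw [add_lie]; exact add_mem ha hb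
  | smul a b _ hb => rw [smul_lie]; exact Submodule.smul_mem _ _ hb

theorem X_K (K : N →ₗ⁅ℚ⁆ gg) (X : gg)
    (hH : ∀ i x, ⁅gH A2hyp i, K x⁆ ∈ LinearMap.range (K : N →ₗ[ℚ] gg))
    (hX : ∀ j, ⁅X, K (e j)⁆ ∈ SH) (x : N) :
    ⁅X, K x⁆ ∈ SH ⊔ LinearMap.range (K : N →ₗ[ℚ] gg) := by
  refine N_top' ((SH ⊔ LinearMap.range (K : N →ₗ[ℚ] gg)).comap
    (LieAlgebra.ad ℚ gg X ∘ₗ (K : N →ₗ[ℚ] gg))) (fun j => ?_) (fun j y hy => ?_) x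
  · exact Submodule.mem_sup_left (hX j)
  · have hy : ⁅X, K y⁆ ∈ SH ⊔ LinearMap.range (K : N →ₗ[ℚ] gg) := hy
    change ⁅X, K ⁅e j, y⁆⁆ ∈ SH ⊔ LinearMap.range (K : N →ₗ[ℚ] gg)
    rw [LieHom.map_lie, leibniz_lie]
    refine Submodule.mem_sup_right (add_mem ?_ ?_)
    · exact SH_lie (hX j) _ _ fun i => hH i y
    · obtain ⟨p, hp, q, ⟨z, rfl⟩, hpq⟩ := Submodule.mem_sup.1 hy
      rw [← hpq, lie_add]
      refine add_mem ?_ ⟨⁅e j, z⁆, LieHom.map_lie K _ _⟩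
      rw [← lie_skew]
      exact neg_mem (SH_lie hp _ _ fun i => hH i _)

theorem phi_H (i x) : ⁅gH A2hyp i, phi x⁆ ∈ LinearMap.range (phi : N →ₗ[ℚ] gg) :=
  ⟨_, (gH_phi i x).symm⟩
theorem psi_H (i x) : ⁅gH A2hyp i, psi x⁆ ∈ LinearMap.range (psi : N →ₗ[ℚ] gg) :=
  ⟨-dA i x, by rw [gH_psi, map_neg]; rfl⟩

theorem gH_SH (i) : gH A2hyp i ∈ SH := Submodule.subset_span ⟨i, rfl⟩

theorem F_phi (i x) : ⁅gF A2hyp i, phi x⁆ ∈ SH ⊔ LinearMap.range (phi : N →ₗ[ℚ] gg) := by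
  refine X_K phi _ phi_H (fun j => ?_) x
  rw [phi_e, ← lie_skew, g_EF]
  split_ifs
  · exact neg_mem (gH_SH _)
  · simp

theorem E_psi (i x) : ⁅gE A2hyp i, psi x⁆ ∈ SH ⊔ LinearMap.range (psi : N →ₗ[ℚ] gg) := by
  refine X_K psi _ psi_H (fun j => ?_) x
  rw [psi_e, g_EF]
  split_ifs
  · exact gH_SH _
  · simp

theorem g_top : SH ⊔ (LinearMap.range (phi : N →ₗ[ℚ] gg) ⊔ LinearMap.range (psi : N →ₗ[ℚ] gg)) = ⊤ := by
  rw [eq_top_iff]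
  intro y _
  set R1 := LinearMap.range (phi : N →ₗ[ℚ] gg) with hR1
  set R2 := LinearMap.range (psi : N →ₗ[ℚ] gg) with hR2
  have i0 : SH ≤ SH ⊔ (R1 ⊔ R2) := le_sup_left
  have i1 : R1 ≤ SH ⊔ (R1 ⊔ R2) := le_trans le_sup_left le_sup_right
  have i2 : R2 ≤ SH ⊔ (R1 ⊔ R2) := le_trans le_sup_right le_sup_right
  have mE : ∀ i, gE A2hyp i ∈ R1 := fun i => ⟨e i, phi_e i⟩
  have mF : ∀ i, gF A2hyp i ∈ R2 := fun i => ⟨e i, psi_e i⟩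
  refine gen_top' mkg mkg_surj _ ?_ ?_ y
  · rintro (i | i | i)
    · exact i0 (gH_SH i)
    · exact i1 (mE i)
    · exact i2 (mF i)
  · intro g y hy
    obtain ⟨p, hp, q, hq, rfl⟩ := Submodule.mem_sup.1 hy
    obtain ⟨a, ⟨a, rfl⟩, b, ⟨b, rfl⟩, rfl⟩ := Submodule.mem_sup.1 hq
    rw [lie_add, lie_add]
    rcases g with i | i | i
    · refine add_mem ?_ (add_mem (i1 (phi_H i a)) (i2 (psi_H i b)))
      rw [← lie_skew]
      refine neg_mem (SH_lie hp _ _ fun j => ?_)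
      rw [mkg_H, g_HH]; exact zero_mem _
    · refine add_mem ?_ (add_mem (i1 ⟨⁅e i, a⁆, ?_⟩) (sup_le i0 i2 (E_psi i b)))
      · rw [← lie_skew]
        refine neg_mem (SH_lie hp _ _ fun j => ?_)
        rw [mkg_E, g_HE]; exact Submodule.smul_mem _ _ (i1 (mE i))
      · change phi _ = ⁅gE A2hyp i, phi a⁆
        rw [LieHom.map_lie, phi_e]
    · refine add_mem ?_ (add_mem (sup_le i0 i1 (F_phi i a)) (i2 ⟨⁅e i, b⁆, ?_⟩))
      · rw [← lie_skew]
        refine neg_mem (SH_lie hp _ _ fun j => ?_)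
        rw [mkg_F, g_HF]; exact Submodule.smul_mem _ _ (i2 (mF i))
      · change psi _ = ⁅gF A2hyp i, psi b⁆
        rw [LieHom.map_lie, psi_e]

/-- The adjoint Cartan operators. -/
def aH (i : Fin 2) : Module.End ℚ gg := LieAlgebra.ad ℚ gg (gH A2hyp i)

/-- Weights. -/
def wt (n : Fin 2 → ℤ) (i : Fin 2) : ℚ := ((∑ j, A2hyp i j * n j : ℤ) : ℚ)

theorem rootSpace_eq (n) : rootSpace A2hyp n = JE aH (wt n) := rfl

theorem wt_inj : Function.Injective wt := by
  intro a b h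
  have h0 := congrFun h 0
  have h1 := congrFun h 1
  simp only [wt, Fin.sum_univ_two, Int.cast_inj] at h0 h1
  simp [A2hyp] at h0 h1
  funext i
  fin_cases i
  · change a 0 = b 0
    omega
  · change a 1 = b 1
    omega

theorem root_indep : iSupIndep (fun n => rootSpace A2hyp n) := by
  refine (JE_indep aH (fun i j => ?_)).comp wt_inj
  apply LinearMap.ext; intro x
  change ⁅gH A2hyp i, ⁅gH A2hyp j, x⁆⁆ = ⁅gH A2hyp j, ⁅gH A2hyp i, x⁆⁆
  rw [leibniz_lie, g_HH, zero_lie, zero_add]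

theorem mem_root {n : Fin 2 → ℤ} {x : gg} : x ∈ rootSpace A2hyp n ↔
    ∀ i, ⁅gH A2hyp i, x⁆ = wt n i • x := mem_JE

theorem dA_NG {β : Fin 2 → ℕ} {x : N} (hx : x ∈ NG β) (i) :
    dA i x = wt (fun j => (β j : ℤ)) i • x := by
  rw [dA_apply, mem_NG.1 hx, mem_NG.1 hx, wt, Fin.sum_univ_two]; push_cast; module

/-- Explicit pieces. -/
def UU' (n : Fin 2 → ℤ) : Submodule ℚ gg :=
  if n = 0 then SH else
    if ∀ i, 0 ≤ n i then (NG fun i => (n i).toNat).map (phi : N →ₗ[ℚ] gg) else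
      if ∀ i, n i ≤ 0 then (NG fun i => (-n i).toNat).map (psi : N →ₗ[ℚ] gg) else ⊥

theorem UU'_le (n) : UU' n ≤ rootSpace A2hyp n := by
  rw [UU']
  split_ifs with h1 h2 h3
  · subst h1
    refine Submodule.span_le.2 ?_
    rintro _ ⟨j, rfl⟩
    refine mem_root.2 fun i => ?_
    rw [g_HH]; simp [wt]
  · rintro _ ⟨x, hx, rfl⟩
    refine mem_root.2 fun i => ?_
    change ⁅gH A2hyp i, phi x⁆ = _ • phi x
    rw [gH_phi, dA_NG hx, map_smul]
    congr 2
    funext j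
    exact Int.toNat_of_nonneg (h2 j)
  · rintro _ ⟨x, hx, rfl⟩
    refine mem_root.2 fun i => ?_
    change ⁅gH A2hyp i, psi x⁆ = _ • psi x
    rw [gH_psi, dA_NG hx, map_smul, ← neg_smul]
    congr 1
    have : ∀ j, ((-n j).toNat : ℤ) = - n j := fun j =>
      Int.toNat_of_nonneg (neg_nonneg.2 (h3 j))
    simp only [wt, this]
    rw [← Int.cast_neg, ← Finset.sum_neg_distrib]
    simp
  · exact bot_le

theorem UU'_top : ⨆ n, UU' n = ⊤ := by
  rw [eq_top_iff, ← g_top]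
  refine sup_le ?_ (sup_le ?_ ?_)
  · refine le_iSup_of_le 0 ?_
    rw [UU', if_pos rfl]
  · rw [LinearMap.range_eq_map, ← NG_top, Submodule.map_iSup]
    refine iSup_le fun β => ?_
    by_cases hβ : β = 0
    · rw [hβ, NG_zero, Submodule.map_bot]; exact bot_le
    refine le_iSup_of_le (fun i => (β i : ℤ)) ?_
    rw [UU', if_neg (fun h => hβ (funext fun i => by
      have : (β i : ℤ) = 0 := congrFun h i
      exact_mod_cast this)), if_pos (fun i => by simp)]
    simp
  · rw [LinearMap.range_eq_map, ← NG_top, Submodule.map_iSup]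
    refine iSup_le fun β => ?_
    by_cases hβ : β = 0
    · rw [hβ, NG_zero, Submodule.map_bot]; exact bot_le
    refine le_iSup_of_le (fun i => -(β i : ℤ)) ?_
    rw [UU', if_neg (fun h => hβ (funext fun i => by
      have : -(β i : ℤ) = 0 := congrFun h i
      have : (β i : ℤ) = 0 := by omega
      exact_mod_cast this)), if_neg (fun h => hβ (funext fun i => by
      have : 0 ≤ -(β i : ℤ) := h i
      have : (β i : ℤ) = 0 := by omega
      exact_mod_cast this)), if_pos (fun i => by simp)]
    simp

theorem root_mm (β : Fin 2 → ℕ) (hβ : β ≠ 0) :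
    rootMult A2hyp (fun i => (β i : ℤ)) = mm β := by
  have h := indep_eq root_indep UU'_le UU'_top (fun i => (β i : ℤ))
  rw [rootMult, ← h, UU', if_neg (fun h => hβ (funext fun i => by
      have : (β i : ℤ) = 0 := congrFun h i
      exact_mod_cast this)), if_pos (fun i => by simp), mm]
  simp only [Int.toNat_natCast]
  exact (Submodule.equivMapOfInjective (phi : N →ₗ[ℚ] gg) phi_inj (NG β)).finrank_eq.symm

theorem final (m : ℕ) (h1 : m ≠ 0) (h2 : m < 13) (v : ℕ) (hv : tM (m, m) = v) (n : Fin 2 → ℤ)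
    (hn : n = ![(m : ℤ), (m : ℤ)]) : rootMult A2hyp n = v := by
  rw [← mm_diag m h1 h2 v hv, ← root_mm _ (fun h => h1 (congrFun h 0)), hn]
  congr 1
  funext i
  fin_cases i <;> rfl

end R2

end Aux

/-- **Diagonal root multiplicities in the simplest rank-2 hyperbolic Kac–Moody algebra.** -/
theorem rank2_diagonal_mults :
    rootMult A2hyp ![1, 1] = 1 ∧
    rootMult A2hyp ![2, 2] = 1 ∧
    rootMult A2hyp ![3, 3] = 3 ∧
    rootMult A2hyp ![4, 4] = 6 ∧
    rootMult A2hyp ![5, 5] = 16 ∧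
    rootMult A2hyp ![6, 6] = 39 ∧
    rootMult A2hyp ![7, 7] = 107 ∧
    rootMult A2hyp ![8, 8] = 288 ∧
    rootMult A2hyp ![9, 9] = 808 ∧
    rootMult A2hyp ![10, 10] = 2278 ∧
    rootMult A2hyp ![11, 11] = 6559 ∧
    rootMult A2hyp ![12, 12] = 19022 := by
  refine ⟨?_, ?_, ?_, ?_, ?_, ?_, ?_, ?_, ?_, ?_, ?_, ?_⟩
  · exact R2.final 1 (by norm_num) (by norm_num) _ rfl _ rfl
  · exact R2.final 2 (by norm_num) (by norm_num) _ rfl _ rfl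
  · exact R2.final 3 (by norm_num) (by norm_num) _ rfl _ rfl
  · exact R2.final 4 (by norm_num) (by norm_num) _ rfl _ rfl
  · exact R2.final 5 (by norm_num) (by norm_num) _ rfl _ rfl
  · exact R2.final 6 (by norm_num) (by norm_num) _ rfl _ rfl
  · exact R2.final 7 (by norm_num) (by norm_num) _ rfl _ rfl
  · exact R2.final 8 (by norm_num) (by norm_num) _ rfl _ rfl
  · exact R2.final 9 (by norm_num) (by norm_num) _ rfl _ rfl
  · exact R2.final 10 (by norm_num) (by norm_num) _ rfl _ rfl
  · exact R2.final 11 (by norm_num) (by norm_num) _ rfl _ rfl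
  · exact R2.final 12 (by norm_num) (by norm_num) _ rfl _ rfl
end
end
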